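/- (Chudnovsky) For an elliptic curve E defined over the field of algebraic numbers and admitting complex multiplication, the field generated over ℚ by the entries of a period matrix of E has transcendence degree exactly 2 over ℚ. -/

import Mathlib

/-!
The field is algebraic over `ℚ(ω₁, η₁)`, and it is not algebraic over any `ℚ(θ)`.

*Upper bound.* Let `a τ² + b τ + c = 0`, `α = a τ` and `β = - b - α`. Then `α` and `β` map the
lattice into itself, and `κ = (a η₂ - β η₁) / ω₁` satisfies `η(α l) = β η(l) + κ l` for all lattice
points `l`. Hence `ζ(α z + u) - β ζ(z + u) - κ z` is elliptic, where `u = (ω₁ + ω₂)/2`. Counting poles (`Chud.dim_lemma`) gives a relation between this function, `℘` and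
`℘'` over `ℂ`. All Taylor coefficients at `0` of the functions `℘(z + u)`, `ζ(z + u) - ζ(u)`,
`ζ(α z + u) - ζ(u)` and `z` are algebraic, so that applying to the relation a linear form over `ℚ̄`
preserves it; comparing the behaviour of both sides under periods forces `κ` to be algebraic
(`Chud.cm_kappa`). So `ω₂` and `η₂` are algebraic over `ℚ(ω₁, η₁)`, and so is `2πi`, by the Legendre
relation (`Chud.legendre`).

*Lower bound.* This part (`Chud.lower_bound`) does not use complex multiplication. Suppose that
`ω₁, ω₂, η₁, η₂` are algebraic over `ℚ(θ)`, `θ` transcendental. After scaling the lattice, `℘(u)` and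
`g₂/2` are algebraic integers. Siegel's lemma over `ℤ[θ]` gives a nonzero polynomial, with
coefficients in `ℤ[θ]`, in `z`, `f = ℘(z + u)` and `g = ζ(z + u) - ζ(u)`, of degrees less than `M`, `L`
and `M`, that vanishes to order `ℓ L` at all lattice points of size at most `S`; the translation by `u`
makes `f` and `g` regular there. By the zero estimate (`Chud.Ell.zero_estimate`) there is a least `S₁`,
with `S < S₁ ≤ M`, such that some derivative of order less than `ℓ L` at a lattice point of size at
most `S₁` is nonzero. By the maximum principle, applied after removal of the poles, this derivative
carries a factor `exp (- L S₁²)` (`Chud.Ell.extrapolate`). The number so obtained is represented, up to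
a power of a denominator in `ℤ[θ]`, by a matrix of integer polynomials at `θ`, whose determinant is a
small nonzero integer polynomial in `θ`. With `L = 2 ^ s` and `S`, `M` of order `s ^ 2` it has degree
`O(s ^ 2)`, logarithmic Mahler measure `O(s 2 ^ s)`, and logarithmic absolute value at most a negative
multiple of `s ^ 4 2 ^ s`, against Gelfond's criterion (`Chud.gelfond_criterion`).
-/

open scoped BigOperators

/-- The lattice point `m ω₁ + n ω₂` attached to `(m, n) ∈ ℤ²`. -/
noncomputable def latticePt (ω₁ ω₂ : ℂ) (v : ℤ × ℤ) : ℂ :=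
  (v.1 : ℂ) * ω₁ + (v.2 : ℂ) * ω₂

/-- The Eisenstein series `∑' 1/ω^k` over the nonzero points of the lattice `ℤω₁ + ℤω₂`. -/
noncomputable def eisenstein (ω₁ ω₂ : ℂ) (k : ℕ) : ℂ :=
  ∑' v : {v : ℤ × ℤ // v ≠ 0}, (latticePt ω₁ ω₂ v.1) ^ (-(k : ℤ))

/-- The Weierstrass invariant `g₂ = 60 ∑' ω⁻⁴` of the lattice `ℤω₁ + ℤω₂`. -/
noncomputable def weierstrassG2 (ω₁ ω₂ : ℂ) : ℂ := 60 * eisenstein ω₁ ω₂ 4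

/-- The Weierstrass invariant `g₃ = 140 ∑' ω⁻⁶` of the lattice `ℤω₁ + ℤω₂`. -/
noncomputable def weierstrassG3 (ω₁ ω₂ : ℂ) : ℂ := 140 * eisenstein ω₁ ω₂ 6

/-- The Weierstrass zeta function of the lattice `ℤω₁ + ℤω₂`:
`ζ(z) = 1/z + ∑' (1/(z-ω) + 1/ω + z/ω²)`. -/
noncomputable def weierstrassZeta (ω₁ ω₂ z : ℂ) : ℂ :=
  1 / z + ∑' v : {v : ℤ × ℤ // v ≠ 0},
    (1 / (z - latticePt ω₁ ω₂ v.1) + 1 / latticePt ω₁ ω₂ v.1 + z / latticePt ω₁ ω₂ v.1 ^ 2)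

/-- The quasi-period `η = 2 ζ(ω/2)` attached to a period `ω` of the lattice `ℤω₁ + ℤω₂`
(the integral of the differential of the second kind against the corresponding cycle). -/
noncomputable def quasiPeriod (ω₁ ω₂ ω : ℂ) : ℂ := 2 * weierstrassZeta ω₁ ω₂ (ω / 2)

/-! ### Resultants and Mahler measure -/

namespace Chud
open Polynomial

lemma sum_shift_coeff (g : ℂ[X]) (θ : ℂ) (n N j : ℕ) (hg : g.natDegree ≤ n) (hj : j + n < N) :
    ∑ i : Fin N, θ ^ (i : ℕ) * (if (i : ℕ) ∈ Set.Icc j (j + n) then g.coeff (i - j) else 0)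
      = θ ^ j * g.eval θ := by
  rw [Fin.sum_univ_eq_sum_range
    (fun i => θ ^ i * (if i ∈ Set.Icc j (j + n) then g.coeff (i - j) else 0)) N]
  rw [eval_eq_sum_range' (Nat.lt_succ_of_le hg), Finset.mul_sum]
  have h1 : ∑ i ∈ Finset.range N, θ ^ i * (if i ∈ Set.Icc j (j + n) then g.coeff (i - j) else 0)
      = ∑ i ∈ Finset.Ico j (j + n + 1), θ ^ i * g.coeff (i - j) := by
    rw [← Finset.sum_subset (s₁ := Finset.Ico j (j + n + 1))]
    · apply Finset.sum_congr rfl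
      intro i hi
      rw [Finset.mem_Ico] at hi
      rw [if_pos (Set.mem_Icc.2 ⟨hi.1, by omega⟩)]
    · intro i hi
      rw [Finset.mem_Ico] at hi
      exact Finset.mem_range.2 (by omega)
    · intro i _ hi
      rw [if_neg, mul_zero]
      intro h
      exact hi (Finset.mem_Ico.2 ⟨h.1, by have := h.2; omega⟩)
  rw [h1, Finset.sum_Ico_eq_sum_range]
  have : j + n + 1 - j = n.succ := by omega
  rw [this]
  apply Finset.sum_congr rfl
  intro i _
  rw [Nat.add_sub_cancel_left, pow_add]
  ring

/-- Leibniz bound for a determinant with prescribed column sizes and one small row. -/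
lemma norm_det_le {ι : Type*} [Fintype ι] [DecidableEq ι] (A : Matrix ι ι ℂ) (H : ι → ℝ) (i₀ : ι)
    (ε : ℝ) (hA : ∀ i j, i ≠ i₀ → ‖A i j‖ ≤ H j) (h0 : ∀ j, ‖A i₀ j‖ ≤ ε * H j) :
    ‖A.det‖ ≤ (Fintype.card ι).factorial * (ε * ∏ j, H j) := by
  rw [← Matrix.det_transpose, Matrix.det_apply]
  have : ∀ σ ∈ (Finset.univ : Finset (Equiv.Perm ι)),
      ‖Equiv.Perm.sign σ • ∏ i, A.transpose (σ i) i‖ ≤ ε * ∏ j, H j := by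
    intro σ _
    have h1 : ‖Equiv.Perm.sign σ • ∏ i, A.transpose (σ i) i‖ = ∏ i, ‖A i (σ i)‖ := by
      rcases Int.units_eq_one_or (Equiv.Perm.sign σ) with h | h <;>
        simp [h, Matrix.transpose_apply, norm_prod]
    rw [h1, ← Finset.mul_prod_erase _ _ (Finset.mem_univ i₀)]
    have h2 : ∏ j, H j = H (σ i₀) * ∏ i ∈ Finset.univ.erase i₀, H (σ i) := by
      rw [Finset.mul_prod_erase _ (fun i => H (σ i)) (Finset.mem_univ i₀)]
      exact (Equiv.prod_comp σ H).symm
    rw [h2, ← mul_assoc]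
    gcongr with i hi
    · exact (norm_nonneg _).trans (h0 _)
    · exact h0 _
    · exact hA _ _ (Finset.ne_of_mem_erase hi)
  refine (norm_sum_le _ _).trans ((Finset.sum_le_card_nsmul _ _ _ this).trans ?_)
  rw [nsmul_eq_mul, Finset.card_univ, Fintype.card_perm]

/-- If two polynomials are small at a common point, so is their resultant. -/
lemma norm_resultant_le (f g : ℂ[X]) (θ : ℂ) (F G ε B : ℝ)
    (hF : ∀ i, ‖f.coeff i‖ ≤ F) (hG : ∀ i, ‖g.coeff i‖ ≤ G) (hF1 : 1 ≤ F) (hG1 : 1 ≤ G)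
    (hf : ‖f.eval θ‖ ≤ ε) (hg : ‖g.eval θ‖ ≤ ε) (hB : 1 ≤ B) (hθ : ‖θ‖ ≤ B)
    (hpos : 0 < f.natDegree + g.natDegree) :
    ‖resultant f g‖ ≤ (f.natDegree + g.natDegree).factorial *
      (ε * B ^ (f.natDegree + g.natDegree) * (G ^ f.natDegree * F ^ g.natDegree)) := by
  set m := f.natDegree with hm
  set n := g.natDegree with hn
  have hε : 0 ≤ ε := (norm_nonneg _).trans hf
  let i₀ : Fin (m + n) := ⟨0, hpos⟩
  let S := sylvester f g m n
  let A := S.updateRow i₀ (∑ k : Fin (m + n), (θ ^ (k : ℕ)) • S k)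
  have hdet : A.det = resultant f g m n := by
    rw [Matrix.det_updateRow_sum]
    simp [i₀, resultant, S]
  let H : Fin (m + n) → ℝ := fun j => j.addCases (fun _ => G) (fun _ => F)
  have hH : ∏ j, H j = G ^ m * F ^ n := by
    rw [Fin.prod_univ_add]
    simp [H]
  rw [← hdet, ← hH]
  have := norm_det_le A H i₀ (ε * B ^ (m + n)) ?_ ?_
  · simpa using this
  · intro i j hij
    simp only [A, Matrix.updateRow_ne hij]
    refine Fin.addCases (fun j => ?_) (fun j => ?_) j
    · simp only [S, sylvester, Matrix.of_apply, Fin.addCases_left, H]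
      split_ifs
      · exact hG _
      · simp; linarith
    · simp only [S, sylvester, Matrix.of_apply, Fin.addCases_right, H]
      split_ifs
      · exact hF _
      · simp; linarith
  · intro j
    have hp : ∀ j : ℕ, j ≤ m + n → ‖θ‖ ^ j ≤ B ^ (m + n) := fun j hj =>
      (pow_le_pow_left₀ (norm_nonneg _) hθ j).trans (pow_le_pow_right₀ hB hj)
    simp only [A, Matrix.updateRow_self, Finset.sum_apply, Pi.smul_apply, smul_eq_mul]
    refine Fin.addCases (fun j => ?_) (fun j => ?_) j
    · simp only [S, sylvester, Matrix.of_apply, Fin.addCases_left, H]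
      have := sum_shift_coeff g θ n (m + n) j hn.symm.le (by omega)
      erw [this]
      rw [norm_mul, norm_pow]
      have := hp j (by omega)
      calc _ ≤ B ^ (m + n) * ε := by gcongr
        _ = ε * B ^ (m + n) * 1 := by ring
        _ ≤ _ := by gcongr
    · simp only [S, sylvester, Matrix.of_apply, Fin.addCases_right, H]
      have := sum_shift_coeff f θ m (m + n) j hm.symm.le (by omega)
      erw [this]
      rw [norm_mul, norm_pow]
      have := hp j (by omega)
      calc _ ≤ B ^ (m + n) * ε := by gcongr
        _ = ε * B ^ (m + n) * 1 := by ring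
        _ ≤ _ := by gcongr

/-- The Mahler measure of an integer polynomial. -/
noncomputable def mah (P : ℤ[X]) : ℝ := (P.map (Int.castRingHom ℂ)).mahlerMeasure

lemma map_ne_zero' {P : ℤ[X]} (hP : P ≠ 0) : P.map (Int.castRingHom ℂ) ≠ 0 :=
  (Polynomial.map_ne_zero_iff (RingHom.injective_int _)).2 hP

lemma one_le_mah {P : ℤ[X]} (hP : P ≠ 0) : 1 ≤ mah P := by
  apply one_le_mahlerMeasure_of_one_le_norm_leadingCoeff
  rw [leadingCoeff_map_of_injective (RingHom.injective_int _)]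
  have : P.leadingCoeff ≠ 0 := leadingCoeff_ne_zero.2 hP
  simp only [eq_intCast, Complex.norm_intCast]
  exact_mod_cast Int.one_le_abs this

lemma mah_mul (P Q : ℤ[X]) : mah (P * Q) = mah P * mah Q := by
  simp [mah, Polynomial.map_mul, mahlerMeasure_mul]

lemma norm_coeff_le_mah (P : ℤ[X]) (i : ℕ) :
    ‖(P.map (Int.castRingHom ℂ)).coeff i‖ ≤ 2 ^ P.natDegree * mah P := by
  refine (norm_coeff_le_choose_mul_mahlerMeasure i _).trans ?_
  rw [natDegree_map_eq_of_injective (RingHom.injective_int _), mah]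
  gcongr
  · exact mahlerMeasure_nonneg _
  · exact_mod_cast Nat.choose_le_two_pow _ _

lemma isCoprime_of_irreducible {P Q : ℤ[X]} (hP : Irreducible P) (hQ : Irreducible Q)
    (hdP : P.natDegree ≠ 0) (hdQ : Q.natDegree ≠ 0) (hPQ : ¬ Associated P Q) :
    IsCoprime (P.map (Int.castRingHom ℚ)) (Q.map (Int.castRingHom ℚ)) := by
  have pP := hP.isPrimitive hdP
  have pQ := hQ.isPrimitive hdQ
  have iP := (IsPrimitive.Int.irreducible_iff_irreducible_map_cast pP).1 hP
  have h := (Irreducible.coprime_iff_not_dvd iP (n := Q.map (Int.castRingHom ℚ))).2 ?_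
  · exact h
  · rw [← IsPrimitive.Int.dvd_iff_map_cast_dvd_map_cast P Q pP]
    intro h
    exact hPQ (hP.associated_of_dvd hQ h)

/-- Non-associated irreducible polynomials are coprime over `ℚ`, so that their resultant is a nonzero
integer. -/
lemma one_le_norm_resultant {P Q : ℤ[X]} (hP : Irreducible P) (hQ : Irreducible Q)
    (hdP : P.natDegree ≠ 0) (hdQ : Q.natDegree ≠ 0) (hPQ : ¬ Associated P Q) :
    1 ≤ ‖resultant (P.map (Int.castRingHom ℂ)) (Q.map (Int.castRingHom ℂ))‖ := by
  have h1 := isCoprime_of_irreducible hP hQ hdP hdQ hPQ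
  have h2 : resultant (P.map (Int.castRingHom ℚ)) (Q.map (Int.castRingHom ℚ)) ≠ 0 := by
    rw [Ne, resultant_eq_zero_iff]
    tauto
  have inj : Function.Injective (Int.castRingHom ℚ) := RingHom.injective_int _
  have inj' : Function.Injective (Int.castRingHom ℂ) := RingHom.injective_int _
  rw [natDegree_map_eq_of_injective inj, natDegree_map_eq_of_injective inj,
    resultant_map_map] at h2
  rw [natDegree_map_eq_of_injective inj', natDegree_map_eq_of_injective inj',
    resultant_map_map]
  have h3 : resultant P Q ≠ 0 := fun h => h2 (by rw [h]; simp)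
  simp only [eq_intCast, Complex.norm_intCast]
  exact_mod_cast Int.one_le_abs h3

lemma eval_map_eq (P : ℤ[X]) (θ : ℂ) : (P.map (Int.castRingHom ℂ)).eval θ = aeval θ P := by
  rw [eval_map, aeval_def]; rfl

/-- Multiplicativity of degree, Mahler measure and value: if no irreducible factor of `P` is small
at `θ` relative to its own degree and Mahler measure, then `P` is not small either. -/
lemma not_small_of_factors (θ : ℂ) (κ δ σ : ℝ) (hκ : 0 ≤ κ) (hδ : 0 ≤ δ) (hσ : 0 ≤ σ)
    (hθ : ∀ Q : ℤ[X], Q ≠ 0 → aeval θ Q ≠ 0) (P : ℤ[X]) : P ≠ 0 →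
    (∀ Q, Irreducible Q → Q ∣ P →
      -(κ * (Q.natDegree * σ + Real.log (mah Q) * δ)) ≤ Real.log ‖aeval θ Q‖) →
      -(κ * (P.natDegree * σ + Real.log (mah P) * δ)) ≤ Real.log ‖aeval θ P‖ := by
  induction P using WfDvdMonoid.induction_on_irreducible with
  | zero => intro h; exact absurd rfl h
  | unit u hu =>
    intro h _
    obtain ⟨r, hr, rfl⟩ := Polynomial.isUnit_iff.1 hu
    have : (1:ℝ) ≤ ‖aeval θ (C r)‖ := by
      rw [aeval_C]
      simp only [algebraMap_int_eq, eq_intCast, Complex.norm_intCast]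
      exact_mod_cast Int.one_le_abs hr.ne_zero
    have h1 := Real.log_nonneg this
    have h2 := Real.log_nonneg (one_le_mah h)
    have : 0 ≤ κ * (((C r).natDegree : ℝ) * σ + Real.log (mah (C r)) * δ) := by positivity
    linarith
  | mul a i ha hi ih =>
    intro h hQ
    have h1 := ih ha (fun Q hQi hQa => hQ Q hQi (hQa.mul_left i))
    have h2 := hQ i hi (dvd_mul_right i a)
    rw [natDegree_mul hi.ne_zero ha, mah_mul,
      Real.log_mul (by linarith [one_le_mah hi.ne_zero]) (by linarith [one_le_mah ha]),
      map_mul, norm_mul, Real.log_mul (norm_ne_zero_iff.2 (hθ _ hi.ne_zero))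
        (norm_ne_zero_iff.2 (hθ _ ha))]
    push_cast
    nlinarith

lemma mah_le_of_dvd {P Q : ℤ[X]} (hP : P ≠ 0) (h : Q ∣ P) : mah Q ≤ mah P := by
  obtain ⟨R, rfl⟩ := h
  rw [mah_mul]
  have := one_le_mah (left_ne_zero_of_mul hP)
  have := one_le_mah (right_ne_zero_of_mul hP)
  nlinarith

/-- A polynomial small at `θ` has an irreducible factor of positive degree that is small relative
to its own degree and Mahler measure. -/
lemma exists_small_factor (θ : ℂ) (κ δ σ : ℝ) (hκ : 0 ≤ κ) (hδ : 0 ≤ δ) (hσ : 0 ≤ σ)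
    (hθ : ∀ Q : ℤ[X], Q ≠ 0 → aeval θ Q ≠ 0) (P : ℤ[X]) (hP : P ≠ 0)
    (hd : (P.natDegree : ℝ) ≤ δ) (hm : Real.log (mah P) ≤ σ)
    (hs : Real.log ‖aeval θ P‖ < -(2 * κ * (δ * σ))) :
    ∃ Q, Irreducible Q ∧ Q.natDegree ≠ 0 ∧ (Q.natDegree : ℝ) ≤ δ ∧ Real.log (mah Q) ≤ σ ∧
      Real.log ‖aeval θ Q‖ < -(κ * (Q.natDegree * σ + Real.log (mah Q) * δ)) := by
  by_contra! hcon
  have h := not_small_of_factors θ κ δ σ hκ hδ hσ hθ P hP ?_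
  · have h1 : κ * (P.natDegree * σ + Real.log (mah P) * δ) ≤ 2 * κ * (δ * σ) := by
      have : P.natDegree * σ + Real.log (mah P) * δ ≤ δ * σ + σ * δ := by gcongr
      nlinarith
    linarith
  · intro Q hQ hQP
    have hQd : Q.natDegree ≤ P.natDegree := natDegree_le_of_dvd hQP hP
    have hQd' : (Q.natDegree : ℝ) ≤ δ := le_trans (by exact_mod_cast hQd) hd
    have hQm : Real.log (mah Q) ≤ σ :=
      (Real.log_le_log (by linarith [one_le_mah hQ.ne_zero]) (mah_le_of_dvd hP hQP)).trans hm
    by_cases h0 : Q.natDegree = 0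
    · obtain ⟨r, hr⟩ := natDegree_eq_zero.1 h0
      have hr0 : r ≠ 0 := by rintro rfl; exact hQ.ne_zero (by rw [← hr]; simp)
      have : (1:ℝ) ≤ ‖aeval θ Q‖ := by
        rw [← hr, aeval_C]
        simp only [algebraMap_int_eq, eq_intCast, Complex.norm_intCast]
        exact_mod_cast Int.one_le_abs hr0
      have h1 := Real.log_nonneg this
      have h2 := Real.log_nonneg (one_le_mah hQ.ne_zero)
      have : 0 ≤ κ * ((Q.natDegree : ℝ) * σ + Real.log (mah Q) * δ) := by positivity
      linarith
    · exact hcon Q hQ h0 hQd' hQm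

end Chud

/-! ### Gelfond's transcendence criterion -/

namespace Chud
open Polynomial

lemma log_factorial_le_sq (n : ℕ) : Real.log (n.factorial : ℝ) ≤ (n : ℝ) ^ 2 := by
  rcases Nat.eq_zero_or_pos n with rfl | hn
  · simp
  have h1 : (n.factorial : ℝ) ≤ (n : ℝ) ^ n := by exact_mod_cast Nat.factorial_le_pow n
  have h2 := Real.log_le_log (by positivity) h1
  rw [Real.log_pow] at h2
  have h3 : Real.log n ≤ n := (Real.log_le_sub_one_of_pos (by positivity)).trans (by linarith)
  nlinarith [(Nat.cast_nonneg n : (0:ℝ) ≤ n)]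

/-- Logarithmic form of the resultant bound for non-associated irreducible integer polynomials. -/
lemma resultant_log_bound (θ : ℂ) (hθ : ∀ Q : ℤ[X], Q ≠ 0 → aeval θ Q ≠ 0) (B : ℝ) (hB : 1 ≤ B)
    (hθB : ‖θ‖ ≤ B) (m : ℝ) {P Q : ℤ[X]} (hP : Irreducible P) (hQ : Irreducible Q)
    (hdP : P.natDegree ≠ 0) (hdQ : Q.natDegree ≠ 0) (hPQ : ¬ Associated P Q)
    (h1 : Real.log ‖aeval θ P‖ ≤ -m) (h2 : Real.log ‖aeval θ Q‖ ≤ -m) :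
    m ≤ (2 + Real.log B) * ((P.natDegree : ℝ) + Q.natDegree) ^ 2
      + P.natDegree * Real.log (mah Q) + Q.natDegree * Real.log (mah P) := by
  have inj' : Function.Injective (Int.castRingHom ℂ) := RingHom.injective_int _
  have mP := one_le_mah hP.ne_zero
  have mQ := one_le_mah hQ.ne_zero
  have val : ∀ R : ℤ[X], R ≠ 0 → Real.log ‖aeval θ R‖ ≤ -m → ‖aeval θ R‖ ≤ Real.exp (-m) := by
    intro R hR h
    exact (Real.log_le_iff_le_exp (norm_pos_iff.2 (hθ R hR))).1 h
  have key := (one_le_norm_resultant hP hQ hdP hdQ hPQ).trans (norm_resultant_le _ _ θ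
    (2 ^ P.natDegree * mah P) (2 ^ Q.natDegree * mah Q) (Real.exp (-m)) B
    (norm_coeff_le_mah P) (norm_coeff_le_mah Q)
    (by have : (1:ℝ) ≤ 2 ^ P.natDegree := one_le_pow₀ (by norm_num)
        nlinarith)
    (by have : (1:ℝ) ≤ 2 ^ Q.natDegree := one_le_pow₀ (by norm_num)
        nlinarith)
    (by rw [eval_map_eq]; exact val P hP.ne_zero h1)
    (by rw [eval_map_eq]; exact val Q hQ.ne_zero h2) hB hθB
    (by rw [natDegree_map_eq_of_injective inj']; omega))
  rw [natDegree_map_eq_of_injective inj', natDegree_map_eq_of_injective inj'] at key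
  set d := P.natDegree
  set e := Q.natDegree
  have k2 := Real.log_le_log one_pos key
  have hB0 : 0 < B := by linarith
  have hP0 : 0 < mah P := by linarith
  have hQ0 : 0 < mah Q := by linarith
  rw [Real.log_one, Real.log_mul (by positivity) (by positivity),
    Real.log_mul (by positivity) (by positivity), Real.log_mul (by positivity) (by positivity),
    Real.log_mul (by positivity) (by positivity), Real.log_exp, Real.log_pow, Real.log_pow,
    Real.log_pow, Real.log_mul (by positivity) (by positivity),
    Real.log_mul (by positivity) (by positivity), Real.log_pow, Real.log_pow] at k2
  have k3 := log_factorial_le_sq (d + e)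
  push_cast at k2 k3
  have l2 : Real.log 2 ≤ 1 := by have := Real.log_two_lt_d9; linarith
  have l2' : 0 ≤ Real.log 2 := Real.log_nonneg (by norm_num)
  have lB : 0 ≤ Real.log B := Real.log_nonneg hB
  have hd : (1:ℝ) ≤ d := by exact_mod_cast Nat.one_le_iff_ne_zero.2 hdP
  have he : (1:ℝ) ≤ e := by exact_mod_cast Nat.one_le_iff_ne_zero.2 hdQ
  have k4 : ((d:ℝ) + e) * Real.log B ≤ Real.log B * ((d:ℝ) + e) ^ 2 := by
    have h : (d:ℝ) + e ≤ ((d:ℝ) + e) ^ 2 := by nlinarith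
    nlinarith [mul_le_mul_of_nonneg_left h lB]
  have k5 : (d:ℝ) * (e * Real.log 2) + e * (d * Real.log 2) ≤ ((d:ℝ) + e) ^ 2 := by
    have : (d:ℝ) * e * Real.log 2 ≤ d * e := by
      have : (0:ℝ) ≤ d * e := by positivity
      nlinarith
    nlinarith
  nlinarith

/-- The numerical contradiction between the resultant bound and the smallness of two
consecutive non-associated approximating polynomials. -/
lemma gelfond_arith {b c d e x y δ₁ δ₂ σ₁ σ₂ : ℝ} (hb : 0 ≤ b) (hc : 1 ≤ c) (hd1 : 1 ≤ d)
    (he1 : 1 ≤ e) (hx0 : 0 ≤ x) (hy0 : 0 ≤ y) (e1 : d ≤ δ₁) (e2 : e ≤ δ₂) (e3 : x ≤ σ₁)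
    (e4 : y ≤ σ₂) (r1 : δ₁ ≤ δ₂) (r2 : σ₁ ≤ σ₂) (r3 : δ₂ ≤ c * δ₁) (r4 : σ₂ ≤ c * σ₁)
    (r5 : δ₁ ^ 2 ≤ σ₁) (r6 : δ₂ ^ 2 ≤ σ₂) (r7 : 1 ≤ δ₁)
    (key : (b * (1 + c) ^ 2 + c + 1) * min (d * σ₁ + x * δ₁) (e * σ₂ + y * δ₂)
      ≤ b * (d + e) ^ 2 + d * y + e * x) : False := by
  have hσ₁ : 1 ≤ σ₁ := le_trans (one_le_pow₀ r7) r5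
  have b0 : 0 ≤ (b * (1 + c) ^ 2 + c + 1) := by positivity
  have b1 : (d + e) ^ 2 ≤ (1 + c) ^ 2 * (d * σ₁ + x * δ₁) := by
    have h1 : d + e ≤ (1 + c) * δ₁ := by linarith
    have h2 : (d + e) ^ 2 ≤ ((1 + c) * δ₁) ^ 2 := by gcongr
    have h3 : δ₁ ^ 2 ≤ d * σ₁ + x * δ₁ := by
      have : 1 * σ₁ ≤ d * σ₁ := by gcongr
      have : 0 ≤ x * δ₁ := by positivity
      linarith
    rw [mul_pow] at h2
    exact h2.trans (by gcongr)
  have b2 : (d + e) ^ 2 ≤ (1 + c) ^ 2 * (e * σ₂ + y * δ₂) := by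
    have h1 : d + e ≤ 2 * δ₂ := by linarith
    have h2 : (d + e) ^ 2 ≤ (2 * δ₂) ^ 2 := by gcongr
    have h3 : δ₂ ^ 2 ≤ e * σ₂ + y * δ₂ := by
      have : 1 * σ₂ ≤ e * σ₂ := by gcongr; linarith
      have : 0 ≤ y * δ₂ := mul_nonneg hy0 (by linarith)
      linarith
    have h4 : (2:ℝ) ^ 2 ≤ (1 + c) ^ 2 := by gcongr; linarith
    rw [mul_pow] at h2
    exact h2.trans (mul_le_mul h4 h3 (by positivity) (by positivity))
  have b3 : d * y + e * x ≤ c * (d * σ₁ + x * δ₁) := by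
    have h1 : d * y ≤ d * (c * σ₁) := by gcongr; linarith
    have h2 : e * x ≤ (c * δ₁) * x := by gcongr; linarith
    linarith
  have b4 : d * y + e * x ≤ c * (e * σ₂ + y * δ₂) := by
    have h1 : d * y ≤ δ₂ * y := by gcongr; linarith
    have h2 : e * x ≤ e * σ₂ := by gcongr; linarith
    have h3 : 0 ≤ e * σ₂ + y * δ₂ := by
      have : 0 ≤ e * σ₂ := mul_nonneg (by linarith) (by linarith)
      have : 0 ≤ y * δ₂ := mul_nonneg hy0 (by linarith)
      linarith
    have h4 : 1 * (e * σ₂ + y * δ₂) ≤ c * (e * σ₂ + y * δ₂) := by gcongr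
    linarith
  rcases le_total (d * σ₁ + x * δ₁) (e * σ₂ + y * δ₂) with hm | hm
  · rw [min_eq_left hm] at key
    have h1 := mul_le_mul_of_nonneg_left b1 hb
    have h2 : 1 ≤ d * σ₁ := one_le_mul_of_one_le_of_one_le hd1 hσ₁
    have h3 : 0 ≤ x * δ₁ := by positivity
    linarith
  · rw [min_eq_right hm] at key
    have h1 := mul_le_mul_of_nonneg_left b2 hb
    have h2 : 1 ≤ e * σ₂ := one_le_mul_of_one_le_of_one_le he1 (by linarith)
    have h3 : 0 ≤ y * δ₂ := mul_nonneg hy0 (by linarith)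
    linarith

/-- **Gelfond's transcendence criterion.** A transcendental number cannot be approximated by
integer polynomials `P n`, of degree at most `δ n` and logarithmic Mahler measure at most `σ n`,
with `|P n (θ)| ≤ exp (-κ δ n σ n)` for every `κ`. -/
theorem gelfond_criterion (θ : ℂ) (hθ : ∀ Q : ℤ[X], Q ≠ 0 → aeval θ Q ≠ 0) (δ σ : ℕ → ℝ) (c : ℝ)
    (hc : 1 ≤ c) (hδ1 : ∀ n, 1 ≤ δ n) (hδσ : ∀ n, δ n ^ 2 ≤ σ n)
    (hδm : ∀ n, δ n ≤ δ (n + 1)) (hσm : ∀ n, σ n ≤ σ (n + 1))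
    (hδc : ∀ n, δ (n + 1) ≤ c * δ n) (hσc : ∀ n, σ (n + 1) ≤ c * σ n)
    (hσ : Filter.Tendsto σ Filter.atTop Filter.atTop)
    (h : ∀ κ : ℝ, ∃ N, ∀ n ≥ N, ∃ P : ℤ[X], P ≠ 0 ∧ (P.natDegree : ℝ) ≤ δ n ∧
      Real.log (mah P) ≤ σ n ∧ Real.log ‖aeval θ P‖ < -(κ * (δ n * σ n))) : False := by
  set B := max 1 ‖θ‖ with hBdef
  have hB : 1 ≤ B := le_max_left _ _
  have lB : 0 ≤ Real.log B := Real.log_nonneg hB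
  set κ := (2 + Real.log B) * (1 + c) ^ 2 + c + 1 with hκdef
  have hκ : 0 < κ := by positivity
  have hσ1 : ∀ n, 1 ≤ σ n := fun n => by nlinarith [hδ1 n, hδσ n]
  obtain ⟨N, hN⟩ := h (2 * κ)
  have h1 : ∀ k, ∃ Q : ℤ[X], Irreducible Q ∧ Q.natDegree ≠ 0 ∧ (Q.natDegree : ℝ) ≤ δ (N + k) ∧
      Real.log (mah Q) ≤ σ (N + k) ∧ Real.log ‖aeval θ Q‖
        < -(κ * (Q.natDegree * σ (N + k) + Real.log (mah Q) * δ (N + k))) := by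
    intro k
    obtain ⟨P, hP, hd, hm, hs⟩ := hN (N + k) (by omega)
    exact exists_small_factor θ κ _ _ hκ.le (by linarith [hδ1 (N + k)])
      (by linarith [hσ1 (N + k)]) hθ P hP hd hm hs
  choose Q hQi hQd hQδ hQσ hQs using h1
  have hassoc : ∀ k, Associated (Q k) (Q (k + 1)) := by
    intro k
    by_contra hna
    set d : ℝ := ((Q k).natDegree : ℝ)
    set e : ℝ := ((Q (k + 1)).natDegree : ℝ)
    set x := Real.log (mah (Q k)) with hx
    set y := Real.log (mah (Q (k + 1))) with hy
    have hd1 : 1 ≤ d := by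
      simp only [d]; exact_mod_cast Nat.one_le_iff_ne_zero.2 (hQd k)
    have he1 : 1 ≤ e := by
      simp only [e]; exact_mod_cast Nat.one_le_iff_ne_zero.2 (hQd (k + 1))
    have hx0 : 0 ≤ x := Real.log_nonneg (one_le_mah (hQi k).ne_zero)
    have hy0 : 0 ≤ y := Real.log_nonneg (one_le_mah (hQi (k + 1)).ne_zero)
    have e1 := hQδ k
    have e2 := hQδ (k + 1)
    have e3 := hQσ k
    have e4 := hQσ (k + 1)
    have e5 := hQs k
    have e6 := hQs (k + 1)
    have r1 := hδm (N + k)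
    have r2 := hσm (N + k)
    have r3 := hδc (N + k)
    have r4 := hσc (N + k)
    have r5 := hδσ (N + k)
    have r6 := hδσ (N + (k + 1))
    have r7 := hδ1 (N + k)
    have r8 := hσ1 (N + k)
    rw [show N + k + 1 = N + (k + 1) by ring] at r1 r2 r3 r4
    change d ≤ _ at e1
    change e ≤ _ at e2
    change x ≤ _ at e3
    change y ≤ _ at e4
    change _ < -(κ * (d * _ + x * _)) at e5
    change _ < -(κ * (e * _ + y * _)) at e6
    generalize δ (N + k) = δ₁ at *
    generalize σ (N + k) = σ₁ at *
    generalize δ (N + (k + 1)) = δ₂ at *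
    generalize σ (N + (k + 1)) = σ₂ at *
    have m1 := min_le_left (d * σ₁ + x * δ₁) (e * σ₂ + y * δ₂)
    have m2 := min_le_right (d * σ₁ + x * δ₁) (e * σ₂ + y * δ₂)
    have key := resultant_log_bound θ hθ B hB (le_max_right _ _)
      (κ * min (d * σ₁ + x * δ₁) (e * σ₂ + y * δ₂)) (hQi k)
      (hQi (k + 1)) (hQd k) (hQd (k + 1)) hna
      (by have := mul_le_mul_of_nonneg_left m1 hκ.le
          linarith)
      (by have := mul_le_mul_of_nonneg_left m2 hκ.le
          linarith)
    change _ ≤ (2 + Real.log B) * (d + e) ^ 2 + d * y + e * x at key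
    rw [hκdef] at key
    exact gelfond_arith (by linarith) hc hd1 he1 hx0 hy0 e1 e2 e3 e4 r1 r2 r3 r4 r5 r6 r7 key
  have hassoc' : ∀ k, Associated (Q 0) (Q k) := by
    intro k
    induction k with
    | zero => exact Associated.refl _
    | succ k ih => exact ih.trans (hassoc k)
  have hval : ∀ k, Real.log ‖aeval θ (Q 0)‖ < -(κ * σ (N + k)) := by
    intro k
    have h2 := hQs k
    obtain ⟨u, hu⟩ := hassoc' k
    obtain ⟨r, hr, hru⟩ := Polynomial.isUnit_iff.1 u.isUnit
    have hn : ‖aeval θ (Q k)‖ = ‖aeval θ (Q 0)‖ := by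
      rw [← hu, map_mul, norm_mul, ← hru, aeval_C]
      rcases Int.isUnit_iff.1 hr with rfl | rfl <;> simp
    rw [hn] at h2
    have hd1 : (1:ℝ) ≤ (Q k).natDegree := by exact_mod_cast Nat.one_le_iff_ne_zero.2 (hQd k)
    have hx0 := Real.log_nonneg (one_le_mah (hQi k).ne_zero)
    have h3 : σ (N + k) ≤ (Q k).natDegree * σ (N + k) + Real.log (mah (Q k)) * δ (N + k) := by
      have := hσ1 (N + k)
      have := hδ1 (N + k)
      have : 0 ≤ Real.log (mah (Q k)) * δ (N + k) := by positivity
      nlinarith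
    have := mul_le_mul_of_nonneg_left h3 hκ.le
    linarith
  obtain ⟨n, hn⟩ := ((Filter.tendsto_atTop.1 hσ (-Real.log ‖aeval θ (Q 0)‖ / κ)).and
    (Filter.eventually_ge_atTop N)).exists
  obtain ⟨k, rfl⟩ := Nat.exists_eq_add_of_le hn.2
  have h5 := hval k
  have h6 := hn.1
  rw [div_le_iff₀ hκ] at h6
  linarith

end Chud

/-! ### The shifted Weierstrass functions and their derivatives -/

namespace Chud
open Finset Filter Topology

/-- The half-lattice translate `(ω₁ + ω₂)/2 + ℤω₁ + ℤω₂`, where the shifted Weierstrass functions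
have their poles. -/
def IsPole (ω₁ ω₂ z : ℂ) : Prop :=
  ∃ m n : ℤ, z = ((m : ℂ) + 1 / 2) * ω₁ + ((n : ℂ) + 1 / 2) * ω₂

/-- A pair of functions `f`, `g` behaving like `℘(z + u)` and `ζ(z + u) - ζ(u)`, where
`u = (ω₁ + ω₂)/2`: `f` is periodic, `g` quasi-periodic, `g' = -f`, `f'' = 6 f² - c`, and the poles
are at the points of `u + Λ`, of order at most `2` for `f` and `1` for `g`. -/
structure Ell where
  f : ℂ → ℂ
  g : ℂ → ℂ
  ω₁ : ℂ
  ω₂ : ℂ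
  η₁ : ℂ
  η₂ : ℂ
  e : ℂ
  c : ℂ
  indep : ∀ x y : ℝ, (x : ℂ) * ω₁ + y * ω₂ = 0 → x = 0 ∧ y = 0
  legendre : ω₁ * η₂ - ω₂ * η₁ ≠ 0
  f_an : ∀ z, ¬ IsPole ω₁ ω₂ z → AnalyticAt ℂ f z
  g_an : ∀ z, ¬ IsPole ω₁ ω₂ z → AnalyticAt ℂ g z
  f_ord : ∀ p, IsPole ω₁ ω₂ p → ∃ f₁ : ℂ → ℂ, AnalyticAt ℂ f₁ p ∧
    ∀ᶠ z in 𝓝[≠] p, (z - p) ^ 2 * f z = f₁ z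
  g_ord : ∀ p, IsPole ω₁ ω₂ p → ∃ g₁ : ℂ → ℂ, AnalyticAt ℂ g₁ p ∧
    ∀ᶠ z in 𝓝[≠] p, (z - p) * g z = g₁ z
  f_per : ∀ (m n : ℤ) z, f (z + (m * ω₁ + n * ω₂)) = f z
  g_per : ∀ (m n : ℤ) z, g (z + (m * ω₁ + n * ω₂)) = g z + (m * η₁ + n * η₂)
  f_zero : f 0 = e
  df_zero : deriv f 0 = 0
  g_zero : g 0 = 0
  dg : ∀ᶠ z in 𝓝 0, deriv g z = - f z
  ddf : ∀ᶠ z in 𝓝 0, deriv (deriv f) z = 6 * f z ^ 2 - c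
  f_nonconst : ¬ ∀ᶠ z in 𝓝 0, f z = e

/-- The recursively defined value at `0` of the `t`-th derivative of `z ^ a f ^ j f' ^ j' g ^ b`,
expressed through the elements `e = f 0` and `c` of an arbitrary ring. -/
def psi {R : Type*} [Ring R] (e c : R) : ℕ → ℕ → ℕ → ℕ → ℕ → R
  | 0, a, j, j', b => if a = 0 ∧ j' = 0 ∧ b = 0 then e ^ j else 0
  | t + 1, a, j, j', b => a * psi e c t (a - 1) j j' b + j * psi e c t a (j - 1) (j' + 1) b
      + j' * (6 * psi e c t a (j + 2) (j' - 1) b - c * psi e c t a j (j' - 1) b)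
      - b * psi e c t a (j + 1) j' (b - 1)

/-- The monomial `z ^ a f ^ j f' ^ j' g ^ b`. -/
noncomputable def Ell.mon (E : Ell) (a j j' b : ℕ) (z : ℂ) : ℂ :=
  z ^ a * E.f z ^ j * deriv E.f z ^ j' * E.g z ^ b

lemma Ell.lattice_not_pole (E : Ell) (m n : ℤ) : ¬ IsPole E.ω₁ E.ω₂ (m * E.ω₁ + n * E.ω₂) := by
  rintro ⟨p, q, h⟩
  have := E.indep (m - (p + 1 / 2)) (n - (q + 1 / 2)) (by push_cast; linear_combination h)
  have h1 := this.1
  have : (2 * m : ℝ) = 2 * p + 1 := by linarith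
  have : 2 * m = 2 * p + 1 := by exact_mod_cast this
  omega

lemma Ell.zero_not_pole (E : Ell) : ¬ IsPole E.ω₁ E.ω₂ 0 := by
  simpa using E.lattice_not_pole 0 0

lemma Ell.mon_analytic (E : Ell) (a j j' b : ℕ) : AnalyticAt ℂ (E.mon a j j' b) 0 := by
  have h1 := E.f_an 0 E.zero_not_pole
  have h2 := E.g_an 0 E.zero_not_pole
  have h3 := h1.deriv
  unfold Ell.mon
  fun_prop

lemma Ell.mon_deriv (E : Ell) (a j j' b : ℕ) : deriv (E.mon a j j' b) =ᶠ[𝓝 0] fun z =>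
    a * E.mon (a - 1) j j' b z + j * E.mon a (j - 1) (j' + 1) b z
      + j' * (6 * E.mon a (j + 2) (j' - 1) b z - E.c * E.mon a j (j' - 1) b z)
      - b * E.mon a (j + 1) j' (b - 1) z := by
  have h1 := (E.f_an 0 E.zero_not_pole).eventually_analyticAt
  have h2 := (E.g_an 0 E.zero_not_pole).eventually_analyticAt
  filter_upwards [h1, h2, E.dg, E.ddf] with z h1 h2 h3 h4
  have d1 := h1.differentiableAt.hasDerivAt
  have d2 := h2.differentiableAt.hasDerivAt
  have d3 := h1.deriv.differentiableAt.hasDerivAt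
  rw [h3] at d2
  rw [h4] at d3
  have := ((((hasDerivAt_id z).pow a).mul (d1.pow j)).mul (d3.pow j')).mul (d2.pow b)
  unfold Ell.mon
  refine (this.congr_of_eventuallyEq (Eventually.of_forall fun w => ?_)).deriv.trans ?_
  · simp
  · simp
    ring

lemma Ell.iteratedDeriv_mon (E : Ell) (t : ℕ) : ∀ a j j' b : ℕ,
    iteratedDeriv t (E.mon a j j' b) 0 = psi E.e E.c t a j j' b := by
  induction t with
  | zero =>
    intro a j j' b
    simp only [iteratedDeriv_zero, Ell.mon, E.f_zero, E.df_zero, E.g_zero, psi]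
    rcases Nat.eq_zero_or_pos a with rfl | ha
    · rcases Nat.eq_zero_or_pos b with rfl | hb
      · rcases Nat.eq_zero_or_pos j' with rfl | hj
        · simp
        · simp [hj.ne']
      · simp [hb.ne']
    · simp [ha.ne']
  | succ t ih =>
    intro a j j' b
    have an := fun a j j' b => (E.mon_analytic a j j' b).contDiffAt (n := t)
    rw [iteratedDeriv_succ', (E.mon_deriv a j j' b).iteratedDeriv_eq t]
    have e1 : ∀ (k : ℂ) (a j j' b), ContDiffAt ℂ t (fun z => k * E.mon a j j' b z) 0 :=
      fun k a j j' b => contDiffAt_const.mul (an a j j' b)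
    rw [iteratedDeriv_fun_sub, iteratedDeriv_fun_add, iteratedDeriv_fun_add]
    · simp only [iteratedDeriv_const_mul_field]
      rw [iteratedDeriv_fun_sub (e1 _ _ _ _ _) (e1 _ _ _ _ _)]
      simp only [iteratedDeriv_const_mul_field]
      simp only [psi]
      rw [← ih, ← ih, ← ih, ← ih, ← ih]
    all_goals try exact e1 _ _ _ _ _
    · exact (e1 _ _ _ _ _).add (e1 _ _ _ _ _)
    · exact contDiffAt_const.mul ((e1 _ _ _ _ _).sub (e1 _ _ _ _ _))
    · exact ((e1 _ _ _ _ _).add (e1 _ _ _ _ _)).add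
        (contDiffAt_const.mul ((e1 _ _ _ _ _).sub (e1 _ _ _ _ _)))

/-- The auxiliary function `∑ P i j k z ^ i f ^ j g ^ k`, `i, k < M`, `j < L`. -/
noncomputable def Ell.aux (E : Ell) (L M : ℕ) (P : ℕ → ℕ → ℕ → ℂ) (z : ℂ) : ℂ :=
  ∑ i ∈ range M, ∑ j ∈ range L, ∑ k ∈ range M, P i j k * (z ^ i * E.f z ^ j * E.g z ^ k)

/-- The algebraic expression of the `t`-th derivative at a lattice point `x` with quasi-period
`y` of `z ^ i f ^ j g ^ k`. -/
def val {R : Type*} [Ring R] (e c : R) (x y : R) (t i j k : ℕ) : R :=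
  ∑ a ∈ range (i + 1), ∑ b ∈ range (k + 1),
    ((i.choose a * k.choose b : ℕ) : R) * (x ^ (i - a) * y ^ (k - b)) * psi e c t a j 0 b

lemma Ell.aux_analytic (E : Ell) (L M : ℕ) (P : ℕ → ℕ → ℕ → ℂ) {z : ℂ}
    (hz : ¬ IsPole E.ω₁ E.ω₂ z) : AnalyticAt ℂ (E.aux L M P) z := by
  have h1 := E.f_an z hz
  have h2 := E.g_an z hz
  unfold Ell.aux
  fun_prop

lemma Ell.iteratedDeriv_term (E : Ell) (t i j k : ℕ) (m n : ℤ) :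
    iteratedDeriv t (fun z => z ^ i * E.f z ^ j * E.g z ^ k) (m * E.ω₁ + n * E.ω₂)
      = val E.e E.c (m * E.ω₁ + n * E.ω₂) (m * E.η₁ + n * E.η₂) t i j k := by
  have h0 := congrFun (iteratedDeriv_comp_add_const t (fun z => z ^ i * E.f z ^ j * E.g z ^ k)
    (m * E.ω₁ + n * E.ω₂)) 0
  simp only [zero_add] at h0
  rw [← h0]
  have h1 : (fun z => (z + (m * E.ω₁ + n * E.ω₂)) ^ i * E.f (z + (m * E.ω₁ + n * E.ω₂)) ^ j *
      E.g (z + (m * E.ω₁ + n * E.ω₂)) ^ k) = fun z => ∑ a ∈ range (i + 1), ∑ b ∈ range (k + 1),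
      (((i.choose a * k.choose b : ℕ) : ℂ) * ((m * E.ω₁ + n * E.ω₂) ^ (i - a) *
        (m * E.η₁ + n * E.η₂) ^ (k - b))) * E.mon a j 0 b z := by
    funext z
    rw [E.f_per, E.g_per, add_pow, add_pow, mul_assoc, Finset.sum_mul]
    refine Finset.sum_congr rfl fun a _ => ?_
    rw [Finset.mul_sum, Finset.mul_sum]
    refine Finset.sum_congr rfl fun b _ => ?_
    simp only [Ell.mon]
    push_cast
    ring
  have an := fun a j j' b => (E.mon_analytic a j j' b).contDiffAt (n := t)
  rw [h1, iteratedDeriv_fun_sum]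
  · refine Finset.sum_congr rfl fun a _ => ?_
    rw [iteratedDeriv_fun_sum]
    · refine Finset.sum_congr rfl fun b _ => ?_
      rw [iteratedDeriv_const_mul_field, E.iteratedDeriv_mon]
    · exact fun b _ => contDiffAt_const.mul (an _ _ _ _)
  · exact fun a _ => ContDiffAt.sum fun b _ => contDiffAt_const.mul (an _ _ _ _)

lemma Ell.iteratedDeriv_aux (E : Ell) (L M : ℕ) (P : ℕ → ℕ → ℕ → ℂ) (t : ℕ) (m n : ℤ) :
    iteratedDeriv t (E.aux L M P) (m * E.ω₁ + n * E.ω₂)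
      = ∑ i ∈ range M, ∑ j ∈ range L, ∑ k ∈ range M, P i j k *
        val E.e E.c (m * E.ω₁ + n * E.ω₂) (m * E.η₁ + n * E.η₂) t i j k := by
  have h1 := E.f_an _ (E.lattice_not_pole m n)
  have h2 := E.g_an _ (E.lattice_not_pole m n)
  have an : ∀ i j k, ContDiffAt ℂ t (fun z => P i j k * (z ^ i * E.f z ^ j * E.g z ^ k))
      (m * E.ω₁ + n * E.ω₂) := fun i j k => AnalyticAt.contDiffAt (by fun_prop)
  unfold Ell.aux
  rw [iteratedDeriv_fun_sum]
  · refine Finset.sum_congr rfl fun i _ => ?_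
    rw [iteratedDeriv_fun_sum]
    · refine Finset.sum_congr rfl fun j _ => ?_
      rw [iteratedDeriv_fun_sum]
      · refine Finset.sum_congr rfl fun k _ => ?_
        rw [iteratedDeriv_const_mul_field, E.iteratedDeriv_term]
      · exact fun k _ => an _ _ _
    · exact fun j _ => ContDiffAt.sum fun k _ => an _ _ _
  · exact fun i _ => ContDiffAt.sum fun j _ => ContDiffAt.sum fun k _ => an _ _ _

end Chud

/-! ### Zero estimate -/

namespace Chud
open Finset Filter Topology Polynomial

/-- A polynomial of degree less than `2 M + 1` vanishing at the integers of absolute value at most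
`M` vanishes. -/
lemma vanish_of_poly {n M : ℕ} {h : ℂ → ℂ} (hp : ∃ p : ℂ[X], p.natDegree ≤ n ∧ ∀ x, h x = p.eval x)
    (hn : n < 2 * M + 1) (hz : ∀ m : ℤ, |m| ≤ M → h m = 0) (x : ℂ) : h x = 0 := by
  obtain ⟨p, hd, hp⟩ := hp
  have : p = 0 := by
    refine Polynomial.eq_zero_of_natDegree_lt_card_of_eval_eq_zero' p
      ((Finset.Icc (-(M:ℤ)) M).image (fun m : ℤ => (m : ℂ))) ?_ ?_
    · intro y hy
      obtain ⟨m, hm, rfl⟩ := Finset.mem_image.1 hy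
      rw [← hp]
      exact hz m (abs_le.2 (Finset.mem_Icc.1 hm))
    · rw [Finset.card_image_of_injective _ Int.cast_injective, Int.card_Icc]
      omega
  rw [hp, this, eval_zero]

/-- Along a line, `val` is a polynomial of degree at most `i + k`. -/
lemma val_line (e c α β γ δ : ℂ) (t i j k : ℕ) : ∃ p : ℂ[X], p.natDegree ≤ i + k ∧
    ∀ x, val e c (α * x + β) (γ * x + δ) t i j k = p.eval x := by
  refine ⟨∑ a ∈ range (i + 1), ∑ b ∈ range (k + 1), C (((i.choose a * k.choose b : ℕ) : ℂ)) *
    ((C α * X + C β) ^ (i - a) * (C γ * X + C δ) ^ (k - b)) * C (psi e c t a j 0 b), ?_, ?_⟩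
  · refine natDegree_sum_le_of_forall_le _ _ fun a _ => natDegree_sum_le_of_forall_le _ _
      fun b _ => ?_
    refine (natDegree_mul_C_le _ _).trans ((natDegree_C_mul_le _ _).trans
      (natDegree_mul_le.trans (add_le_add ?_ ?_)))
    · refine natDegree_pow_le.trans ?_
      have := natDegree_linear_le (a := α) (b := β)
      nlinarith [Nat.sub_le i a]
    · refine natDegree_pow_le.trans ?_
      have := natDegree_linear_le (a := γ) (b := δ)
      nlinarith [Nat.sub_le k b]
  · intro x
    simp [val, eval_finsetSum]

/-- Linear combination of the values `val` for the coefficients `P`. -/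
noncomputable def comb (e c : ℂ) (L M : ℕ) (P : ℕ → ℕ → ℕ → ℂ) (t : ℕ) (x y : ℂ) : ℂ :=
  ∑ i ∈ range M, ∑ j ∈ range L, ∑ k ∈ range M, P i j k * val e c x y t i j k

lemma comb_line (e c α β γ δ : ℂ) (L M : ℕ) (P : ℕ → ℕ → ℕ → ℂ) (t : ℕ) :
    ∃ p : ℂ[X], p.natDegree ≤ 2 * M ∧
      ∀ x, comb e c L M P t (α * x + β) (γ * x + δ) = p.eval x := by
  choose p hp hpe using fun i j k => val_line e c α β γ δ t i j k
  refine ⟨∑ i ∈ range M, ∑ j ∈ range L, ∑ k ∈ range M, C (P i j k) * p i j k, ?_, ?_⟩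
  · refine natDegree_sum_le_of_forall_le _ _ fun i hi => natDegree_sum_le_of_forall_le _ _
      fun j hj => natDegree_sum_le_of_forall_le _ _ fun k hk => ?_
    refine (natDegree_C_mul_le _ _).trans ((hp i j k).trans ?_)
    have := Finset.mem_range.1 hi
    have := Finset.mem_range.1 hk
    omega
  · intro x
    simp [comb, eval_finsetSum, hpe]

/-- A polynomial in two variables of small degree vanishing on a large grid vanishes. -/
lemma comb_eq_zero (E : Ell) (L M : ℕ) (P : ℕ → ℕ → ℕ → ℂ) (t : ℕ)
    (h : ∀ m n : ℤ, |m| ≤ M → |n| ≤ M →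
      comb E.e E.c L M P t (m * E.ω₁ + n * E.ω₂) (m * E.η₁ + n * E.η₂) = 0) (x y : ℂ) :
    comb E.e E.c L M P t x y = 0 := by
  have h1 : ∀ (n : ℤ) (u : ℂ), |n| ≤ M →
      comb E.e E.c L M P t (E.ω₁ * u + n * E.ω₂) (E.η₁ * u + n * E.η₂) = 0 := by
    intro n u hn
    refine vanish_of_poly (comb_line E.e E.c E.ω₁ (n * E.ω₂) E.η₁ (n * E.η₂) L M P t)
      (Nat.lt_succ_self _) (fun m hm => ?_) u
    rw [mul_comm E.ω₁, mul_comm E.η₁]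
    exact h m n hm hn
  have h2 : ∀ (v u : ℂ),
      comb E.e E.c L M P t (E.ω₂ * v + u * E.ω₁) (E.η₂ * v + u * E.η₁) = 0 := by
    intro v u
    refine vanish_of_poly (comb_line E.e E.c E.ω₂ (u * E.ω₁) E.η₂ (u * E.η₁) L M P t)
      (Nat.lt_succ_self _) (fun m hm => ?_) v
    rw [mul_comm E.ω₂, mul_comm E.η₂, mul_comm u, mul_comm u, add_comm, add_comm (_ * E.η₂)]
    exact h1 m u hm
  have hd := E.legendre
  have := h2 ((E.ω₁ * y - E.η₁ * x) / (E.ω₁ * E.η₂ - E.ω₂ * E.η₁))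
    ((E.η₂ * x - E.ω₂ * y) / (E.ω₁ * E.η₂ - E.ω₂ * E.η₁))
  convert this using 2
  · simp only [div_eq_mul_inv]
    linear_combination -x * mul_inv_cancel₀ hd
  · simp only [div_eq_mul_inv]
    linear_combination -y * mul_inv_cancel₀ hd

/-- Extraction of the leading coefficient, in `x` and then in `y`, of `comb`. -/
lemma exists_leading (e c : ℂ) (L M T : ℕ) (P : ℕ → ℕ → ℕ → ℂ)
    (h : ∀ t < T, ∀ x y, comb e c L M P t x y = 0)
    (hP : ∃ i < M, ∃ j < L, ∃ k < M, P i j k ≠ 0) :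
    ∃ i k, (∃ j < L, P i j k ≠ 0) ∧
      ∀ t < T, ∑ j ∈ range L, P i j k * psi e c t 0 j 0 0 = 0 := by
  classical
  obtain ⟨i₀, hi₀, j₀, hj₀, k₀, hk₀, h₀⟩ := hP
  set s := (range M).filter (fun i => ∃ j < L, ∃ k < M, P i j k ≠ 0) with hs
  have hsn : s.Nonempty := ⟨i₀, by simp [hs]; exact ⟨hi₀, j₀, hj₀, k₀, hk₀, h₀⟩⟩
  set A := s.max' hsn with hA
  have hAs : A ∈ s := s.max'_mem hsn
  have hAm : ∀ i < M, ∀ j < L, ∀ k < M, P i j k ≠ 0 → i ≤ A := fun i hi j hj k hk hne =>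
    s.le_max' i (by simp [hs]; exact ⟨hi, j, hj, k, hk, hne⟩)
  simp only [hs, Finset.mem_filter, Finset.mem_range] at hAs
  obtain ⟨hAM, j₁, hj₁, k₁, hk₁, h₁⟩ := hAs
  set s' := (range M).filter (fun k => ∃ j < L, P A j k ≠ 0) with hs'
  have hsn' : s'.Nonempty := ⟨k₁, by simp [hs']; exact ⟨hk₁, j₁, hj₁, h₁⟩⟩
  set B := s'.max' hsn' with hB
  have hBs : B ∈ s' := s'.max'_mem hsn'
  have hBm : ∀ j < L, ∀ k < M, P A j k ≠ 0 → k ≤ B := fun j hj k hk hne =>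
    s'.le_max' k (by simp [hs']; exact ⟨hk, j, hj, hne⟩)
  simp only [hs', Finset.mem_filter, Finset.mem_range] at hBs
  refine ⟨A, B, hBs.2, fun t ht => ?_⟩
  have step1 : ∀ y : ℂ, ∑ j ∈ range L, ∑ k ∈ range M, P A j k *
      ∑ b ∈ range (k + 1), (k.choose b : ℂ) * y ^ (k - b) * psi e c t 0 j 0 b = 0 := by
    intro y
    set p : ℂ[X] := ∑ i ∈ range M, ∑ j ∈ range L, ∑ k ∈ range M, ∑ a ∈ range (i + 1),
      C (P i j k * ∑ b ∈ range (k + 1), ((i.choose a * k.choose b : ℕ) : ℂ) * y ^ (k - b)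
        * psi e c t a j 0 b) * X ^ (i - a) with hp
    have p0 : p = 0 := by
      refine Polynomial.funext fun x => ?_
      rw [eval_zero, ← h t ht x y]
      simp only [hp, comb, val, eval_finsetSum, eval_mul, eval_C, eval_pow, eval_X,
        Finset.mul_sum, Finset.sum_mul]
      refine Finset.sum_congr rfl fun i _ => Finset.sum_congr rfl fun j _ =>
        Finset.sum_congr rfl fun k _ => Finset.sum_congr rfl fun a _ =>
        Finset.sum_congr rfl fun b _ => ?_
      ring
    have c0 : p.coeff A = 0 := by rw [p0, coeff_zero]
    rw [hp] at c0
    simp only [finsetSum_coeff, coeff_C_mul_X_pow] at c0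
    rw [Finset.sum_eq_single A] at c0
    · rw [← c0]
      refine Finset.sum_congr rfl fun j _ => Finset.sum_congr rfl fun k _ => ?_
      symm
      rw [Finset.sum_eq_single 0]
      · simp
      · intro a ha ha0
        have := Finset.mem_range.1 ha
        rw [if_neg (by omega)]
      · simp
    · intro i hi hiA
      refine Finset.sum_eq_zero fun j hj => Finset.sum_eq_zero fun k hk =>
        Finset.sum_eq_zero fun a ha => ?_
      rw [Finset.mem_range] at hi hj hk
      split_ifs with hh
      · by_cases hne : P i j k = 0
        · simp [hne]
        · have := hAm i hi j hj k hk hne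
          omega
      · rfl
    · intro hn
      exact absurd (Finset.mem_range.2 hAM) hn
  set p : ℂ[X] := ∑ j ∈ range L, ∑ k ∈ range M, ∑ b ∈ range (k + 1),
      C (P A j k * ((k.choose b : ℂ) * psi e c t 0 j 0 b)) * X ^ (k - b) with hp
  have p0 : p = 0 := by
    refine Polynomial.funext fun y => ?_
    rw [eval_zero, ← step1 y]
    simp only [hp, eval_finsetSum, eval_mul, eval_C, eval_pow, eval_X,
      Finset.mul_sum]
    refine Finset.sum_congr rfl fun j _ =>
      Finset.sum_congr rfl fun k _ => Finset.sum_congr rfl fun b _ => ?_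
    ring
  have c0 : p.coeff B = 0 := by rw [p0, coeff_zero]
  rw [hp] at c0
  simp only [finsetSum_coeff, coeff_C_mul_X_pow] at c0
  rw [← c0]
  refine Finset.sum_congr rfl fun j hj => ?_
  rw [Finset.sum_eq_single B]
  · rw [Finset.sum_eq_single 0]
    · simp
    · intro a ha ha0
      have := Finset.mem_range.1 ha
      rw [if_neg (by omega)]
    · simp
  · intro k hk hkB
    refine Finset.sum_eq_zero fun b hb => ?_
    rw [Finset.mem_range] at hj hk
    split_ifs with hh
    · by_cases hne : P A j k = 0
      · simp [hne]
      · have := hBm j hj k hk hne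
        omega
    · rfl
  · intro hn
    exact absurd (Finset.mem_range.2 hBs.1) hn

/-- The order at `0` of a nonzero polynomial in `f` is controlled by its degree. -/
lemma Ell.order_poly (E : Ell) : ∃ κ : ℕ, 1 ≤ κ ∧ ∀ p : ℂ[X], p ≠ 0 →
    analyticOrderAt (fun z => p.eval (E.f z)) 0 ≤ ((κ * p.natDegree : ℕ) : ℕ∞) := by
  have hf := E.f_an 0 E.zero_not_pole
  have hfe : AnalyticAt ℂ (fun z => E.f z - E.e) 0 := by fun_prop
  have htop : analyticOrderAt (fun z => E.f z - E.e) 0 ≠ ⊤ := by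
    intro h
    rw [analyticOrderAt_eq_top] at h
    exact E.f_nonconst (h.mono fun z hz => sub_eq_zero.1 hz)
  obtain ⟨κ, hκ⟩ := ENat.ne_top_iff_exists.1 htop
  refine ⟨max 1 κ, le_max_left _ _, fun p hp => ?_⟩
  obtain ⟨q, hq, hqd⟩ := p.exists_eq_pow_rootMultiplicity_mul_and_not_dvd hp E.e
  have hqe : q.eval E.e ≠ 0 := fun h => hqd (dvd_iff_isRoot.2 h)
  have han : AnalyticAt ℂ (fun z => q.eval (E.f z)) 0 := by
    have := AnalyticAt.aeval_polynomial hf q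
    simpa [coe_aeval_eq_eval] using this
  have e1 : (fun z => p.eval (E.f z)) =
      (fun z => E.f z - E.e) ^ (p.rootMultiplicity E.e) * (fun z => q.eval (E.f z)) := by
    funext z
    conv_lhs => rw [hq]
    simp
  have e2 : analyticOrderAt (fun z => q.eval (E.f z)) 0 = 0 := by
    rw [han.analyticOrderAt_eq_zero, E.f_zero]
    exact hqe
  rw [e1, analyticOrderAt_mul (hfe.pow _) han, e2, analyticOrderAt_pow hfe, ← hκ, add_zero,
    nsmul_eq_mul]
  have h3 : p.rootMultiplicity E.e ≤ p.natDegree := by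
    rw [← count_roots]
    exact (Multiset.count_le_card _ _).trans (card_roots' p)
  have : p.rootMultiplicity E.e * κ ≤ max 1 κ * p.natDegree := by
    rw [mul_comm]
    exact Nat.mul_le_mul (le_max_right _ _) h3
  exact_mod_cast this

/-- **Zero estimate**: the auxiliary function attached to nonzero coefficients has a nonzero
derivative of small order at some lattice point of a grid of size `M`. -/
theorem Ell.zero_estimate (E : Ell) : ∃ κ : ℕ, 1 ≤ κ ∧ ∀ (L M T : ℕ) (P : ℕ → ℕ → ℕ → ℂ),
    κ * L ≤ T → (∃ i < M, ∃ j < L, ∃ k < M, P i j k ≠ 0) →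
    ∃ t < T, ∃ m n : ℤ, |m| ≤ M ∧ |n| ≤ M ∧
      iteratedDeriv t (E.aux L M P) (m * E.ω₁ + n * E.ω₂) ≠ 0 := by
  obtain ⟨κ, hκ, hord⟩ := E.order_poly
  refine ⟨κ, hκ, fun L M T P hT hP => ?_⟩
  by_contra! hcon
  have h1 : ∀ t < T, ∀ x y, comb E.e E.c L M P t x y = 0 := fun t ht =>
    comb_eq_zero E L M P t fun m n hm hn => by
      rw [comb, ← E.iteratedDeriv_aux]
      exact hcon t ht m n hm hn
  obtain ⟨i, k, ⟨j₀, hj₀, hne⟩, hz⟩ := exists_leading E.e E.c L M T P h1 hP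
  set p : ℂ[X] := ∑ j ∈ range L, C (P i j k) * X ^ j with hp
  have hpc : p.coeff j₀ ≠ 0 := by
    simp only [hp, finsetSum_coeff, coeff_C_mul_X_pow]
    rw [Finset.sum_eq_single j₀] <;> simp_all [eq_comm]
  have hp0 : p ≠ 0 := fun h => hpc (by rw [h, coeff_zero])
  have hpd : p.natDegree ≤ L - 1 := natDegree_sum_le_of_forall_le _ _ fun j hj =>
    (natDegree_C_mul_X_pow_le _ _).trans (by have := Finset.mem_range.1 hj; omega)
  have hpe : (fun z => p.eval (E.f z)) = fun z => ∑ j ∈ range L, P i j k * E.mon 0 j 0 0 z := by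
    funext z
    simp [hp, eval_finsetSum, Ell.mon]
  have han : AnalyticAt ℂ (fun z => p.eval (E.f z)) 0 := by
    have := fun j => E.mon_analytic 0 j 0 0
    rw [hpe]
    fun_prop
  have h2 : (T : ℕ∞) ≤ analyticOrderAt (fun z => p.eval (E.f z)) 0 := by
    rw [natCast_le_analyticOrderAt_iff_iteratedDeriv_eq_zero han]
    intro t ht
    rw [hpe, iteratedDeriv_fun_sum]
    · refine Eq.trans (Finset.sum_congr rfl fun j _ => ?_) (hz t ht)
      rw [iteratedDeriv_const_mul_field, E.iteratedDeriv_mon]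
    · exact fun j _ => contDiffAt_const.mul (E.mon_analytic 0 j 0 0).contDiffAt
  have h3 := h2.trans (hord p hp0)
  have h4 : T ≤ κ * p.natDegree := by exact_mod_cast h3
  have h5 : κ * p.natDegree ≤ κ * (L - 1) := Nat.mul_le_mul_left _ hpd
  have h6 : κ * (L - 1) < κ * L := Nat.mul_lt_mul_of_pos_left (by omega) (by omega)
  omega

end Chud

/-! ### Growth on the boundary of parallelograms -/

namespace Chud
open Finset Filter Topology

/-- Coordinates with respect to a real basis of `ℂ`. -/
lemma exists_coords (ω₁ ω₂ : ℂ) (h : ∀ x y : ℝ, (x : ℂ) * ω₁ + y * ω₂ = 0 → x = 0 ∧ y = 0) :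
    ∃ Φ : ℂ ≃L[ℝ] ℝ × ℝ, ∀ x y : ℝ, Φ (x * ω₁ + y * ω₂) = (x, y) := by
  let φ : ℝ × ℝ →ₗ[ℝ] ℂ :=
    (LinearMap.fst ℝ ℝ ℝ).smulRight ω₁ + (LinearMap.snd ℝ ℝ ℝ).smulRight ω₂
  have hφ : ∀ x y : ℝ, φ (x, y) = x * ω₁ + y * ω₂ := by intro x y; simp [φ]
  have inj : Function.Injective φ := by
    rw [← LinearMap.ker_eq_bot, LinearMap.ker_eq_bot']
    rintro ⟨x, y⟩ hxy
    rw [hφ] at hxy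
    have := h x y hxy
    simp [this]
  let e := LinearEquiv.ofInjectiveOfFinrankEq φ inj (by simp [Complex.finrank_real_complex])
  refine ⟨e.symm.toContinuousLinearEquiv, fun x y => ?_⟩
  rw [← hφ]
  exact e.symm_apply_apply (x, y)

lemma coords_symm {ω₁ ω₂ : ℂ} {Φ : ℂ ≃L[ℝ] ℝ × ℝ} (h : ∀ x y : ℝ, Φ (x * ω₁ + y * ω₂) = (x, y))
    (z : ℂ) : z = (Φ z).1 * ω₁ + (Φ z).2 * ω₂ := by
  apply Φ.injective
  rw [h]

/-- On the boundary of the parallelogram of half-size `N`, `f` is bounded and `g` grows at most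
linearly. -/
lemma Ell.boundary_bound (E : Ell) {Φ : ℂ ≃L[ℝ] ℝ × ℝ}
    (hΦ : ∀ x y : ℝ, Φ (x * E.ω₁ + y * E.ω₂) = (x, y)) :
    ∃ K : ℝ, 1 ≤ K ∧ ∀ N : ℕ, 1 ≤ N → ∀ z, ‖Φ z‖ = N →
      ¬ IsPole E.ω₁ E.ω₂ z ∧ ‖E.f z‖ ≤ K ∧ ‖E.g z‖ ≤ K * N := by
  have pole : ∀ z, IsPole E.ω₁ E.ω₂ z → ∃ m n : ℤ, (Φ z).1 = m + 1 / 2 ∧ (Φ z).2 = n + 1 / 2 := by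
    rintro z ⟨m, n, rfl⟩
    have := hΦ (m + 1 / 2) (n + 1 / 2)
    push_cast at this
    exact ⟨m, n, by rw [this], by rw [this]⟩
  have int_ne : ∀ a m : ℤ, (a : ℝ) ≠ m + 1 / 2 := by
    intro a m h
    have : (2 * a : ℝ) = 2 * m + 1 := by linarith
    have : 2 * a = 2 * m + 1 := by exact_mod_cast this
    omega
  set s : Set ℂ := Φ ⁻¹' (Metric.closedBall 0 1 ∩ {v : ℝ × ℝ | v.1 * v.2 = 0}) with hs
  have hsc : IsCompact s := by
    have : IsCompact (Metric.closedBall (0 : ℝ × ℝ) 1 ∩ {v : ℝ × ℝ | v.1 * v.2 = 0}) :=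
      (isCompact_closedBall _ _).inter_right
        (isClosed_eq (continuous_fst.mul continuous_snd) continuous_const)
    exact Φ.toHomeomorph.isCompact_preimage.2 this
  have hsp : ∀ z ∈ s, ¬ IsPole E.ω₁ E.ω₂ z := by
    intro z hz hp
    obtain ⟨m, n, h1, h2⟩ := pole z hp
    have h3 : (Φ z).1 * (Φ z).2 = 0 := hz.2
    rcases mul_eq_zero.1 h3 with h | h
    · exact int_ne 0 m (by rw [← h1, h]; simp)
    · exact int_ne 0 n (by rw [← h2, h]; simp)
  obtain ⟨A, hA⟩ := hsc.exists_bound_of_continuousOn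
    (fun z hz => (E.f_an z (hsp z hz)).continuousAt.continuousWithinAt)
  obtain ⟨B, hB⟩ := hsc.exists_bound_of_continuousOn
    (fun z hz => (E.g_an z (hsp z hz)).continuousAt.continuousWithinAt)
  refine ⟨1 + |A| + |B| + 2 * (‖E.η₁‖ + ‖E.η₂‖), ?_, ?_⟩
  · have := abs_nonneg A
    have := abs_nonneg B
    have := norm_nonneg E.η₁
    have := norm_nonneg E.η₂
    linarith
  intro N hN z hz
  set x := (Φ z).1 with hx
  set y := (Φ z).2 with hy
  have hzxy : z = x * E.ω₁ + y * E.ω₂ := coords_symm hΦ z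
  have hmax : max |x| |y| = N := by rw [← hz, Prod.norm_def]; rfl
  have hxN : |x| ≤ N := hmax ▸ le_max_left _ _
  have hyN : |y| ≤ N := hmax ▸ le_max_right _ _
  have hinteg : (∃ a : ℤ, x = a) ∨ ∃ a : ℤ, y = a := by
    have key : ∀ w : ℝ, |w| = N → ∃ a : ℤ, w = a := by
      intro w hw
      rcases abs_choice w with h | h
      · exact ⟨N, by rw [h] at hw; simpa using hw⟩
      · exact ⟨-N, by rw [h] at hw; push_cast; linarith⟩
    rcases max_choice |x| |y| with h | h
    · exact Or.inl (key x (by rw [← h, hmax]))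
    · exact Or.inr (key y (by rw [← h, hmax]))
  refine ⟨?_, ?_⟩
  · intro hp
    obtain ⟨m, n, h1, h2⟩ := pole z hp
    rcases hinteg with ⟨a, ha⟩ | ⟨a, ha⟩
    · exact int_ne a m (by rw [← ha, hx, h1])
    · exact int_ne a n (by rw [← ha, hy, h2])
  set w : ℂ := (Int.fract x : ℝ) * E.ω₁ + (Int.fract y : ℝ) * E.ω₂ with hw
  have hzw : z = w + ((⌊x⌋ : ℤ) * E.ω₁ + (⌊y⌋ : ℤ) * E.ω₂) := by
    rw [hzxy, hw]
    have e1 : (x : ℂ) = ((Int.fract x : ℝ) : ℂ) + (⌊x⌋ : ℤ) := by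
      rw [← Complex.ofReal_intCast, ← Complex.ofReal_add, Int.fract_add_floor]
    have e2 : (y : ℂ) = ((Int.fract y : ℝ) : ℂ) + (⌊y⌋ : ℤ) := by
      rw [← Complex.ofReal_intCast, ← Complex.ofReal_add, Int.fract_add_floor]
    conv_lhs => rw [e1, e2]
    ring
  have hws : w ∈ s := by
    have hΦw : Φ w = (Int.fract x, Int.fract y) := hΦ _ _
    refine ⟨?_, ?_⟩
    · rw [mem_closedBall_zero_iff, hΦw, Prod.norm_def]
      refine max_le ?_ ?_
      · simpa [abs_of_nonneg (Int.fract_nonneg x)] using (Int.fract_lt_one x).le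
      · simpa [abs_of_nonneg (Int.fract_nonneg y)] using (Int.fract_lt_one y).le
    · change (Φ w).1 * (Φ w).2 = 0
      rw [hΦw]
      rcases hinteg with ⟨a, ha⟩ | ⟨a, ha⟩ <;> simp [ha]
  have hfl : ∀ u : ℝ, |u| ≤ N → ‖((⌊u⌋ : ℤ) : ℂ)‖ ≤ 2 * N := by
    intro u hu
    rw [Complex.norm_intCast]
    have h1 := Int.floor_le u
    have h2 := Int.lt_floor_add_one u
    have h3 := abs_le.1 hu
    have h4 : (1:ℝ) ≤ N := by exact_mod_cast hN
    rw [abs_le]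
    constructor <;> linarith [h3.1, h3.2]
  have hN1 : (1:ℝ) ≤ N := by exact_mod_cast hN
  have n1 := norm_nonneg E.η₁
  have n2 := norm_nonneg E.η₂
  have hA' := (hA w hws).trans (le_abs_self A)
  have hB' := (hB w hws).trans (le_abs_self B)
  have a0 := abs_nonneg A
  have b0 := abs_nonneg B
  constructor
  · rw [hzw, E.f_per]
    linarith
  · rw [hzw, E.g_per]
    have h1 : ‖((⌊x⌋ : ℤ) : ℂ) * E.η₁‖ ≤ 2 * N * ‖E.η₁‖ := by
      rw [norm_mul]; gcongr; exact hfl x hxN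
    have h2 : ‖((⌊y⌋ : ℤ) : ℂ) * E.η₂‖ ≤ 2 * N * ‖E.η₂‖ := by
      rw [norm_mul]; gcongr; exact hfl y hyN
    have h3 := norm_add_le (E.g w) (((⌊x⌋ : ℤ) : ℂ) * E.η₁ + ((⌊y⌋ : ℤ) : ℂ) * E.η₂)
    have h4 := norm_add_le (((⌊x⌋ : ℤ) : ℂ) * E.η₁) (((⌊y⌋ : ℤ) : ℂ) * E.η₂)
    have h5 : |B| ≤ |B| * N := by nlinarith
    have h6 : 0 ≤ (1 + |A|) * N := by positivity
    nlinarith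

/-- Lower bound for the product of distances to half-integers. -/
lemma prod_half_lower (N : ℕ) (x : ℝ) (m' : ℤ) (hm : |m'| ≤ N) (hx : |x - m'| ≤ 1 / 4) :
    ((N : ℝ) / (4 * Real.exp 1)) ^ (2 * N) ≤
      ∏ m ∈ range (2 * N), |x - ((m : ℝ) - N + 1 / 2)| := by
  obtain ⟨a, ha⟩ : ∃ a : ℕ, (a : ℤ) = N + m' :=
    ⟨(N + m').toNat, Int.toNat_of_nonneg (by have := abs_le.1 hm; omega)⟩
  obtain ⟨b, hb⟩ : ∃ b : ℕ, 2 * N = a + b :=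
    ⟨2 * N - a, by have := abs_le.1 hm; omega⟩
  have hm' : (m' : ℝ) = a - N := by
    have : (a : ℝ) = N + m' := by exact_mod_cast ha
    linarith
  rw [hm'] at hx
  have hx' := abs_le.1 hx
  have h1 : (a.factorial : ℝ) / 4 ^ a ≤ ∏ m ∈ range a, |x - ((m : ℝ) - N + 1 / 2)| := by
    have : (a.factorial : ℝ) / 4 ^ a = ∏ m ∈ range a, (((a - 1 - m : ℕ) : ℝ) + 1) / 4 := by
      rw [Finset.prod_range_reflect (fun m => ((m : ℝ) + 1) / 4) a, Finset.prod_div_distrib,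
        Finset.prod_const, Finset.card_range, ← Finset.prod_range_add_one_eq_factorial]
      push_cast
      rfl
    rw [this]
    refine Finset.prod_le_prod (fun _ _ => by positivity) fun m hm => ?_
    have hma := Finset.mem_range.1 hm
    have e1 : (((a - 1 - m : ℕ) : ℝ) + 1) = a - m := by
      have : a - 1 - m + 1 + m = a := by omega
      have : (((a - 1 - m : ℕ) : ℝ) + 1) + m = a := by exact_mod_cast this
      linarith
    have h1 : (m : ℝ) + 1 ≤ a := by exact_mod_cast hma
    rw [e1]
    refine le_trans ?_ (le_abs_self _)
    linarith [hx'.1]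
  have h2 : (b.factorial : ℝ) / 4 ^ b ≤
      ∏ m ∈ range b, |x - (((a + m : ℕ) : ℝ) - N + 1 / 2)| := by
    have : (b.factorial : ℝ) / 4 ^ b = ∏ m ∈ range b, ((m : ℝ) + 1) / 4 := by
      rw [Finset.prod_div_distrib,
        Finset.prod_const, Finset.card_range, ← Finset.prod_range_add_one_eq_factorial]
      push_cast
      rfl
    rw [this]
    refine Finset.prod_le_prod (fun _ _ => by positivity) fun m hm => ?_
    refine le_trans ?_ (neg_le_abs _)
    push_cast
    have : (0:ℝ) ≤ m := by positivity
    linarith [hx'.2]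
  rw [hb, Finset.prod_range_add]
  refine le_trans ?_ (mul_le_mul h1 h2 (by positivity) (Finset.prod_nonneg fun _ _ => abs_nonneg _))
  have h3 : ((a + b).factorial : ℝ) ≤ 2 ^ (a + b) * (a.factorial * b.factorial) := by
    have := Nat.add_choose_mul_factorial_mul_factorial a b
    rw [← this]
    push_cast
    rw [mul_assoc]
    gcongr
    exact_mod_cast Nat.choose_le_two_pow (a + b) _
  have h4 := Real.pow_div_factorial_le_exp (((a + b : ℕ)) : ℝ) (by positivity) (a + b)
  rw [div_le_iff₀ (by positivity)] at h4
  have h5 : Real.exp (((a + b : ℕ)) : ℝ) = Real.exp 1 ^ (a + b) := by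
    rw [← Real.exp_nat_mul, mul_one]
  have h6 : (N : ℝ) = ((a + b : ℕ) : ℝ) / 2 := by
    rw [← hb]; push_cast; ring
  rw [h6, div_div, div_pow, div_le_iff₀ (by positivity)]
  rw [h5] at h4
  calc ((a + b : ℕ) : ℝ) ^ (a + b) ≤ Real.exp 1 ^ (a + b) * ((a + b).factorial : ℝ) := h4
    _ ≤ Real.exp 1 ^ (a + b) * (2 ^ (a + b) * (a.factorial * b.factorial)) := by gcongr
    _ = _ := by
      rw [mul_pow, mul_pow, pow_add 4 a b, show ((2:ℝ)) ^ (a + b) = 2 ^ a * 2 ^ b from pow_add _ _ _]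
      rw [show ((4:ℝ)) ^ a = 2 ^ a * 2 ^ a by rw [← mul_pow]; norm_num,
        show ((4:ℝ)) ^ b = 2 ^ b * 2 ^ b by rw [← mul_pow]; norm_num]
      field_simp

end Chud

/-! ### Removal of poles and prescribed zeros -/

namespace Chud
open Finset Filter Topology

/-- Removal of all singularities at once: a function that agrees, punctually near each point of
`U`, with an analytic function, has an extension analytic on `U`. -/
lemma exists_analytic_ext (h : ℂ → ℂ) (U : Set ℂ)
    (hU : ∀ x ∈ U, ∃ h' : ℂ → ℂ, AnalyticAt ℂ h' x ∧ h =ᶠ[𝓝[≠] x] h') :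
    ∃ H : ℂ → ℂ, (∀ x ∈ U, AnalyticAt ℂ H x) ∧ ∀ x ∈ U, AnalyticAt ℂ h x → H x = h x := by
  have mer : MeromorphicOn h U := fun x hx => by
    obtain ⟨h', ha, he⟩ := hU x hx
    exact ha.meromorphicAt.congr he.symm
  refine ⟨toMeromorphicNFOn h U, fun x hx => ?_, fun x hx ha => ?_⟩
  · have h1 : MeromorphicNFAt (toMeromorphicNFOn h U) x := meromorphicNFOn_toMeromorphicNFOn h U hx
    rw [← h1.meromorphicOrderAt_nonneg_iff_analyticAt, meromorphicOrderAt_toMeromorphicNFOn mer hx]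
    obtain ⟨h', ha, he⟩ := hU x hx
    rw [meromorphicOrderAt_congr he]
    exact ha.meromorphicOrderAt_nonneg
  · rw [toMeromorphicNFOn_eq_toMeromorphicNFAt mer hx,
      toMeromorphicNFAt_eq_self.2 ha.meromorphicNFAt]

/-- The pole `(m - N + 1/2) ω₁ + (n - N + 1/2) ω₂`. -/
noncomputable def Ell.pt (E : Ell) (N : ℕ) (v : ℕ × ℕ) : ℂ :=
  (((v.1 : ℝ) - N + 1 / 2 : ℝ) : ℂ) * E.ω₁ + (((v.2 : ℝ) - N + 1 / 2 : ℝ) : ℂ) * E.ω₂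

/-- The polynomial with simple zeros at the poles in the parallelogram of half-size `N`. -/
noncomputable def Ell.W (E : Ell) (N : ℕ) (z : ℂ) : ℂ :=
  ∏ v ∈ range (2 * N) ×ˢ range (2 * N), (z - E.pt N v)

/-- The lattice point with coordinates `(m, n)`. -/
noncomputable def Ell.lat (E : Ell) (v : ℤ × ℤ) : ℂ := v.1 * E.ω₁ + v.2 * E.ω₂

/-- Lattice points with coordinates of absolute value less than `S`. -/
noncomputable def grid (S : ℕ) : Finset (ℤ × ℤ) := Finset.Ioo (-(S : ℤ)) S ×ˢ Finset.Ioo (-(S : ℤ)) S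

lemma card_grid {S : ℕ} (hS : 1 ≤ S) : S ^ 2 ≤ (grid S).card := by
  rw [grid, Finset.card_product, Int.card_Ioo, sq]
  have : S ≤ ((S : ℤ) - -(S : ℤ) - 1).toNat := by omega
  exact Nat.mul_le_mul this this

/-- At a pole, multiplication by `(z - p) ^ (2 L + M)` makes the auxiliary function analytic. -/
lemma Ell.aux_pole (E : Ell) (L M : ℕ) (P : ℕ → ℕ → ℕ → ℂ) (p : ℂ) (hp : IsPole E.ω₁ E.ω₂ p) :
    ∃ F : ℂ → ℂ, AnalyticAt ℂ F p ∧
      (fun z => E.aux L M P z * (z - p) ^ (2 * L + M)) =ᶠ[𝓝[≠] p] F := by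
  obtain ⟨f₁, hf, hf'⟩ := E.f_ord p hp
  obtain ⟨g₁, hg, hg'⟩ := E.g_ord p hp
  refine ⟨fun z => ∑ i ∈ range M, ∑ j ∈ range L, ∑ k ∈ range M, P i j k *
    (z ^ i * f₁ z ^ j * g₁ z ^ k * (z - p) ^ (2 * L + M - 2 * j - k)), by fun_prop, ?_⟩
  filter_upwards [hf', hg'] with z h1 h2
  rw [Ell.aux, Finset.sum_mul]
  refine Finset.sum_congr rfl fun i hi => ?_
  rw [Finset.sum_mul]
  refine Finset.sum_congr rfl fun j hj => ?_
  rw [Finset.sum_mul]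
  refine Finset.sum_congr rfl fun k hk => ?_
  rw [Finset.mem_range] at hi hj hk
  rw [← h1, ← h2]
  have : (z - p) ^ (2 * L + M) = (z - p) ^ (2 * j) * (z - p) ^ k *
      (z - p) ^ (2 * L + M - 2 * j - k) := by
    rw [← pow_add, ← pow_add]; congr 1; omega
  rw [this, pow_mul, mul_pow, mul_pow]
  ring

/-- The quotient of the auxiliary function by its prescribed zeros, with its poles removed. -/
lemma Ell.exists_quotient (E : Ell) {Φ : ℂ ≃L[ℝ] ℝ × ℝ}
    (hΦ : ∀ x y : ℝ, Φ (x * E.ω₁ + y * E.ω₂) = (x, y)) (L M S T N : ℕ)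
    (P : ℕ → ℕ → ℕ → ℂ)
    (hz : ∀ t < T, ∀ v ∈ grid S, iteratedDeriv t (E.aux L M P) (E.lat v) = 0) :
    ∃ H : ℂ → ℂ, (∀ z, ‖Φ z‖ ≤ N → AnalyticAt ℂ H z) ∧
      ∀ z, ‖Φ z‖ ≤ N → ¬ IsPole E.ω₁ E.ω₂ z → H z * ∏ v ∈ grid S, (z - E.lat v) ^ T
        = E.aux L M P z * E.W N z ^ (2 * L + M) := by
  have pole_pt : ∀ z, ‖Φ z‖ ≤ N → IsPole E.ω₁ E.ω₂ z →
      ∃ v ∈ range (2 * N) ×ˢ range (2 * N), z = E.pt N v := by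
    rintro z hzN ⟨m, n, hmn⟩
    have h1 := hΦ (m + 1 / 2) (n + 1 / 2)
    push_cast at h1
    rw [← hmn] at h1
    rw [h1, Prod.norm_def, max_le_iff] at hzN
    have key : ∀ m : ℤ, ‖((m : ℝ) + 1 / 2)‖ ≤ N → ∃ a : ℕ, a < 2 * N ∧ (a : ℤ) = m + N := by
      intro m hm
      rw [Real.norm_eq_abs, abs_le] at hm
      have h2 : -(N : ℤ) - 1 < m := by
        have : -(N : ℝ) - 1 < m := by linarith
        exact_mod_cast this
      have h3 : m < N := by
        have : (m : ℝ) < N := by linarith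
        exact_mod_cast this
      exact ⟨(m + N).toNat, by omega, by omega⟩
    obtain ⟨a, ha, ham⟩ := key m hzN.1
    obtain ⟨b, hb, hbn⟩ := key n hzN.2
    refine ⟨(a, b), by simp [ha, hb], ?_⟩
    have e1 : (a : ℂ) = m + N := by exact_mod_cast ham
    have e2 : (b : ℂ) = n + N := by exact_mod_cast hbn
    rw [hmn, Ell.pt]
    push_cast
    rw [e1, e2]
    ring
  set D : ℂ → ℂ := fun z => ∏ v ∈ grid S, (z - E.lat v) ^ T with hD
  have Dan : ∀ z, AnalyticAt ℂ D z := fun z => by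
    simp only [hD]
    fun_prop
  have Wan : ∀ z, AnalyticAt ℂ (E.W N) z := fun z => by
    unfold Ell.W
    fun_prop
  have Dne : ∀ z, (∀ v ∈ grid S, z ≠ E.lat v) → D z ≠ 0 := fun z h =>
    Finset.prod_ne_zero_iff.2 fun v hv => pow_ne_zero _ (sub_ne_zero.2 (h v hv))
  obtain ⟨H, hH, hHe⟩ := exists_analytic_ext
    (fun z => E.aux L M P z * E.W N z ^ (2 * L + M) / D z) {z | ‖Φ z‖ ≤ N} (by
    intro x hx
    by_cases hp : IsPole E.ω₁ E.ω₂ x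
    · obtain ⟨F, hF, hF'⟩ := E.aux_pole L M P x hp
      obtain ⟨v, hv, hxv⟩ := pole_pt x hx hp
      have hDx : D x ≠ 0 := Dne x fun w _ hw => E.lattice_not_pole w.1 w.2 (by
        rw [hw] at hp; exact hp)
      refine ⟨fun z => F z * (∏ w ∈ (range (2 * N) ×ˢ range (2 * N)).erase v,
        (z - E.pt N w)) ^ (2 * L + M) / D z, ?_, ?_⟩
      · exact (hF.mul (by fun_prop)).div (Dan x) hDx
      · filter_upwards [hF'] with z hz
        rw [← hz, Ell.W, ← Finset.mul_prod_erase _ _ hv, hxv, mul_pow]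
        ring
    · have hFa := E.aux_analytic L M P hp
      by_cases hg : ∃ v ∈ grid S, x = E.lat v
      · obtain ⟨v, hv, rfl⟩ := hg
        have ho : (T : ℕ∞) ≤ analyticOrderAt (E.aux L M P) (E.lat v) :=
          (natCast_le_analyticOrderAt_iff_iteratedDeriv_eq_zero hFa).2 fun t ht => hz t ht v hv
        obtain ⟨F₁, hF₁, he⟩ := (natCast_le_analyticOrderAt hFa).1 ho
        refine ⟨fun z => F₁ z * E.W N z ^ (2 * L + M) /
          ∏ w ∈ (grid S).erase v, (z - E.lat w) ^ T, ?_, ?_⟩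
        · refine (hF₁.mul ((Wan _).pow _)).div (by fun_prop) ?_
          refine Finset.prod_ne_zero_iff.2 fun w hw => pow_ne_zero _ (sub_ne_zero.2 fun hvw => ?_)
          have h1 := hΦ v.1 v.2
          have h2 := hΦ w.1 w.2
          push_cast at h1 h2
          have h3 : ((v.1 : ℝ), (v.2 : ℝ)) = ((w.1 : ℝ), (w.2 : ℝ)) := by
            rw [← h1, ← h2]; exact congrArg Φ hvw
          have h4 : (v.1 : ℝ) = w.1 := congrArg Prod.fst h3
          have h5 : (v.2 : ℝ) = w.2 := congrArg Prod.snd h3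
          exact (Finset.mem_erase.1 hw).1
            (Prod.ext (by exact_mod_cast h4.symm) (by exact_mod_cast h5.symm))
        · filter_upwards [self_mem_nhdsWithin, he.filter_mono nhdsWithin_le_nhds] with z hzne hz'
          have hne : (z - E.lat v) ^ T ≠ 0 := pow_ne_zero _ (sub_ne_zero.2 hzne)
          simp only [hD]
          rw [← Finset.mul_prod_erase _ _ hv, hz', smul_eq_mul, mul_assoc,
            mul_div_mul_left _ _ hne]
      · push Not at hg
        exact ⟨_, (hFa.mul ((Wan x).pow _)).div (Dan x) (Dne x hg), Eventually.of_forall fun _ => rfl⟩)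
  refine ⟨H, hH, fun z hz' hp => ?_⟩
  have hFa := E.aux_analytic L M P hp
  by_cases hg : D z = 0
  · change H z * D z = _
    rw [hg, mul_zero]
    obtain ⟨v, hv, hv0⟩ := Finset.prod_eq_zero_iff.1 hg
    have hT : 0 < T := by
      rcases Nat.eq_zero_or_pos T with rfl | h
      · simp at hv0
      · exact h
    have hzv : z = E.lat v := sub_eq_zero.1 (pow_eq_zero_iff (hT.ne')|>.1 hv0)
    have := hz 0 hT v hv
    rw [iteratedDeriv_zero, ← hzv] at this
    rw [this, zero_mul]
  · rw [hHe z hz' ((hFa.mul ((Wan z).pow _)).div (Dan z) hg)]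
    exact div_mul_cancel₀ _ hg

end Chud

namespace Chud
open Finset Filter Topology

lemma norm_prod_le_pow {ι : Type*} (s : Finset ι) (f : ι → ℂ) (b : ℝ) (h : ∀ i ∈ s, ‖f i‖ ≤ b) :
    ‖∏ i ∈ s, f i‖ ≤ b ^ s.card := by
  rw [norm_prod, ← Finset.prod_const]
  exact Finset.prod_le_prod (fun i _ => norm_nonneg _) h

lemma pow_le_norm_prod {ι : Type*} (s : Finset ι) (f : ι → ℂ) (b : ℝ) (hb : 0 ≤ b)
    (h : ∀ i ∈ s, b ≤ ‖f i‖) : b ^ s.card ≤ ‖∏ i ∈ s, f i‖ := by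
  rw [norm_prod, ← Finset.prod_const]
  exact Finset.prod_le_prod (fun i _ => hb) h

lemma Ell.coords_pt (E : Ell) {Φ : ℂ ≃L[ℝ] ℝ × ℝ}
    (hΦ : ∀ x y : ℝ, Φ (x * E.ω₁ + y * E.ω₂) = (x, y)) (N : ℕ) (v : ℕ × ℕ) :
    Φ (E.pt N v) = ((v.1 : ℝ) - N + 1 / 2, (v.2 : ℝ) - N + 1 / 2) := hΦ _ _

lemma Ell.coords_lat (E : Ell) {Φ : ℂ ≃L[ℝ] ℝ × ℝ}
    (hΦ : ∀ x y : ℝ, Φ (x * E.ω₁ + y * E.ω₂) = (x, y)) (v : ℤ × ℤ) :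
    Φ (E.lat v) = ((v.1 : ℝ), (v.2 : ℝ)) := by
  have := hΦ v.1 v.2
  push_cast at this
  exact this

lemma norm_pair_le {x y r : ℝ} (hx : |x| ≤ r) (hy : |y| ≤ r) : ‖((x, y) : ℝ × ℝ)‖ ≤ r := by
  rw [Prod.norm_def]
  exact max_le hx hy

/-- Upper bound for the pole polynomial on the parallelogram of half-size `N`. -/
lemma Ell.W_upper (E : Ell) {Φ : ℂ ≃L[ℝ] ℝ × ℝ}
    (hΦ : ∀ x y : ℝ, Φ (x * E.ω₁ + y * E.ω₂) = (x, y)) {b : ℝ} (hb0 : 0 ≤ b)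
    (hb : ∀ z, ‖z‖ ≤ b * ‖Φ z‖) (N : ℕ) (z : ℂ) (hz : ‖Φ z‖ ≤ N) :
    ‖E.W N z‖ ≤ (2 * b * N) ^ (4 * N ^ 2) := by
  have : (range (2 * N) ×ˢ range (2 * N)).card = 4 * N ^ 2 := by
    rw [Finset.card_product, Finset.card_range]; ring
  rw [Ell.W, ← this]
  refine norm_prod_le_pow _ _ _ fun v hv => ?_
  have h1 : ‖Φ (E.pt N v)‖ ≤ N := by
    rw [E.coords_pt hΦ]
    simp only [Finset.mem_product, Finset.mem_range] at hv
    have h1 : (v.1 : ℝ) + 1 ≤ 2 * N := by exact_mod_cast hv.1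
    have h2 : (v.2 : ℝ) + 1 ≤ 2 * N := by exact_mod_cast hv.2
    have h3 : (0 : ℝ) ≤ v.1 := by positivity
    have h4 : (0 : ℝ) ≤ v.2 := by positivity
    refine norm_pair_le ?_ ?_ <;> rw [abs_le] <;> constructor <;> linarith
  have h2 : ‖Φ (z - E.pt N v)‖ ≤ 2 * N := by
    rw [map_sub]
    exact (norm_sub_le _ _).trans (by linarith)
  calc _ ≤ b * ‖Φ (z - E.pt N v)‖ := hb _
    _ ≤ b * (2 * N) := by gcongr
    _ = _ := by ring

/-- Lower bound for the pole polynomial near a lattice point: each factor is at least the distance of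
the first coordinates, so that the product over a row is bounded below by a factorial. -/
lemma Ell.W_lower (E : Ell) {Φ : ℂ ≃L[ℝ] ℝ × ℝ}
    (hΦ : ∀ x y : ℝ, Φ (x * E.ω₁ + y * E.ω₂) = (x, y)) {a : ℝ} (ha0 : 0 < a)
    (ha : ∀ z, ‖Φ z‖ ≤ a * ‖z‖) (N : ℕ) (z : ℂ) (v : ℤ × ℤ) (hv : |v.1| ≤ N)
    (hz : ‖Φ (z - E.lat v)‖ ≤ 1 / 4) :
    (N / (4 * a * Real.exp 1)) ^ (4 * N ^ 2) ≤ ‖E.W N z‖ := by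
  set x := (Φ z).1 with hx
  have hxv : |x - v.1| ≤ 1 / 4 := by
    have : |x - v.1| ≤ ‖Φ (z - E.lat v)‖ := by
      rw [map_sub, E.coords_lat hΦ]
      exact norm_fst_le (Φ z - ((v.1 : ℝ), (v.2 : ℝ)))
    linarith
  have key := prod_half_lower N x v.1 hv hxv
  have h1 : ∏ w ∈ range (2 * N) ×ˢ range (2 * N), (|x - ((w.1 : ℝ) - N + 1 / 2)| / a)
      ≤ ‖E.W N z‖ := by
    rw [Ell.W, norm_prod]
    refine Finset.prod_le_prod (fun _ _ => by positivity) fun w _ => ?_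
    rw [div_le_iff₀ ha0]
    calc _ ≤ ‖Φ (z - E.pt N w)‖ := by
          rw [map_sub, E.coords_pt hΦ]
          exact norm_fst_le (Φ z - (((w.1 : ℝ) - N + 1 / 2), ((w.2 : ℝ) - N + 1 / 2)))
      _ ≤ a * ‖z - E.pt N w‖ := ha _
      _ = _ := mul_comm _ _
  refine le_trans ?_ h1
  rw [Finset.prod_product_right]
  simp only [Finset.prod_const, Finset.card_range]
  rw [Finset.prod_div_distrib, Finset.prod_const, Finset.card_range]
  calc ((N : ℝ) / (4 * a * Real.exp 1)) ^ (4 * N ^ 2)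
      = (((N : ℝ) / (4 * Real.exp 1)) ^ (2 * N) / a ^ (2 * N)) ^ (2 * N) := by
        rw [← div_pow, ← pow_mul, div_div]
        congr 1
        · ring
        · ring
    _ ≤ _ := by gcongr

/-- The product of the prescribed zeros is large on the boundary of the parallelogram of half-size
`A * S`. -/
lemma Ell.D_lower (E : Ell) {Φ : ℂ ≃L[ℝ] ℝ × ℝ}
    (hΦ : ∀ x y : ℝ, Φ (x * E.ω₁ + y * E.ω₂) = (x, y)) {a : ℝ} (ha0 : 0 < a)
    (ha : ∀ z, ‖Φ z‖ ≤ a * ‖z‖) (A S T : ℕ) (hA : 1 ≤ A) (z : ℂ) (hz : ‖Φ z‖ = (A * S : ℕ)) :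
    (((A - 1) * S / a : ℝ)) ^ ((grid S).card * T) ≤ ‖∏ v ∈ grid S, (z - E.lat v) ^ T‖ := by
  have hA' : (1 : ℝ) ≤ A := by exact_mod_cast hA
  rw [Finset.prod_pow, norm_pow, pow_mul]
  have h0 : (0 : ℝ) ≤ (A - 1) * S / a :=
    div_nonneg (mul_nonneg (by linarith) (by positivity)) ha0.le
  refine pow_le_pow_left₀ (pow_nonneg h0 _) (pow_le_norm_prod _ _ _ h0 fun v hv => ?_) _
  have hvS : ‖Φ (E.lat v)‖ ≤ S := by
    rw [E.coords_lat hΦ]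
    simp only [grid, Finset.mem_product, Finset.mem_Ioo] at hv
    refine norm_pair_le ?_ ?_
    · exact_mod_cast (abs_lt.2 hv.1).le
    · exact_mod_cast (abs_lt.2 hv.2).le
  rw [div_le_iff₀ ha0]
  have h1 : ‖Φ z‖ ≤ ‖Φ (z - E.lat v)‖ + ‖Φ (E.lat v)‖ := by
    rw [map_sub]; exact norm_le_norm_sub_add _ _
  have h2 := ha (z - E.lat v)
  rw [hz] at h1
  push_cast at h1
  nlinarith

/-- The product of the prescribed zeros is comparatively small near the lattice points of size at
most `S`. -/
lemma Ell.D_upper (E : Ell) {Φ : ℂ ≃L[ℝ] ℝ × ℝ}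
    (hΦ : ∀ x y : ℝ, Φ (x * E.ω₁ + y * E.ω₂) = (x, y)) {b : ℝ} (hb0 : 0 ≤ b)
    (hb : ∀ z, ‖z‖ ≤ b * ‖Φ z‖) (S T : ℕ) (z : ℂ) (v : ℤ × ℤ) (hv : |v.1| ≤ S) (hv' : |v.2| ≤ S)
    (hz : ‖Φ (z - E.lat v)‖ ≤ 1 / 4) :
    ‖∏ v ∈ grid S, (z - E.lat v) ^ T‖ ≤ (2 * b * S) ^ ((grid S).card * T) := by
  rw [Finset.prod_pow, norm_pow, pow_mul]
  refine pow_le_pow_left₀ (norm_nonneg _) (norm_prod_le_pow _ _ _ fun w hw => ?_) _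
  simp only [grid, Finset.mem_product, Finset.mem_Ioo] at hw
  rw [abs_le] at hv hv'
  have e1 : ∀ x y : ℤ, -(S : ℤ) < y ∧ y < S → -(S : ℤ) ≤ x ∧ x ≤ S →
      |(x : ℝ) - y| ≤ 2 * S - 1 := by
    intro x y h1 h2
    have : |x - y| ≤ 2 * S - 1 := by rw [abs_le]; constructor <;> omega
    exact_mod_cast this
  have h1 : ‖Φ (E.lat v - E.lat w)‖ ≤ 2 * S - 1 := by
    rw [map_sub, E.coords_lat hΦ, E.coords_lat hΦ, Prod.mk_sub_mk]
    exact norm_pair_le (e1 _ _ hw.1 hv) (e1 _ _ hw.2 hv')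
  have h2 : ‖Φ (z - E.lat w)‖ ≤ 2 * S := by
    have : z - E.lat w = (z - E.lat v) + (E.lat v - E.lat w) := by ring
    rw [this, map_add]
    exact (norm_add_le _ _).trans (by linarith)
  calc _ ≤ b * ‖Φ (z - E.lat w)‖ := hb _
    _ ≤ b * (2 * S) := by gcongr
    _ = _ := by ring

lemma Ell.aux_upper (E : Ell) (L M : ℕ) (P : ℕ → ℕ → ℕ → ℂ) (B R K₀ : ℝ) (hB : ∀ i j k, ‖P i j k‖ ≤ B)
    (hK : 1 ≤ K₀) (hR : 1 ≤ R) (z : ℂ) (hz : ‖z‖ ≤ R) (hf : ‖E.f z‖ ≤ K₀) (hg : ‖E.g z‖ ≤ R) :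
    ‖E.aux L M P z‖ ≤ B * M ^ 2 * L * R ^ (2 * M) * K₀ ^ L := by
  have hB0 : 0 ≤ B := (norm_nonneg _).trans (hB 0 0 0)
  have h1 : ∀ i ∈ range M, ∀ j ∈ range L, ∀ k ∈ range M,
      ‖P i j k * (z ^ i * E.f z ^ j * E.g z ^ k)‖ ≤ B * (R ^ M * K₀ ^ L * R ^ M) := by
    intro i hi j hj k hk
    rw [Finset.mem_range] at hi hj hk
    rw [norm_mul, norm_mul, norm_mul, norm_pow, norm_pow, norm_pow]
    have a1 : ‖z‖ ^ i ≤ R ^ M := (pow_le_pow_left₀ (norm_nonneg _) hz _).trans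
      (pow_le_pow_right₀ hR hi.le)
    have a2 : ‖E.f z‖ ^ j ≤ K₀ ^ L := (pow_le_pow_left₀ (norm_nonneg _) hf _).trans
      (pow_le_pow_right₀ hK hj.le)
    have a3 : ‖E.g z‖ ^ k ≤ R ^ M := (pow_le_pow_left₀ (norm_nonneg _) hg _).trans
      (pow_le_pow_right₀ hR hk.le)
    have := hB i j k
    gcongr
  calc _ ≤ ∑ i ∈ range M, ∑ j ∈ range L, ∑ k ∈ range M, B * (R ^ M * K₀ ^ L * R ^ M) :=
        norm_sum_le_of_le _ fun i hi => norm_sum_le_of_le _ fun j hj =>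
          norm_sum_le_of_le _ fun k hk => h1 i hi j hj k hk
    _ = _ := by
        simp only [Finset.sum_const, Finset.card_range, nsmul_eq_mul]
        rw [two_mul M, pow_add]
        ring

end Chud

/-! ### Extrapolation -/

namespace Chud
open Finset Filter Topology

lemma extrapolation_arith {a b X F : ℝ} (ha : 1 ≤ a) (hb : 1 ≤ b) (hX : 0 ≤ X) {A S L M ℓ c : ℕ}
    (hA1 : 1 ≤ A) (hA : 2 * a * b * Real.exp 1 ≤ (A : ℝ) - 1) (hS : 1 ≤ S) (hML : M ≤ L)
    (hc : S ^ 2 ≤ c)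
    (hℓ : 12 * Real.log (8 * a * b * Real.exp 1) * A ^ 2 + 1 ≤ ℓ)
    (h : F * ((A * S : ℕ) / (4 * a * Real.exp 1)) ^ (4 * (A * S) ^ 2 * (2 * L + M)) ≤
      X * (2 * b * (A * S : ℕ)) ^ (4 * (A * S) ^ 2 * (2 * L + M)) / (((A - 1) * S / a : ℝ)) ^ (c * (ℓ * L))
        * (2 * b * S) ^ (c * (ℓ * L))) :
    F ≤ X * Real.exp (-(L * S ^ 2)) := by
  have hS' : (1 : ℝ) ≤ S := by exact_mod_cast hS
  have hA' : (1 : ℝ) ≤ A := by exact_mod_cast hA1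
  have he : 0 < Real.exp 1 := Real.exp_pos 1
  have he1 : 1 ≤ Real.exp 1 := Real.one_le_exp zero_le_one
  have hA2 : 0 < (A : ℝ) - 1 := lt_of_lt_of_le (by positivity) hA
  set w := 8 * a * b * Real.exp 1 with hw
  have hw1 : 1 ≤ w := by
    have : 1 ≤ a * b := one_le_mul_of_one_le_of_one_le ha hb
    have : 1 ≤ a * b * Real.exp 1 := one_le_mul_of_one_le_of_one_le this he1
    rw [hw]; nlinarith
  have hlog : 0 ≤ Real.log w := Real.log_nonneg hw1
  set n := 4 * (A * S) ^ 2 * (2 * L + M) with hn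
  have e1 : 2 * b * (A * S : ℕ) = w * (((A * S : ℕ) : ℝ) / (4 * a * Real.exp 1)) := by
    rw [hw]; field_simp; ring
  have e2 : 2 * b * S ≤ Real.exp (-1) * (((A - 1) * S / a : ℝ)) := by
    rw [Real.exp_neg, ← div_eq_inv_mul, div_div, le_div_iff₀ (by positivity)]
    nlinarith
  have pos1 : 0 < (((A * S : ℕ) : ℝ) / (4 * a * Real.exp 1)) ^ n := by
    have : (0 : ℝ) < (A * S : ℕ) := by push_cast; positivity
    positivity
  have pos2 : 0 < (((A - 1) * S / a : ℝ)) ^ (c * (ℓ * L)) := by positivity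
  have h3 : (2 * b * S) ^ (c * (ℓ * L)) ≤
      Real.exp (-1) ^ (c * (ℓ * L)) * (((A - 1) * S / a : ℝ)) ^ (c * (ℓ * L)) := by
    rw [← mul_pow]
    exact pow_le_pow_left₀ (by positivity) e2 _
  have h4 : F ≤ X * (w ^ n * Real.exp (-1) ^ (c * (ℓ * L))) := by
    refine le_of_mul_le_mul_right (h.trans ?_) pos1
    rw [e1, mul_pow w, div_mul_eq_mul_div, div_le_iff₀ pos2]
    calc _ ≤ X * (w ^ n * (((A * S : ℕ) : ℝ) / (4 * a * Real.exp 1)) ^ n) *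
          (Real.exp (-1) ^ (c * (ℓ * L)) * (((A - 1) * S / a : ℝ)) ^ (c * (ℓ * L))) := by gcongr
      _ = _ := by ring
  refine h4.trans (mul_le_mul_of_nonneg_left ?_ hX)
  have h5 : w ^ n = Real.exp (n * Real.log w) := by
    rw [Real.exp_nat_mul, Real.exp_log (by linarith)]
  rw [h5, ← Real.exp_nat_mul, ← Real.exp_add]
  refine Real.exp_le_exp.2 ?_
  have h6 : (n : ℝ) ≤ 12 * A ^ 2 * S ^ 2 * L := by
    have : n ≤ 12 * A ^ 2 * S ^ 2 * L := by
      rw [hn]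
      calc _ ≤ 4 * (A * S) ^ 2 * (2 * L + L) := by gcongr
        _ = _ := by ring
    exact_mod_cast this
  have h7 : ((c * (ℓ * L) : ℕ) : ℝ) ≥ S ^ 2 * (12 * Real.log w * A ^ 2 + 1) * L := by
    have hc' : (S : ℝ) ^ 2 ≤ c := by exact_mod_cast hc
    push_cast
    calc _ ≤ (c : ℝ) * ℓ * L := by gcongr
      _ = _ := by ring
  nlinarith [mul_le_mul_of_nonneg_right h6 hlog]

/-- Extrapolation: if the auxiliary function vanishes to order `ℓ L` at all lattice points of size
less than `S`, then its Taylor coefficients at the lattice points of size at most `S` are small.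
This is the maximum principle for the quotient of the function by its prescribed zeros, on a
parallelogram of size proportional to `S` after removal of the poles. -/
theorem Ell.extrapolate (E : Ell) : ∃ K : ℝ, 1 ≤ K ∧ ∃ ℓ₀ : ℕ, ∀ ℓ ≥ ℓ₀, ∀ L M S : ℕ, M ≤ L → 1 ≤ S →
    ∀ (P : ℕ → ℕ → ℕ → ℂ) (B : ℝ), (∀ i j k, ‖P i j k‖ ≤ B) →
    (∀ t < ℓ * L, ∀ v ∈ grid S, iteratedDeriv t (E.aux L M P) (E.lat v) = 0) →
    ∀ (t : ℕ) (v : ℤ × ℤ), |v.1| ≤ S → |v.2| ≤ S →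
      ‖iteratedDeriv t (E.aux L M P) (E.lat v)‖ ≤ t.factorial * K ^ t *
        (B * M ^ 2 * L * (K * S) ^ (2 * M) * K ^ L * Real.exp (-(L * S ^ 2))) := by
  obtain ⟨Φ, hΦ⟩ := exists_coords E.ω₁ E.ω₂ E.indep
  obtain ⟨K₀, hK₀, hbd⟩ := E.boundary_bound hΦ
  set a : ℝ := max 1 ‖(Φ : ℂ →L[ℝ] ℝ × ℝ)‖ with ha_def
  set b : ℝ := max 1 ‖(Φ.symm : ℝ × ℝ →L[ℝ] ℂ)‖ with hb_def
  have ha1 : 1 ≤ a := le_max_left _ _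
  have hb1 : 1 ≤ b := le_max_left _ _
  have ha : ∀ z, ‖Φ z‖ ≤ a * ‖z‖ := fun z =>
    ((Φ : ℂ →L[ℝ] ℝ × ℝ).le_opNorm z).trans (by gcongr; exact le_max_right _ _)
  have hb : ∀ z, ‖z‖ ≤ b * ‖Φ z‖ := fun z => by
    have := (Φ.symm : ℝ × ℝ →L[ℝ] ℂ).le_opNorm (Φ z)
    rw [ContinuousLinearEquiv.coe_coe, Φ.symm_apply_apply] at this
    exact this.trans (by gcongr; exact le_max_right _ _)
  obtain ⟨A, hA⟩ := exists_nat_ge (2 * a * b * Real.exp 1 + 1)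
  have hA1 : 1 ≤ A := by
    have : (1 : ℝ) ≤ A := le_trans (by have := Real.exp_pos 1; nlinarith [mul_nonneg (mul_nonneg (zero_le_one.trans ha1) (zero_le_one.trans hb1)) this.le]) hA
    exact_mod_cast this
  have hA1' : (1 : ℝ) ≤ A := by exact_mod_cast hA1
  obtain ⟨ℓ₀, hℓ₀⟩ := exists_nat_ge (12 * Real.log (8 * a * b * Real.exp 1) * A ^ 2 + 1)
  set R₀ : ℝ := max b K₀ with hR₀
  have hR₀1 : 1 ≤ R₀ := hb1.trans (le_max_left _ _)
  refine ⟨max (max (R₀ * A) K₀) (4 * a), (hK₀.trans (le_max_right _ _)).trans (le_max_left _ _),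
    ℓ₀, ?_⟩
  intro ℓ hℓ L M S hML hS P B hB hvan t v hv1 hv2
  set K := max (max (R₀ * A) K₀) (4 * a) with hK
  have hKR : R₀ * A ≤ K := (le_max_left _ _).trans (le_max_left _ _)
  have hKK : K₀ ≤ K := (le_max_right _ _).trans (le_max_left _ _)
  have hKa : 4 * a ≤ K := le_max_right _ _
  have hS' : (1 : ℝ) ≤ S := by exact_mod_cast hS
  have hB0 : 0 ≤ B := (norm_nonneg _).trans (hB 0 0 0)
  set N := A * S with hN
  have hN1 : 1 ≤ N := Nat.mul_pos hA1 hS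
  have hN1' : (1 : ℝ) ≤ N := by exact_mod_cast hN1
  obtain ⟨H, Han, HD⟩ := E.exists_quotient hΦ L M S (ℓ * L) N P hvan
  set X : ℝ := B * M ^ 2 * L * (K * S) ^ (2 * M) * K ^ L with hX
  have hK0 : 0 ≤ K := (zero_le_one.trans hK₀).trans hKK
  have hX0 : 0 ≤ X := by positivity
  have hA2 : 2 * a * b * Real.exp 1 ≤ (A : ℝ) - 1 := by linarith
  have hA3 : 0 < (A : ℝ) - 1 := lt_of_lt_of_le (by positivity) hA2
  set U : Set ℂ := {z | ‖Φ z‖ < N} with hU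
  have hUb : Bornology.IsBounded U := by
    refine (Metric.isBounded_ball (x := (0 : ℂ)) (r := b * N + 1)).subset fun z hz => ?_
    rw [Metric.mem_ball, dist_zero_right]
    have h1 := hb z
    have h2 : ‖Φ z‖ < N := hz
    nlinarith
  have hcont : Continuous fun z => ‖Φ z‖ := by fun_prop
  have hUc : closure U ⊆ {z | ‖Φ z‖ ≤ N} := closure_lt_subset_le hcont continuous_const
  have hUf : frontier U ⊆ {z | ‖Φ z‖ = N} := frontier_lt_subset_eq hcont continuous_const
  have Hd : DiffContOnCl ℂ H U := by
    refine DifferentiableOn.diffContOnCl fun z hz => ?_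
    exact (Han z (hUc hz)).differentiableAt.differentiableWithinAt
  set G : ℝ := X * (2 * b * N) ^ (4 * N ^ 2 * (2 * L + M)) /
    (((A - 1) * S / a : ℝ)) ^ ((grid S).card * (ℓ * L)) with hG
  have hpos : 0 < (((A - 1) * S / a : ℝ)) ^ ((grid S).card * (ℓ * L)) := by positivity
  have Hfr : ∀ z ∈ frontier U, ‖H z‖ ≤ G := by
    intro z hz
    have hzN : ‖Φ z‖ = N := hUf hz
    obtain ⟨hp, hf, hg⟩ := hbd N hN1 z hzN
    have h1 := HD z hzN.le hp
    have h2 := E.D_lower hΦ (by linarith) ha A S (ℓ * L) hA1 z hzN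
    have h3 := E.W_upper hΦ (by linarith) hb N z hzN.le
    have h4 := E.aux_upper L M P B (R₀ * N) K₀ hB hK₀ (one_le_mul_of_one_le_of_one_le hR₀1 hN1') z
      ((hb z).trans (by rw [hzN]; gcongr; exact le_max_left _ _)) hf
      (hg.trans (by gcongr; exact le_max_right _ _))
    have h5 : ‖E.aux L M P z‖ ≤ X := by
      refine h4.trans ?_
      have : R₀ * N ≤ K * S := by
        rw [hN]; push_cast
        rw [← mul_assoc]
        gcongr
      rw [hX]
      gcongr
    rw [hG, le_div_iff₀ hpos]
    calc _ ≤ ‖H z‖ * ‖∏ v ∈ grid S, (z - E.lat v) ^ (ℓ * L)‖ := by gcongr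
      _ = ‖E.aux L M P z‖ * ‖E.W N z‖ ^ (2 * L + M) := by rw [← norm_mul, h1, norm_mul, norm_pow]
      _ ≤ X * ((2 * b * N) ^ (4 * N ^ 2)) ^ (2 * L + M) := by gcongr
      _ = _ := by rw [← pow_mul]
  have Hin : ∀ z, ‖Φ z‖ ≤ N → z ∈ U → ‖H z‖ ≤ G := fun z _ hz =>
    Complex.norm_le_of_forall_mem_frontier_norm_le hUb Hd Hfr (subset_closure hz)
  have notpole : ∀ z, ‖Φ (z - E.lat v)‖ ≤ 1 / 4 → ¬ IsPole E.ω₁ E.ω₂ z := by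
    rintro z hz ⟨m, n, hmn⟩
    have h1 := hΦ (m + 1 / 2) (n + 1 / 2)
    push_cast at h1
    rw [← hmn] at h1
    rw [map_sub, h1, E.coords_lat hΦ] at hz
    have h2 : |((m : ℝ) + 1 / 2) - v.1| ≤ 1 / 4 := (norm_fst_le
      ((((m : ℝ) + 1 / 2), ((n : ℝ) + 1 / 2)) - ((v.1 : ℝ), (v.2 : ℝ)))).trans hz
    rw [abs_le] at h2
    have h3 : (v.1 : ℝ) < m + 1 := by linarith
    have h4 : (m : ℝ) < v.1 := by linarith
    have h3 : v.1 < m + 1 := by exact_mod_cast h3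
    have h4 : m < v.1 := by exact_mod_cast h4
    omega
  have main : ∀ z, ‖Φ (z - E.lat v)‖ ≤ 1 / 4 → ‖E.aux L M P z‖ ≤ X * Real.exp (-(L * S ^ 2)) := by
    intro z hz
    have hzlat : ‖Φ (E.lat v)‖ ≤ S := by
      rw [E.coords_lat hΦ]
      exact norm_pair_le (by exact_mod_cast hv1) (by exact_mod_cast hv2)
    have hzU : ‖Φ z‖ < N := by
      have h1 : ‖Φ z‖ ≤ ‖Φ (z - E.lat v)‖ + ‖Φ (E.lat v)‖ := by
        rw [map_sub]; exact norm_le_norm_sub_add _ _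
      have h2 : (2 : ℝ) ≤ A := by
        have : 1 ≤ a * b := one_le_mul_of_one_le_of_one_le ha1 hb1
        have : 1 ≤ a * b * Real.exp 1 :=
          one_le_mul_of_one_le_of_one_le this (Real.one_le_exp zero_le_one)
        linarith
      rw [hN]; push_cast
      nlinarith
    have h1 := HD z hzU.le (notpole z hz)
    have hv1N : |v.1| ≤ (N : ℤ) := hv1.trans (by
      rw [hN]; push_cast
      have : (1 : ℤ) ≤ A := by exact_mod_cast hA1
      nlinarith)
    have h2 := E.W_lower hΦ (by linarith) ha N z v hv1N hz
    have h3 := E.D_upper hΦ (by linarith) hb S (ℓ * L) z v hv1 hv2 hz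
    refine extrapolation_arith ha1 hb1 hX0 hA1 hA2 hS hML (card_grid hS)
      (hℓ₀.trans (by exact_mod_cast hℓ)) ?_
    calc _ = ‖E.aux L M P z‖ * ((N / (4 * a * Real.exp 1)) ^ (4 * N ^ 2)) ^ (2 * L + M) := by
          rw [← pow_mul]
      _ ≤ ‖E.aux L M P z‖ * ‖E.W N z‖ ^ (2 * L + M) := by gcongr
      _ = ‖H z‖ * ‖∏ v ∈ grid S, (z - E.lat v) ^ (ℓ * L)‖ := by
          rw [← norm_mul, h1, norm_mul, norm_pow]
      _ ≤ _ := by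
          have := Hin z hzU.le hzU
          gcongr
  have hr : 0 < 1 / (4 * a) := by positivity
  have hball : ∀ z ∈ Metric.closedBall (E.lat v) (1 / (4 * a)), ‖Φ (z - E.lat v)‖ ≤ 1 / 4 := by
    intro z hz
    rw [Metric.mem_closedBall, dist_eq_norm] at hz
    calc _ ≤ a * ‖z - E.lat v‖ := ha _
      _ ≤ a * (1 / (4 * a)) := by gcongr
      _ = 1 / 4 := by field_simp
  have hd : DiffContOnCl ℂ (E.aux L M P) (Metric.ball (E.lat v) (1 / (4 * a))) := by
    refine DifferentiableOn.diffContOnCl fun z hz => ?_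
    exact (E.aux_analytic L M P (notpole z (hball z
      (Metric.closure_ball_subset_closedBall hz)))).differentiableAt.differentiableWithinAt
  have := Complex.norm_iteratedDeriv_le_of_forall_mem_sphere_norm_le t hr hd
    (fun z hz => main z (hball z (Metric.sphere_subset_closedBall hz)))
  refine this.trans ?_
  rw [one_div, inv_pow, div_inv_eq_mul]
  calc _ = t.factorial * (4 * a) ^ t * (X * Real.exp (-(L * S ^ 2))) := by ring
    _ ≤ _ := by gcongr

end Chud

/-! ### Integer polynomial matrices -/

namespace Chud
open Finset Filter Topology Polynomial

/-- The length of an integer polynomial: the sum of the absolute values of its coefficients. -/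
noncomputable def len (p : ℤ[X]) : ℝ := p.sum fun _ a => |(a : ℝ)|

lemma len_eq (p : ℤ[X]) (s : Finset ℕ) (h : p.support ⊆ s) : len p = ∑ k ∈ s, |(p.coeff k : ℝ)| := by
  rw [len, Polynomial.sum_def]
  refine Finset.sum_subset h fun k _ hk => ?_
  rw [notMem_support_iff.1 hk]; simp

lemma len_nonneg (p : ℤ[X]) : 0 ≤ len p := Finset.sum_nonneg fun _ _ => abs_nonneg _

lemma len_add (p q : ℤ[X]) : len (p + q) ≤ len p + len q := by
  rw [len_eq (p + q) _ Polynomial.support_add, len_eq p _ Finset.subset_union_left,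
    len_eq q _ Finset.subset_union_right, ← Finset.sum_add_distrib]
  refine Finset.sum_le_sum fun k _ => ?_
  rw [coeff_add]; push_cast
  exact abs_add_le _ _

@[simp] lemma len_zero : len 0 = 0 := by simp [len]

lemma len_sum {ι : Type*} (s : Finset ι) (f : ι → ℤ[X]) : len (∑ i ∈ s, f i) ≤ ∑ i ∈ s, len (f i) := by
  classical
  induction s using Finset.induction_on with
  | empty => simp
  | insert a s ha ih =>
    rw [Finset.sum_insert ha, Finset.sum_insert ha]
    exact (len_add _ _).trans (by gcongr)

lemma len_monomial_mul (a : ℤ) (k : ℕ) (q : ℤ[X]) : len (monomial k a * q) ≤ |(a : ℝ)| * len q := by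
  have : (monomial k a * q) = ∑ n ∈ q.support, monomial (k + n) (a * q.coeff n) := by
    conv_lhs => rw [q.as_sum_support, Finset.mul_sum]
    simp only [monomial_mul_monomial]
  rw [this, len, Polynomial.sum_def]
  have h2 := len_sum q.support fun n => monomial (k + n) (a * q.coeff n)
  refine h2.trans ?_
  rw [len, Polynomial.sum_def, Finset.mul_sum]
  refine Finset.sum_le_sum fun n _ => ?_
  rw [len, Polynomial.sum_monomial_index _ _ (by simp)]
  push_cast
  rw [abs_mul]

lemma len_mul (p q : ℤ[X]) : len (p * q) ≤ len p * len q := by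
  conv_lhs => rw [p.as_sum_support, Finset.sum_mul]
  refine (len_sum _ _).trans ?_
  rw [len, Polynomial.sum_def, Finset.sum_mul]
  exact Finset.sum_le_sum fun n _ => len_monomial_mul _ _ _

lemma len_C (a : ℤ) : len (C a) = |(a : ℝ)| := by
  rw [len, Polynomial.sum_C_index (by simp)]

lemma len_X : len (X : ℤ[X]) = 1 := by
  rw [len, ← monomial_one_one_eq_X, Polynomial.sum_monomial_index _ _ (by simp)]; simp

lemma abs_coeff_le_len (p : ℤ[X]) (k : ℕ) : |(p.coeff k : ℝ)| ≤ len p := by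
  rw [len_eq p (insert k p.support) (Finset.subset_insert _ _)]
  exact Finset.single_le_sum (f := fun k => |(p.coeff k : ℝ)|) (fun _ _ => abs_nonneg _)
    (Finset.mem_insert_self _ _)

lemma mah_le_len (p : ℤ[X]) : mah p ≤ len p := by
  refine (mahlerMeasure_le_sum_norm_coeff _).trans ?_
  rw [Polynomial.sum_over_range' _ (by simp) (p.natDegree + 1)
    (Nat.lt_succ_of_le natDegree_map_le), len_eq p (range (p.natDegree + 1))
    supp_subset_range_natDegree_succ]
  refine (Finset.sum_congr rfl fun k _ => ?_).le
  rw [coeff_map, eq_intCast, Complex.norm_intCast]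

lemma norm_aeval_le (θ : ℂ) (p : ℤ[X]) (d : ℕ) (hd : p.natDegree ≤ d) :
    ‖aeval θ p‖ ≤ len p * max 1 ‖θ‖ ^ d := by
  rw [aeval_eq_sum_range, len_eq p (range (p.natDegree + 1)) supp_subset_range_natDegree_succ,
    Finset.sum_mul]
  refine norm_sum_le_of_le _ fun k hk => ?_
  rw [zsmul_eq_mul, norm_mul, Complex.norm_intCast, norm_pow]
  rw [Finset.mem_range] at hk
  gcongr
  calc ‖θ‖ ^ k ≤ max 1 ‖θ‖ ^ k := by gcongr; exact le_max_right _ _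
    _ ≤ _ := pow_le_pow_right₀ (le_max_left _ _) (by omega)

/-- The number `y` acts on the vector `v` as an integer polynomial matrix evaluated at `θ`, of
degree at most `d` and total length at most `H`. -/
def Rp (θ : ℂ) {D : ℕ} (v : Fin D → ℂ) (d : ℕ) (H : ℝ) (y : ℂ) : Prop :=
  ∃ A : Matrix (Fin D) (Fin D) ℤ[X], (∀ i j, (A i j).natDegree ≤ d) ∧
    ∑ i, ∑ j, len (A i j) ≤ H ∧ (A.map (aeval θ)).mulVec v = y • v

section
variable {θ : ℂ} {D : ℕ} {v : Fin D → ℂ}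

lemma Rp.mono {d d' : ℕ} {H H' : ℝ} {y : ℂ} (h : Rp θ v d H y) (hd : d ≤ d') (hH : H ≤ H') :
    Rp θ v d' H' y := by
  obtain ⟨A, h1, h2, h3⟩ := h
  exact ⟨A, fun i j => (h1 i j).trans hd, h2.trans hH, h3⟩

lemma Rp.nonneg {d : ℕ} {H : ℝ} {y : ℂ} (h : Rp θ v d H y) : 0 ≤ H := by
  obtain ⟨A, h1, h2, h3⟩ := h
  exact le_trans (Finset.sum_nonneg fun i _ => Finset.sum_nonneg fun j _ => len_nonneg _) h2

lemma Rp.add {d : ℕ} {H H' : ℝ} {y y' : ℂ} (h : Rp θ v d H y) (h' : Rp θ v d H' y') :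
    Rp θ v d (H + H') (y + y') := by
  obtain ⟨A, h1, h2, h3⟩ := h
  obtain ⟨B, g1, g2, g3⟩ := h'
  refine ⟨A + B, fun i j => (natDegree_add_le _ _).trans (max_le (h1 i j) (g1 i j)), ?_, ?_⟩
  · refine le_trans ?_ (add_le_add h2 g2)
    rw [← Finset.sum_add_distrib]
    refine Finset.sum_le_sum fun i _ => ?_
    rw [← Finset.sum_add_distrib]
    exact Finset.sum_le_sum fun j _ => len_add _ _
  · rw [Matrix.map_add _ (map_add _), Matrix.add_mulVec, h3, g3, add_smul]

lemma Rp.mul {d d' : ℕ} {H H' : ℝ} {y y' : ℂ} (h : Rp θ v d H y) (h' : Rp θ v d' H' y') :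
    Rp θ v (d + d') (H * H') (y * y') := by
  have hH := h.nonneg
  obtain ⟨A, h1, h2, h3⟩ := h
  obtain ⟨B, g1, g2, g3⟩ := h'
  refine ⟨A * B, fun i j => ?_, ?_, ?_⟩
  · rw [Matrix.mul_apply]
    refine natDegree_sum_le_of_forall_le _ _ fun k _ => natDegree_mul_le.trans ?_
    exact add_le_add (h1 i k) (g1 k j)
  · have e1 : ∀ i j, len ((A * B) i j) ≤ ∑ k, len (A i k) * len (B k j) := fun i j => by
      rw [Matrix.mul_apply]
      exact (len_sum _ _).trans (Finset.sum_le_sum fun k _ => len_mul _ _)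
    have e2 : ∀ k, ∑ j, len (B k j) ≤ H' := fun k =>
      (Finset.single_le_sum (f := fun k => ∑ j, len (B k j))
        (fun _ _ => Finset.sum_nonneg fun _ _ => len_nonneg _) (Finset.mem_univ k)).trans g2
    calc ∑ i, ∑ j, len ((A * B) i j) ≤ ∑ i, ∑ j, ∑ k, len (A i k) * len (B k j) :=
          Finset.sum_le_sum fun i _ => Finset.sum_le_sum fun j _ => e1 i j
      _ = ∑ i, ∑ k, len (A i k) * ∑ j, len (B k j) := by
          refine Finset.sum_congr rfl fun i _ => ?_
          rw [Finset.sum_comm]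
          simp_rw [Finset.mul_sum]
      _ ≤ ∑ i, ∑ k, len (A i k) * H' := by
          refine Finset.sum_le_sum fun i _ => Finset.sum_le_sum fun k _ => ?_
          have := len_nonneg (A i k)
          have := e2 k
          gcongr
      _ = (∑ i, ∑ k, len (A i k)) * H' := by simp_rw [Finset.sum_mul]
      _ ≤ H * H' := by
          have : 0 ≤ H' := le_trans (Finset.sum_nonneg fun i _ => Finset.sum_nonneg
            fun j _ => len_nonneg _) g2
          gcongr
  · rw [Matrix.map_mul, ← Matrix.mulVec_mulVec, g3, Matrix.mulVec_smul, h3, smul_smul, mul_comm]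

lemma Rp.poly (p : ℤ[X]) : Rp θ v p.natDegree (D * len p) (aeval θ p) := by
  refine ⟨Matrix.diagonal fun _ => p, fun i j => ?_, ?_, ?_⟩
  · by_cases h : i = j
    · subst h; simp
    · simp [Matrix.diagonal_apply_ne _ h]
  · refine (Finset.sum_congr rfl fun i _ => ?_).le.trans (b := ∑ i : Fin D, len p) (by simp)
    rw [Finset.sum_eq_single i]
    · simp
    · intro j _ h
      rw [Matrix.diagonal_apply_ne _ h.symm, len_zero]
    · simp
  · rw [Matrix.diagonal_map (map_zero _)]
    ext i
    simp [Matrix.mulVec_diagonal]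

lemma Rp.int (n : ℤ) : Rp θ v 0 (D * |(n : ℝ)|) (n : ℂ) := by
  have := Rp.poly (θ := θ) (v := v) (C n)
  rw [natDegree_C, len_C, aeval_C] at this
  simpa using this

lemma Rp.intMul {d : ℕ} {H : ℝ} {y : ℂ} (h : Rp θ v d H y) (n : ℤ) :
    Rp θ v d (|(n : ℝ)| * H) (n * y) := by
  obtain ⟨A, h1, h2, h3⟩ := h
  refine ⟨(C n : ℤ[X]) • A, fun i j => ?_, ?_, ?_⟩
  · rw [Matrix.smul_apply, smul_eq_mul]
    exact (natDegree_C_mul_le _ _).trans (h1 i j)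
  · refine le_trans ?_ (mul_le_mul_of_nonneg_left h2 (abs_nonneg _))
    rw [Finset.mul_sum]
    refine Finset.sum_le_sum fun i _ => ?_
    rw [Finset.mul_sum]
    refine Finset.sum_le_sum fun j _ => ?_
    rw [Matrix.smul_apply, smul_eq_mul, ← len_C]
    exact len_mul _ _
  · have : ((C n : ℤ[X]) • A).map (aeval θ) = (n : ℂ) • A.map (aeval θ) := by
      ext i j; simp
    rw [this, Matrix.smul_mulVec, h3, smul_smul]

lemma Rp.zero (d : ℕ) : Rp θ v d 0 0 :=
  ⟨0, by simp, by simp, by ext; simp⟩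

lemma Rp.sum {ι : Type*} (s : Finset ι) {d : ℕ} {H : ι → ℝ} {y : ι → ℂ}
    (h : ∀ i ∈ s, Rp θ v d (H i) (y i)) : Rp θ v d (∑ i ∈ s, H i) (∑ i ∈ s, y i) := by
  classical
  induction s using Finset.induction_on with
  | empty => simpa using Rp.zero d
  | insert a s ha ih =>
    rw [Finset.sum_insert ha, Finset.sum_insert ha]
    exact (h a (Finset.mem_insert_self _ _)).add
      (ih fun i hi => h i (Finset.mem_insert_of_mem hi))

lemma Rp.pow {d : ℕ} {H : ℝ} {y : ℂ} (h : Rp θ v d H y) (n : ℕ) :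
    Rp θ v (n * d) ((D + 1) * H ^ n) (y ^ n) := by
  induction n with
  | zero => simpa using (Rp.int (θ := θ) (v := v) 1).mono le_rfl (by simp)
  | succ n ih =>
    rw [pow_succ]
    exact (ih.mul h).mono (by ring_nf; rfl) (by rw [mul_assoc])

/-- A nonzero number represented by a small matrix yields, by taking the determinant, an integer
polynomial that is small at `θ`. -/
lemma Rp.exists_poly (hv : ∀ r : Fin D → ℤ[X], ∑ i, aeval θ (r i) * v i = 0 → r = 0)
    (hD : 0 < D) : ∃ c : ℝ, 0 < c ∧ ∀ (d : ℕ) (H : ℝ) (y : ℂ), 1 ≤ H → y ≠ 0 → Rp θ v d H y →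
      ∃ P : ℤ[X], P ≠ 0 ∧ P.natDegree ≤ D * d ∧ mah P ≤ D.factorial * H ^ D ∧
        ‖aeval θ P‖ ≤ c * ‖y‖ * (H * max 1 ‖θ‖ ^ d) ^ D := by
  let i₀ : Fin D := ⟨0, hD⟩
  have hv0 : ∃ i, v i ≠ 0 := by
    by_contra! h
    have := hv (fun _ => 1) (by simp [h])
    exact one_ne_zero (congrFun this i₀)
  obtain ⟨i₁, hi₁⟩ := hv0
  have hpos : 0 < ∑ j, ‖v j‖ := lt_of_lt_of_le (norm_pos_iff.2 hi₁)
    (Finset.single_le_sum (f := fun j => ‖v j‖) (fun _ _ => norm_nonneg _) (Finset.mem_univ i₁))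
  refine ⟨D.factorial * (∑ j, ‖v j‖) / ‖v i₁‖, by positivity, ?_⟩
  rintro d H y hH hy ⟨A, h1, h2, h3⟩
  have hlen : ∀ i j, len (A i j) ≤ H := fun i j =>
    ((Finset.single_le_sum (f := fun j => len (A i j)) (fun _ _ => len_nonneg _)
      (Finset.mem_univ j)).trans (Finset.single_le_sum (f := fun i => ∑ j, len (A i j))
      (fun _ _ => Finset.sum_nonneg fun _ _ => len_nonneg _) (Finset.mem_univ i))).trans h2
  refine ⟨A.det, ?_, ?_, ?_, ?_⟩
  · intro hdet
    obtain ⟨w, hw, hwA⟩ := Matrix.exists_vecMul_eq_zero_iff.2 hdet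
    refine hw (hv w ?_)
    have e1 : (fun i => aeval θ (w i)) ⬝ᵥ ((A.map (aeval θ)).mulVec v) = 0 := by
      rw [Matrix.dotProduct_mulVec]
      have : Matrix.vecMul (fun i => aeval θ (w i)) (A.map (aeval θ)) = 0 := by
        have := congrArg (fun u : Fin D → ℤ[X] => fun i => aeval θ (u i)) hwA
        ext j
        have := congrFun this j
        simp only [Matrix.vecMul, dotProduct, map_sum, map_mul, Pi.zero_apply, map_zero] at this
        simpa [Matrix.vecMul, dotProduct] using this
      rw [this, zero_dotProduct]
    rw [h3, dotProduct_smul, smul_eq_mul] at e1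
    exact (mul_eq_zero.1 e1).resolve_left hy
  · rw [Matrix.det_apply]
    refine natDegree_sum_le_of_forall_le _ _ fun σ _ => ?_
    refine (natDegree_smul_le _ _).trans ((natDegree_prod_le _ _).trans ?_)
    exact (Finset.sum_le_sum fun i _ => h1 _ _).trans (by simp)
  · refine (mah_le_len _).trans ?_
    rw [Matrix.det_apply]
    refine (len_sum _ _).trans ?_
    have e1 : ∀ s : Finset (Fin D), ∀ σ : Equiv.Perm (Fin D),
        len (∏ i ∈ s, A (σ i) i) ≤ H ^ s.card := by
      intro s σ
      induction s using Finset.induction_on with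
      | empty =>
        have : len (1 : ℤ[X]) = 1 := by rw [← C_1, len_C]; simp
        simp [this]
      | insert a s ha ih =>
        rw [Finset.prod_insert ha, Finset.card_insert_of_notMem ha, pow_succ, mul_comm]
        refine (len_mul _ _).trans ?_
        have := hlen (σ a) a
        have := len_nonneg (A (σ a) a)
        gcongr
    have e2 : ∀ σ : Equiv.Perm (Fin D), len (Equiv.Perm.sign σ • ∏ i, A (σ i) i) ≤ H ^ D := by
      intro σ
      have e3 := e1 Finset.univ σ
      rw [Finset.card_univ, Fintype.card_fin] at e3
      rcases Int.units_eq_one_or (Equiv.Perm.sign σ) with h | h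
      · rwa [h, one_smul]
      · rw [h]
        have : (-1 : ℤˣ) • ∏ i, A (σ i) i = C (-1) * ∏ i, A (σ i) i := by
          simp [Units.smul_def]
        rw [this]
        refine (len_mul _ _).trans ?_
        rw [len_C]; simpa using e3
    refine (Finset.sum_le_sum fun σ _ => e2 σ).trans ?_
    rw [Finset.sum_const, Finset.card_univ, Fintype.card_perm, Fintype.card_fin, nsmul_eq_mul]
  · set B : Matrix (Fin D) (Fin D) ℂ := A.map (aeval θ) with hB
    set X : ℝ := H * max 1 ‖θ‖ ^ d with hX
    have hm1 : 1 ≤ max 1 ‖θ‖ := le_max_left _ _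
    have hX1 : 1 ≤ X := one_le_mul_of_one_le_of_one_le hH (one_le_pow₀ hm1)
    have hBX : ∀ i j, ‖B i j‖ ≤ X := fun i j => by
      refine (norm_aeval_le θ (A i j) d (h1 i j)).trans ?_
      have := hlen i j
      rw [hX]; gcongr
    have hadj : ∀ i j, ‖B.adjugate i j‖ ≤ D.factorial * X ^ D := fun i j => by
      rw [Matrix.adjugate_apply]
      have := Matrix.det_le (A := B.updateRow j (Pi.single i 1))
        (abv := ⟨⟨norm, norm_mul⟩, norm_nonneg, fun _ => norm_eq_zero, norm_add_le⟩) (x := X) ?_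
      · simpa using this
      · intro k l
        change ‖B.updateRow j (Pi.single i 1) k l‖ ≤ X
        rw [Matrix.updateRow_apply]
        split_ifs with h
        · by_cases hl : l = i
          · subst hl; simpa using hX1
          · rw [Pi.single_eq_of_ne hl]; simp; linarith
        · exact hBX k l
    have e1 : aeval θ A.det = B.det := by
      rw [hB]; exact AlgHom.map_det (aeval θ) A
    have e2 : B.det • v = y • (B.adjugate).mulVec v := by
      rw [← Matrix.mulVec_smul, ← h3, Matrix.mulVec_mulVec, Matrix.adjugate_mul, Matrix.smul_mulVec,
        Matrix.one_mulVec]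
    have e3 : B.det * v i₁ = y * ∑ j, B.adjugate i₁ j * v j := by
      have := congrFun e2 i₁
      simpa [Matrix.mulVec, dotProduct] using this
    have e4 : ‖B.det‖ * ‖v i₁‖ ≤ ‖y‖ * (D.factorial * X ^ D * ∑ j, ‖v j‖) := by
      rw [← norm_mul, e3, norm_mul, Finset.mul_sum]
      gcongr
      refine norm_sum_le_of_le _ fun j _ => ?_
      rw [norm_mul]
      have := hadj i₁ j
      gcongr
    rw [e1]
    have hp : 0 < ‖v i₁‖ := norm_pos_iff.2 hi₁
    rw [← le_div_iff₀ hp] at e4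
    refine e4.trans (le_of_eq ?_)
    field_simp

end

end Chud

/-! ### Representation of algebraic numbers by matrices -/

namespace Chud
open Finset Filter Topology Polynomial IntermediateField

lemma exists_int_mul (r : ℚ[X]) : ∃ b : ℤ, b ≠ 0 ∧ ∃ p : ℤ[X],
    ∀ θ : ℂ, aeval θ p = b * aeval θ r := by
  obtain ⟨b, hbm, hb⟩ := IsLocalization.integerNormalization_spec (nonZeroDivisors ℤ) r
  refine ⟨b, nonZeroDivisors.ne_zero hbm,
    IsLocalization.integerNormalization (nonZeroDivisors ℤ) r, fun θ => ?_⟩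
  rw [← aeval_map_algebraMap ℚ, hb]
  simp

lemma exists_frac {θ : ℂ} {f : ℂ} (hf : f ∈ ℚ⟮θ⟯) :
    ∃ q p : ℤ[X], q ≠ 0 ∧ aeval θ q * f = aeval θ p := by
  obtain ⟨r, s, rfl⟩ := IntermediateField.mem_adjoin_simple_iff ℚ f |>.1 hf
  by_cases hs : aeval θ s = 0
  · exact ⟨1, 0, one_ne_zero, by simp [hs]⟩
  obtain ⟨b, hb, p, hp⟩ := exists_int_mul r
  obtain ⟨b', hb', q, hq⟩ := exists_int_mul s
  refine ⟨C b * q, C b' * p, ?_, ?_⟩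
  · refine mul_ne_zero (C_ne_zero.2 hb) ?_
    rintro rfl
    have := hq θ
    rw [map_zero] at this
    have h2 : (b' : ℂ) ≠ 0 := by exact_mod_cast hb'
    exact (mul_ne_zero h2 hs) this.symm
  · simp only [map_mul, hp, hq, aeval_C]
    simp only [algebraMap_int_eq, eq_intCast]
    field_simp

lemma exists_common_frac {θ : ℂ} {ι : Type*} [Finite ι]
    (f : ι → ℂ) (hf : ∀ i, f i ∈ ℚ⟮θ⟯) :
    ∃ q : ℤ[X], q ≠ 0 ∧ ∀ i, ∃ p : ℤ[X], aeval θ q * f i = aeval θ p := by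
  classical
  cases nonempty_fintype ι
  choose q p hq hqp using fun i => exists_frac (hf i)
  refine ⟨∏ i, q i, Finset.prod_ne_zero_iff.2 fun i _ => hq i, fun i => ?_⟩
  refine ⟨p i * ∏ j ∈ Finset.univ.erase i, q j, ?_⟩
  rw [← Finset.mul_prod_erase _ _ (Finset.mem_univ i), map_mul, map_mul, ← hqp]
  ring

/-- Finitely many numbers algebraic over `ℚ(θ)` act, up to a common denominator, by integer
polynomial matrices on a vector whose entries are linearly independent over `ℤ[θ]`. -/
lemma exists_rep {θ : ℂ} (hθ : ∀ Q : ℤ[X], Q ≠ 0 → aeval θ Q ≠ 0) {ι : Type*} [Finite ι]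
    (y : ι → ℂ) (hy : ∀ i, IsAlgebraic ℚ⟮θ⟯ (y i)) :
    ∃ (D : ℕ) (v : Fin D → ℂ), 0 < D ∧
      (∀ r : Fin D → ℤ[X], ∑ i, aeval θ (r i) * v i = 0 → r = 0) ∧
      ∃ q : ℤ[X], q ≠ 0 ∧ ∃ (d : ℕ) (H : ℝ), 1 ≤ H ∧ ∀ i, Rp θ v d H (aeval θ q * y i) := by
  classical
  cases nonempty_fintype ι
  set K := IntermediateField.adjoin ℚ⟮θ⟯ (Set.range y) with hK
  have : FiniteDimensional ℚ⟮θ⟯ K := IntermediateField.finiteDimensional_adjoin (by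
    rintro _ ⟨i, rfl⟩; exact (hy i).isIntegral)
  set D := Module.finrank ℚ⟮θ⟯ K with hD
  let w := Module.finBasis ℚ⟮θ⟯ K
  let y' : ι → K := fun i => ⟨y i, IntermediateField.subset_adjoin _ _ ⟨i, rfl⟩⟩
  obtain ⟨q, hq, hqp⟩ := exists_common_frac
    (fun a : ι × Fin D × Fin D => ((w.repr (y' a.1 * w a.2.1) a.2.2 : ℚ⟮θ⟯) : ℂ))
    (fun a => SetLike.coe_mem _)
  choose p hp using hqp
  refine ⟨D, fun i => (w i : ℂ), Module.finrank_pos, ?_, q, hq, ?_⟩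
  · intro r hr
    have hmem : ∀ i, aeval θ (r i) ∈ ℚ⟮θ⟯ := fun i => by
      have h1 : aeval θ (r i) = aeval θ ((r i).map (algebraMap ℤ ℚ)) := by
        rw [aeval_map_algebraMap]
      rw [h1]
      exact IntermediateField.algebra_adjoin_le_adjoin ℚ {θ} (aeval_mem_adjoin_singleton ℚ θ)
    have h1 := (Fintype.linearIndependent_iff.1 w.linearIndependent) (fun i => ⟨_, hmem i⟩) (by
      apply Subtype.ext
      have : ((∑ i, (⟨aeval θ (r i), hmem i⟩ : ℚ⟮θ⟯) • w i : K) : ℂ) =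
          ∑ i, aeval θ (r i) * (w i : ℂ) := by
        rw [AddSubmonoidClass.coe_finsetSum]
        rfl
      rw [this, hr]; rfl)
    ext1 i
    by_contra h
    exact hθ _ h (congrArg Subtype.val (h1 i))
  · have hex : ∀ i, ∃ A : Matrix (Fin D) (Fin D) ℤ[X],
        (A.map (aeval θ)).mulVec (fun i => (w i : ℂ)) = (aeval θ q * y i) • fun i => (w i : ℂ) := by
      intro i
      refine ⟨Matrix.of fun k l => p (i, k, l), ?_⟩
      ext k
      have h1 := w.sum_repr (y' i * w k)
      have h2 := congrArg (Subtype.val) h1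
      rw [AddSubmonoidClass.coe_finsetSum] at h2
      simp only [Matrix.mulVec, dotProduct, Matrix.map_apply, Matrix.of_apply, Pi.smul_apply,
        smul_eq_mul]
      have h3 : ∀ l, aeval θ (p (i, k, l)) * (w l : ℂ) = aeval θ q *
          (((w.repr (y' i * w k) l : ℚ⟮θ⟯) : ℂ) * (w l : ℂ)) := fun l => by
        rw [← hp]; ring
      simp_rw [h3]
      rw [← Finset.mul_sum, mul_assoc]
      congr 1
    choose A hA using hex
    refine ⟨∑ i, ∑ k, ∑ l, (A i k l).natDegree, 1 + ∑ i, ∑ k, ∑ l, len (A i k l), ?_, fun i => ?_⟩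
    · have : 0 ≤ ∑ i, ∑ k, ∑ l, len (A i k l) := Finset.sum_nonneg fun _ _ =>
        Finset.sum_nonneg fun _ _ => Finset.sum_nonneg fun _ _ => len_nonneg _
      linarith
    · refine ⟨A i, fun k l => ?_, ?_, hA i⟩
      · calc _ ≤ ∑ l, (A i k l).natDegree :=
              Finset.single_le_sum (f := fun l => (A i k l).natDegree) (by simp) (Finset.mem_univ l)
          _ ≤ ∑ k, ∑ l, (A i k l).natDegree := Finset.single_le_sum
              (f := fun k => ∑ l, (A i k l).natDegree) (by simp) (Finset.mem_univ k)
          _ ≤ _ := Finset.single_le_sum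
              (f := fun i => ∑ k, ∑ l, (A i k l).natDegree) (by simp) (Finset.mem_univ i)
      · have := Finset.single_le_sum (f := fun i => ∑ k, ∑ l, len (A i k l)) (fun _ _ =>
          Finset.sum_nonneg fun _ _ => Finset.sum_nonneg fun _ _ => len_nonneg _)
          (Finset.mem_univ i)
        exact this.trans (by linarith)

/-- Two algebraic integers act by integer matrices on a vector of numbers starting with `1`. -/
lemma exists_int_rep {e c : ℂ} (he : IsIntegral ℤ e) (hc : IsIntegral ℤ c) :
    ∃ (d : ℕ) (u : Fin d → ℂ) (E C : Matrix (Fin d) (Fin d) ℤ) (i₀ : Fin d), u i₀ = 1 ∧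
      (E.map (Int.castRingHom ℂ)).mulVec u = e • u ∧ (C.map (Int.castRingHom ℂ)).mulVec u = c • u ∧
      ∀ i, IsIntegral ℤ (u i) := by
  classical
  have hfg := fg_adjoin_of_finite (R := ℤ) (s := {e, c}) (by simp) (by
    rintro x (rfl | rfl) <;> assumption)
  obtain ⟨s, hs⟩ := hfg
  set O := Algebra.adjoin ℤ ({e, c} : Set ℂ) with hO
  have hinteg : ∀ x ∈ O, IsIntegral ℤ x := fun x hx => by
    have : O ≤ integralClosure ℤ ℂ := Algebra.adjoin_le (by rintro x (rfl | rfl) <;> assumption)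
    exact this hx
  let s' : Finset ℂ := insert 1 s
  have hspan : Submodule.span ℤ (s' : Set ℂ) = Subalgebra.toSubmodule O := by
    rw [Finset.coe_insert, Submodule.span_insert, hs, sup_eq_right]
    exact (Submodule.span_singleton_le_iff_mem _ _).2 O.one_mem
  let u : Fin s'.card → ℂ := fun i => (s'.equivFin.symm i : ℂ)
  have hr : Set.range u = s' := by
    ext x
    constructor
    · rintro ⟨i, rfl⟩; exact (s'.equivFin.symm i).2
    · intro hx; exact ⟨s'.equivFin ⟨x, hx⟩, by simp [u]⟩
  have hmem : ∀ i, u i ∈ O := fun i => by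
    have : u i ∈ Submodule.span ℤ (s' : Set ℂ) := Submodule.subset_span (hr ▸ ⟨i, rfl⟩)
    rwa [hspan] at this
  have key : ∀ x ∈ O, ∃ A : Matrix (Fin s'.card) (Fin s'.card) ℤ,
      (A.map (Int.castRingHom ℂ)).mulVec u = x • u := by
    intro x hx
    have : ∀ i, ∃ a : Fin s'.card → ℤ, ∑ j, a j • u j = x * u i := fun i => by
      rw [← Submodule.mem_span_range_iff_exists_fun, hr, hspan]
      exact O.mul_mem hx (hmem i)
    choose a ha using this
    refine ⟨Matrix.of a, ?_⟩
    ext i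
    rw [Pi.smul_apply, smul_eq_mul, ← ha]
    simp [Matrix.mulVec, dotProduct]
  obtain ⟨E, hE⟩ := key e (Algebra.subset_adjoin (by simp))
  obtain ⟨C, hC⟩ := key c (Algebra.subset_adjoin (by simp))
  refine ⟨_, u, E, C, s'.equivFin ⟨1, Finset.mem_insert_self _ _⟩, by simp [u], hE, hC,
    fun i => hinteg _ (hmem i)⟩

end Chud

/-! ### Arithmetic of the derivatives at lattice points -/

namespace Chud
open Finset Filter Topology Polynomial IntermediateField

lemma norm_psi_le {R : Type*} [NormedRing R] (e c : R) (G : ℝ) (h1 : ‖(1 : R)‖ ≤ G) (hG : 1 ≤ G)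
    (he : ‖e‖ ≤ G) (hc : 6 + ‖c‖ ≤ G) : ∀ (t a j j' b n : ℕ), a + j + j' + b ≤ n →
    ‖psi e c t a j j' b‖ ≤ (G * (n + t)) ^ t * G ^ (n + t + 1) := by
  have hpow : ∀ j, ‖e ^ j‖ ≤ G ^ (j + 1) := by
    intro j
    induction j with
    | zero => simpa using h1
    | succ j ih =>
      rw [pow_succ, pow_succ G]
      exact (norm_mul_le _ _).trans (by gcongr)
  intro t
  induction t with
  | zero =>
    intro a j j' b n hn
    rw [psi]
    split_ifs
    · simp only [pow_zero, one_mul]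
      exact (hpow j).trans (pow_le_pow_right₀ hG (by omega))
    · simp only [norm_zero]; positivity
  | succ t ih =>
    intro a j j' b n hn
    rw [psi]
    set X : ℝ := (G * ((n + 1 : ℕ) + t)) ^ t * G ^ (n + 1 + t + 1) with hX
    have hX0 : 0 ≤ X := by positivity
    have smul : ∀ (m : ℕ) (x : R), (m ≠ 0 → ‖x‖ ≤ X) → ‖(m : R) * x‖ ≤ m * X := by
      intro m x hx
      rcases Nat.eq_zero_or_pos m with rfl | hm
      · simp
      · rw [← nsmul_eq_mul]
        exact (norm_nsmul_le).trans (by have := hx hm.ne'; gcongr)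
    have t1 := smul a (psi e c t (a - 1) j j' b) fun h => ih _ _ _ _ (n + 1) (by omega)
    have t2 := smul j (psi e c t a (j - 1) (j' + 1) b) fun h => ih _ _ _ _ (n + 1) (by omega)
    have t4 := smul b (psi e c t a (j + 1) j' (b - 1)) fun h => ih _ _ _ _ (n + 1) (by omega)
    have t3 : ‖(j' : R) * (6 * psi e c t a (j + 2) (j' - 1) b - c * psi e c t a j (j' - 1) b)‖ ≤
        j' * ((6 + ‖c‖) * X) := by
      rcases Nat.eq_zero_or_pos j' with rfl | hm
      · simp
      · have g1 : ‖psi e c t a (j + 2) (j' - 1) b‖ ≤ X := ih _ _ _ _ (n + 1) (by omega)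
        have g2 : ‖psi e c t a j (j' - 1) b‖ ≤ X := ih _ _ _ _ (n + 1) (by omega)
        have g3 : ‖(6 : R) * psi e c t a (j + 2) (j' - 1) b‖ ≤ 6 * X := by
          have : (6 : R) = ((6 : ℕ) : R) := by norm_num
          rw [this, ← nsmul_eq_mul]
          exact (norm_nsmul_le).trans (by push_cast; gcongr)
        rw [← nsmul_eq_mul]
        refine (norm_nsmul_le).trans ?_
        gcongr
        refine (norm_sub_le _ _).trans ?_
        rw [add_mul]
        exact add_le_add g3 ((norm_mul_le _ _).trans (by gcongr))
    have hs : ((a : ℝ) + j + j' + b) ≤ n := by exact_mod_cast hn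
    have hG1 : (j' : ℝ) * ((6 + ‖c‖) * X) ≤ j' * (G * X) := by gcongr
    have hG2 : ∀ m : ℕ, (m : ℝ) * X ≤ m * (G * X) := fun m => by
      gcongr; nlinarith
    calc _ ≤ (a : ℝ) * X + j * X + j' * ((6 + ‖c‖) * X) + b * X :=
          (norm_sub_le _ _).trans (add_le_add ((norm_add_le _ _).trans
            (add_le_add ((norm_add_le _ _).trans (add_le_add t1 t2)) t3)) t4)
      _ ≤ (a + j + j' + b) * (G * X) := by linarith [hG2 a, hG2 j, hG2 b]
      _ ≤ (n + (t + 1 : ℕ)) * (G * X) := by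
          refine mul_le_mul_of_nonneg_right ?_ (by positivity)
          have : (0 : ℝ) ≤ ((t + 1 : ℕ) : ℝ) := Nat.cast_nonneg _
          linarith
      _ = _ := by
          rw [hX]; push_cast
          ring

/-- The matrix obtained by evaluating `psi` at matrices representing `e` and `c` represents the number
`psi e c`. -/
lemma psi_mulVec {d : ℕ} (u : Fin d → ℂ) (E C : Matrix (Fin d) (Fin d) ℤ) (e c : ℂ)
    (hE : (E.map (Int.castRingHom ℂ)).mulVec u = e • u)
    (hC : (C.map (Int.castRingHom ℂ)).mulVec u = c • u) : ∀ t a j j' b : ℕ,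
    ((psi E C t a j j' b).map (Int.castRingHom ℂ)).mulVec u = psi e c t a j j' b • u := by
  let φ : Matrix (Fin d) (Fin d) ℤ →+* Matrix (Fin d) (Fin d) ℂ :=
    (Int.castRingHom ℂ).mapMatrix
  have hE' : (φ E).mulVec u = e • u := hE
  have hC' : (φ C).mulVec u = c • u := hC
  intro t
  change ∀ a j j' b : ℕ, (φ (psi E C t a j j' b)).mulVec u = psi e c t a j j' b • u
  have nat : ∀ (m : ℕ) (w : Fin d → ℂ), (m : Matrix (Fin d) (Fin d) ℂ).mulVec w = (m : ℂ) • w := by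
    intro m w
    rw [← nsmul_one, Matrix.smul_mulVec, Matrix.one_mulVec, Nat.cast_smul_eq_nsmul]
  induction t with
  | zero =>
    intro a j j' b
    rw [psi, psi]
    split_ifs
    · rw [map_pow]
      induction j with
      | zero => simp
      | succ j ih => rw [pow_succ', ← Matrix.mulVec_mulVec, ih, Matrix.mulVec_smul, hE', smul_smul,
          pow_succ]
    · simp
  | succ t ih =>
    intro a j j' b
    rw [psi, psi]
    have six : (6 : Matrix (Fin d) (Fin d) ℂ) = ((6 : ℕ) : Matrix (Fin d) (Fin d) ℂ) := by norm_num
    simp only [map_sub, map_add, map_mul, map_natCast, map_ofNat, Matrix.sub_mulVec,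
      Matrix.add_mulVec, ← Matrix.mulVec_mulVec, ih, Matrix.mulVec_smul, nat, hC', six]
    simp only [smul_smul, ← sub_smul, ← add_smul]
    congr 1
    push_cast
    ring

/-- Representation, by integer polynomial matrices with controlled size, of the derivatives of the
monomials in `z, f, g` at lattice points. -/
theorem Ell.exists_rep_val (E : Ell) (he : IsIntegral ℤ E.e) (hc : IsIntegral ℤ E.c) {θ : ℂ}
    (hθ : ∀ Q : ℤ[X], Q ≠ 0 → aeval θ Q ≠ 0) (h1 : IsAlgebraic ℚ⟮θ⟯ E.ω₁)
    (h2 : IsAlgebraic ℚ⟮θ⟯ E.ω₂) (h3 : IsAlgebraic ℚ⟮θ⟯ E.η₁) (h4 : IsAlgebraic ℚ⟮θ⟯ E.η₂) :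
    ∃ (D : ℕ) (v : Fin D → ℂ), 0 < D ∧
      (∀ r : Fin D → ℤ[X], ∑ i, aeval θ (r i) * v i = 0 → r = 0) ∧
      ∃ q : ℤ[X], q ≠ 0 ∧ ∃ (d : ℕ) (K : ℝ), 1 ≤ K ∧ ∀ (L M S t i j k : ℕ) (m n : ℤ),
        i ≤ M → j ≤ L → k ≤ M → 1 ≤ S → |m| ≤ S → |n| ≤ S →
        Rp θ v (d * (2 * M + 1)) (K ^ (2 * M + L + t + 1) * S ^ (2 * M) * (2 * M + L + t) ^ t)
          (aeval θ q ^ (2 * M + 1) *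
            val E.e E.c (m * E.ω₁ + n * E.ω₂) (m * E.η₁ + n * E.η₂) t i j k) := by
  classical
  obtain ⟨du, u, mE, mC, i₀, hu1, hmE, hmC, hu⟩ := exists_int_rep he hc
  obtain ⟨D, v, hD, hv, q, hq, d, H, hH, hrep⟩ := exists_rep hθ
    (Sum.elim (Sum.elim u ![E.ω₁, E.ω₂, E.η₁, E.η₂]) (fun _ : Unit => (1 : ℂ))) (by
    rintro ((i | i) | i)
    · have : IsIntegral ℚ (u i) := (hu i).tower_top
      exact (this.isAlgebraic).extendScalars (algebraMap ℚ ℚ⟮θ⟯).injective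
    · fin_cases i <;> assumption
    · exact isAlgebraic_one)
  have ru : ∀ i, Rp θ v d H (aeval θ q * u i) := fun i => hrep (Sum.inl (Sum.inl i))
  have r1 : Rp θ v d H (aeval θ q * E.ω₁) := hrep (Sum.inl (Sum.inr 0))
  have r2 : Rp θ v d H (aeval θ q * E.ω₂) := hrep (Sum.inl (Sum.inr 1))
  have r3 : Rp θ v d H (aeval θ q * E.η₁) := hrep (Sum.inl (Sum.inr 2))
  have r4 : Rp θ v d H (aeval θ q * E.η₂) := hrep (Sum.inl (Sum.inr 3))
  have r0 : Rp θ v d H (aeval θ q) := by simpa using hrep (Sum.inr ())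
  let _ := Matrix.linftyOpNormedRing (n := Fin du) (α := ℤ)
  obtain ⟨G, hG1, hGe⟩ : ∃ G : ℝ, 1 ≤ G ∧ ‖(1 : Matrix (Fin du) (Fin du) ℤ)‖ ≤ G ∧ ‖mE‖ ≤ G ∧
      6 + ‖mC‖ ≤ G := by
    refine ⟨max (max 1 ‖(1 : Matrix (Fin du) (Fin du) ℤ)‖) (max ‖mE‖ (6 + ‖mC‖)), ?_, ?_, ?_, ?_⟩
    · exact (le_max_left _ _).trans (le_max_left _ _)
    · exact (le_max_right _ _).trans (le_max_left _ _)
    · exact (le_max_left _ _).trans (le_max_right _ _)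
    · exact (le_max_right _ _).trans (le_max_right _ _)
  obtain ⟨hG2, hG3, hG4⟩ := hGe
  have hdu : (1 : ℝ) ≤ du := by exact_mod_cast (Fin.pos i₀)
  set c0 : ℝ := (D + 1) ^ 3 * (du * H) with hc0
  have hc0' : 1 ≤ c0 := by
    have e1 : (1 : ℝ) ≤ (D + 1) ^ 3 := one_le_pow₀ (by linarith [(Nat.cast_nonneg D : (0:ℝ) ≤ D)])
    exact one_le_mul_of_one_le_of_one_le e1 (one_le_mul_of_one_le_of_one_le hdu hH)
  refine ⟨D, v, hD, hv, q, hq, d, c0 * (4 * H) * G ^ 2, ?_, ?_⟩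
  · exact one_le_mul_of_one_le_of_one_le (one_le_mul_of_one_le_of_one_le hc0' (by linarith))
      (one_le_pow₀ hG1)
  intro L M S t i j k m n hi hj hk hS hm hn
  have hS' : (1 : ℝ) ≤ S := by exact_mod_cast hS
  have hm' : |(m : ℝ)| ≤ S := by exact_mod_cast hm
  have hn' : |(n : ℝ)| ≤ S := by exact_mod_cast hn
  -- the bound for the `ψ`-factor
  set Ψ : ℝ := (G * (2 * M + L + t)) ^ t * G ^ (2 * M + L + t + 1) with hΨ
  have hΨ0 : 0 ≤ Ψ := by positivity
  have rpsi : ∀ a b, a ≤ M → b ≤ M →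
      Rp θ v d (du * (Ψ * H)) (aeval θ q * psi E.e E.c t a j 0 b) := by
    intro a b ha hb
    have key := congrFun (psi_mulVec u mE mC E.e E.c hmE hmC t a j 0 b) i₀
    rw [Pi.smul_apply, hu1, smul_eq_mul, mul_one] at key
    have hnorm := norm_psi_le mE mC G hG2 hG1 hG3 hG4 t a j 0 b (2 * M + L) (by omega)
    have hent : ∀ l, |((psi mE mC t a j 0 b i₀ l : ℤ) : ℝ)| ≤ Ψ := by
      intro l
      have e1 : ‖psi mE mC t a j 0 b i₀ l‖ ≤ ‖psi mE mC t a j 0 b‖ := by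
        rw [Matrix.linfty_opNorm_def]
        have := Finset.single_le_sum (f := fun l => ‖psi mE mC t a j 0 b i₀ l‖₊)
          (fun _ _ => zero_le) (Finset.mem_univ l)
        have h2 := Finset.le_sup (f := fun i => ∑ l, ‖psi mE mC t a j 0 b i l‖₊) (Finset.mem_univ i₀)
        exact_mod_cast this.trans h2
      rw [Int.norm_eq_abs] at e1
      refine e1.trans (hnorm.trans (le_of_eq ?_))
      rw [hΨ]; push_cast; rfl
    have e2 : aeval θ q * psi E.e E.c t a j 0 b =
        ∑ l, ((psi mE mC t a j 0 b i₀ l : ℤ) : ℂ) * (aeval θ q * u l) := by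
      rw [← key]
      simp only [Matrix.mulVec, dotProduct, Matrix.map_apply, eq_intCast]
      rw [Finset.mul_sum]
      exact Finset.sum_congr rfl fun l _ => by ring
    rw [e2]
    refine (Rp.sum Finset.univ fun l _ => (ru l).intMul _).mono le_rfl ?_
    calc _ ≤ ∑ l : Fin du, Ψ * H := Finset.sum_le_sum fun l _ => by
          have := hent l
          gcongr
      _ = _ := by simp
  have rx : Rp θ v d (2 * S * H) (aeval θ q * (m * E.ω₁ + n * E.ω₂)) := by
    have := (r1.intMul m).add (r2.intMul n)
    rw [show aeval θ q * (m * E.ω₁ + n * E.ω₂) = m * (aeval θ q * E.ω₁) + n * (aeval θ q * E.ω₂)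
      by ring]
    refine this.mono le_rfl ?_
    rw [← add_mul]
    gcongr
    linarith
  have ry : Rp θ v d (2 * S * H) (aeval θ q * (m * E.η₁ + n * E.η₂)) := by
    have := (r3.intMul m).add (r4.intMul n)
    rw [show aeval θ q * (m * E.η₁ + n * E.η₂) = m * (aeval θ q * E.η₁) + n * (aeval θ q * E.η₂)
      by ring]
    refine this.mono le_rfl ?_
    rw [← add_mul]
    gcongr
    linarith
  have r0' : Rp θ v d (2 * S * H) (aeval θ q) := r0.mono le_rfl (by nlinarith)
  set Z : ℝ := (D + 1) ^ 3 * (2 * S * H) ^ (2 * M) * (du * (Ψ * H)) with hZ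
  have hZ0 : 0 ≤ Z := by positivity
  have term : ∀ a ∈ range (i + 1), ∀ b ∈ range (k + 1), Rp θ v (d * (2 * M + 1))
      ((i.choose a * k.choose b : ℕ) * Z) (aeval θ q ^ (2 * M + 1) *
        (((i.choose a * k.choose b : ℕ) : ℂ) * ((m * E.ω₁ + n * E.ω₂) ^ (i - a) *
          (m * E.η₁ + n * E.η₂) ^ (k - b)) * psi E.e E.c t a j 0 b)) := by
    intro a ha b hb
    rw [Finset.mem_range] at ha hb
    have hall := ((((rx.pow (i - a)).mul (ry.pow (k - b))).mul
      (r0'.pow (2 * M - (i - a) - (k - b)))).mul (rpsi a b (by omega) (by omega))).intMul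
        ((i.choose a * k.choose b : ℕ) : ℤ)
    have e1 : 2 * M = (i - a) + (k - b) + (2 * M - (i - a) - (k - b)) := by omega
    have e2 : aeval θ q ^ (2 * M + 1) = aeval θ q ^ (i - a) * aeval θ q ^ (k - b) *
        aeval θ q ^ (2 * M - (i - a) - (k - b)) * aeval θ q := by
      rw [pow_succ]; conv_lhs => rw [e1]
      rw [pow_add, pow_add]
    have e3 : (2 * S * H) ^ (2 * M) = (2 * S * H) ^ (i - a) * (2 * S * H) ^ (k - b) *
        (2 * S * H) ^ (2 * M - (i - a) - (k - b)) := by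
      conv_lhs => rw [e1]
      rw [pow_add, pow_add]
    convert hall.mono (d' := d * (2 * M + 1)) (H' := (i.choose a * k.choose b : ℕ) * Z) ?_ ?_ using 1
    · rw [e2]
      push_cast
      rw [mul_pow, mul_pow]
      ring
    · rw [← add_mul, ← add_mul, ← e1]
      exact le_of_eq (by ring)
    · rw [hZ, e3]
      rw [Int.cast_natCast, abs_of_nonneg (by positivity)]
      exact le_of_eq (by ring)
  have hsum := Rp.sum (range (i + 1)) fun a ha => Rp.sum (range (k + 1)) fun b hb => term a ha b hb
  have hval : aeval θ q ^ (2 * M + 1) *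
      val E.e E.c (m * E.ω₁ + n * E.ω₂) (m * E.η₁ + n * E.η₂) t i j k =
      ∑ a ∈ range (i + 1), ∑ b ∈ range (k + 1), aeval θ q ^ (2 * M + 1) *
        (((i.choose a * k.choose b : ℕ) : ℂ) * ((m * E.ω₁ + n * E.ω₂) ^ (i - a) *
          (m * E.η₁ + n * E.η₂) ^ (k - b)) * psi E.e E.c t a j 0 b) := by
    rw [val, Finset.mul_sum]
    simp_rw [Finset.mul_sum]
  rw [hval]
  refine hsum.mono le_rfl ?_
  have hch : ∑ a ∈ range (i + 1), ∑ b ∈ range (k + 1), ((i.choose a * k.choose b : ℕ) : ℝ) * Z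
      = 2 ^ i * 2 ^ k * Z := by
    have c1 : ∀ i : ℕ, ∑ a ∈ range (i + 1), (i.choose a : ℝ) = 2 ^ i := fun i => by
      exact_mod_cast Nat.sum_range_choose i
    rw [← c1 i, ← c1 k, Finset.sum_mul_sum, Finset.sum_mul]
    refine Finset.sum_congr rfl fun a _ => ?_
    rw [Finset.sum_mul]
    push_cast
    rfl
  rw [hch]
  set N := 2 * M + L + t + 1 with hN
  have hb1 : (2 : ℝ) ^ i * 2 ^ k ≤ 2 ^ (2 * M) := by
    rw [← pow_add]
    exact pow_le_pow_right₀ (by norm_num) (by omega)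
  calc (2 : ℝ) ^ i * 2 ^ k * Z ≤ 2 ^ (2 * M) * Z := by gcongr
    _ = c0 ^ 1 * (4 * H) ^ (2 * M) * (G ^ t * G ^ N) * S ^ (2 * M) * (2 * M + L + t) ^ t := by
        rw [hZ, hΨ, hc0, mul_pow G, mul_pow (2 * (S : ℝ)) H, mul_pow 2 (S : ℝ), mul_pow 4 H,
          show (4 : ℝ) = 2 * 2 by norm_num, mul_pow 2 (2 : ℝ)]
        ring
    _ ≤ c0 ^ N * (4 * H) ^ N * (G ^ N * G ^ N) * S ^ (2 * M) * (2 * M + L + t) ^ t := by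
        have p1 : c0 ^ 1 ≤ c0 ^ N := pow_le_pow_right₀ hc0' (by omega)
        have p2 : (4 * H) ^ (2 * M) ≤ (4 * H) ^ N := pow_le_pow_right₀ (by linarith) (by omega)
        have p3 : G ^ t ≤ G ^ N := pow_le_pow_right₀ hG1 (by omega)
        gcongr
    _ = _ := by
        have p4 : G ^ N * G ^ N = (G ^ 2) ^ N := by rw [← pow_add, ← pow_mul, two_mul]
        rw [p4, mul_pow _ (G ^ 2), mul_pow c0 (4 * H)]

end Chud

/-! ### Siegel's lemma -/

namespace Chud
open Finset Filter Topology Polynomial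

section siegel
attribute [local instance] Matrix.seminormedAddCommGroup

/-- Siegel's lemma with at least twice as many unknowns as equations. -/
lemma siegel {α β : Type*} [Fintype α] [Fintype β] (A : α → β → ℤ) (H : ℝ) (hH : 1 ≤ H)
    (hA : ∀ a b, |(A a b : ℝ)| ≤ H) (h0 : 0 < Fintype.card α)
    (h : 2 * Fintype.card α ≤ Fintype.card β) :
    ∃ t : β → ℤ, t ≠ 0 ∧ (∀ a, ∑ b, A a b * t b = 0) ∧ ∀ b, |(t b : ℝ)| ≤ Fintype.card β * H := by
  obtain ⟨t, ht, h1, h2⟩ := Int.Matrix.exists_ne_zero_int_vec_norm_le (Matrix.of A) (by omega) h0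
  refine ⟨t, ht, fun a => ?_, fun b => ?_⟩
  · have := congrFun h1 a
    simpa [Matrix.mulVec, dotProduct] using this
  · have e1 : ‖Matrix.of A‖ ≤ H := by
      refine (Matrix.norm_le_iff (by linarith)).2 fun a b => ?_
      rw [Int.norm_eq_abs]; exact hA a b
    have e2 : ‖t b‖ ≤ ‖t‖ := norm_le_pi_norm t b
    rw [Int.norm_eq_abs] at e2
    have c0 : (0 : ℝ) < Fintype.card α := by exact_mod_cast h0
    have c1 : (2 : ℝ) * Fintype.card α ≤ Fintype.card β := by exact_mod_cast h
    have e3 : (1 : ℝ) ≤ Fintype.card β * max 1 ‖Matrix.of A‖ := by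
      have : (1 : ℝ) ≤ Fintype.card β := by exact_mod_cast (by omega : 1 ≤ Fintype.card β)
      exact one_le_mul_of_one_le_of_one_le this (le_max_left _ _)
    have e4 := Real.rpow_le_rpow_of_exponent_le e3
      (show (Fintype.card α : ℝ) / (Fintype.card β - Fintype.card α) ≤ 1 by
        rw [div_le_one (by linarith)]; linarith)
    rw [Real.rpow_one] at e4
    refine e2.trans (h2.trans (e4.trans ?_))
    have : max 1 ‖Matrix.of A‖ ≤ H := max_le hH e1
    gcongr

end siegel

/-- Siegel's lemma over `ℤ[θ]` for numbers represented by polynomial matrices. -/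
lemma siegel_rep {θ : ℂ} {D : ℕ} {v : Fin D → ℂ} (hD : 0 < D)
    (hv : ∀ r : Fin D → ℤ[X], ∑ i, aeval θ (r i) * v i = 0 → r = 0)
    {ι κ : Type*} [Fintype ι] [Fintype κ] (x : ι → κ → ℂ) (d : ℕ) (H : ℝ) (hH : 1 ≤ H)
    (hx : ∀ a b, Rp θ v d H (x a b)) (M : ℕ) (hM : 0 < M) (h0 : 0 < Fintype.card ι)
    (hcard : 2 * (Fintype.card ι * (D * D) * (M + d)) ≤ Fintype.card κ * M) :
    ∃ p : κ → ℤ[X], p ≠ 0 ∧ (∀ b, (p b).natDegree ≤ M ∧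
      len (p b) ≤ M * (Fintype.card κ * M * H)) ∧
      ∀ a, ∑ b, aeval θ (p b) * x a b = 0 := by
  classical
  choose A hA1 hA2 hA3 using hx
  have hlen : ∀ a b i j, len (A a b i j) ≤ H := fun a b i j => by
    refine le_trans ?_ (hA2 a b)
    have e1 := Finset.single_le_sum (f := fun j => len (A a b i j)) (fun _ _ => len_nonneg _)
      (Finset.mem_univ j)
    have e2 := Finset.single_le_sum (f := fun i => ∑ j, len (A a b i j))
      (fun _ _ => Finset.sum_nonneg fun _ _ => len_nonneg _) (Finset.mem_univ i)
    exact e1.trans e2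
  obtain ⟨t, ht0, ht1, ht2⟩ := siegel
    (fun (a : ι × (Fin D × Fin D) × Fin (M + d)) (b : κ × Fin M) =>
      ((X : ℤ[X]) ^ (b.2 : ℕ) * A a.1 b.1 a.2.1.1 a.2.1.2).coeff a.2.2) H hH (by
      rintro ⟨a, ⟨i, j⟩, w⟩ ⟨b, r⟩
      simp only
      rw [coeff_X_pow_mul']
      split_ifs
      · exact (abs_coeff_le_len _ _).trans (hlen _ _ _ _)
      · simpa using by linarith)
    (by
      simp only [Fintype.card_prod, Fintype.card_fin]
      have : 0 < M + d := by omega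
      positivity)
    (by
      simp only [Fintype.card_prod, Fintype.card_fin]
      calc _ = 2 * (Fintype.card ι * (D * D) * (M + d)) := by ring
        _ ≤ _ := hcard)
  simp only [Fintype.card_prod, Fintype.card_fin] at ht2
  refine ⟨fun b => ∑ r : Fin M, C (t (b, r)) * X ^ (r : ℕ), ?_, fun b => ⟨?_, ?_⟩, fun a => ?_⟩
  · intro h
    apply ht0
    funext ⟨b, r⟩
    have := congrArg (fun p : ℤ[X] => p.coeff r) (congrFun h b)
    simpa [finsetSum_coeff, coeff_C_mul, coeff_X_pow, Fin.val_inj] using this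
  · refine natDegree_sum_le_of_forall_le _ _ fun r _ => ?_
    exact (natDegree_C_mul_X_pow_le _ _).trans r.2.le
  · refine (len_sum _ _).trans ?_
    calc _ ≤ ∑ r : Fin M, (Fintype.card κ * M * H : ℝ) := by
          refine Finset.sum_le_sum fun r _ => ?_
          rw [C_mul_X_pow_eq_monomial, ← mul_one (monomial _ _)]
          refine (len_monomial_mul _ _ _).trans ?_
          have e1 : len (1 : ℤ[X]) = 1 := by
            have := len_C 1
            simpa using this
          rw [e1, mul_one]
          have := ht2 (b, r)
          push_cast at this
          exact this
      _ = _ := by simp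
  · set p : κ → ℤ[X] := fun b => ∑ r : Fin M, C (t (b, r)) * X ^ (r : ℕ) with hp
    have hQ : ∀ i j, ∑ b, p b * A a b i j = 0 := by
      intro i j
      have hexp : ∑ b, p b * A a b i j = ∑ c : κ × Fin M, C (t c) * (X ^ (c.2 : ℕ) * A a c.1 i j) := by
        rw [Fintype.sum_prod_type]
        refine Finset.sum_congr rfl fun b _ => ?_
        rw [hp]
        simp only [Finset.sum_mul, mul_assoc]
      ext w
      rw [hexp, finsetSum_coeff, coeff_zero]
      simp only [coeff_C_mul]
      by_cases hw : w < M + d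
      · have := ht1 (a, (i, j), ⟨w, hw⟩)
        rw [← this]
        exact Finset.sum_congr rfl fun c _ => mul_comm _ _
      · refine Finset.sum_eq_zero fun c _ => ?_
        rw [coeff_eq_zero_of_natDegree_lt, mul_zero]
        have e1 := natDegree_mul_le (p := (X : ℤ[X]) ^ (c.2 : ℕ)) (q := A a c.1 i j)
        rw [natDegree_X_pow] at e1
        have := hA1 a c.1 i j
        have := c.2.2
        omega
    obtain ⟨i, hi⟩ : ∃ i, v i ≠ 0 := by
      by_contra! h
      have := hv (fun _ => 1) (by simp [h])
      exact one_ne_zero (congrFun this ⟨0, hD⟩)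
    have h1 : (∑ b, aeval θ (p b) * x a b) * v i = 0 := by
      have h2 : ∀ b, x a b * v i = ∑ j, aeval θ (A a b i j) * v j := fun b => by
        have := congrFun (hA3 a b) i
        rw [Pi.smul_apply, smul_eq_mul] at this
        rw [← this]; rfl
      calc _ = ∑ b, ∑ j, aeval θ (p b) * (aeval θ (A a b i j) * v j) := by
            rw [Finset.sum_mul]
            refine Finset.sum_congr rfl fun b _ => ?_
            rw [mul_assoc, h2, Finset.mul_sum]
        _ = ∑ j, aeval θ (∑ b, p b * A a b i j) * v j := by
            rw [Finset.sum_comm]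
            refine Finset.sum_congr rfl fun j _ => ?_
            rw [map_sum, Finset.sum_mul]
            exact Finset.sum_congr rfl fun b _ => by rw [map_mul]; ring
        _ = 0 := by simp [hQ]
    exact (mul_eq_zero.1 h1).resolve_right hi

end Chud

/-! ### Construction of the auxiliary function -/

namespace Chud
open Finset Filter Topology Polynomial

/-- The size bound for the numbers represented by `Ell.exists_rep_val`. -/
noncomputable def Hb (K : ℝ) (L M S T : ℕ) : ℝ :=
  K ^ (2 * M + L + T + 1) * S ^ (2 * M) * (2 * M + L + T) ^ T

lemma Hb_mono {K : ℝ} (hK : 1 ≤ K) {L M S S' t T : ℕ} (hL : 1 ≤ L) (hS : S ≤ S') (ht : t ≤ T) :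
    Hb K L M S t ≤ Hb K L M S' T := by
  have hL' : (1 : ℝ) ≤ L := by exact_mod_cast hL
  have hS' : (S : ℝ) ≤ S' := by exact_mod_cast hS
  have ht' : (t : ℝ) ≤ T := by exact_mod_cast ht
  have e1 : K ^ (2 * M + L + t + 1) ≤ K ^ (2 * M + L + T + 1) := pow_le_pow_right₀ hK (by omega)
  have hM : (0 : ℝ) ≤ M := Nat.cast_nonneg M
  have hT : (0 : ℝ) ≤ t := Nat.cast_nonneg t
  have e2 : ((2 * M + L + t : ℝ)) ^ t ≤ (2 * M + L + T) ^ T :=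
    (pow_le_pow_left₀ (by positivity) (by linarith) t).trans
      (pow_le_pow_right₀ (by linarith) ht)
  unfold Hb
  gcongr

lemma one_le_Hb {K : ℝ} (hK : 1 ≤ K) {L M S T : ℕ} (hL : 1 ≤ L) (hS : 1 ≤ S) :
    1 ≤ Hb K L M S T := by
  have hL' : (1 : ℝ) ≤ L := by exact_mod_cast hL
  have hS' : (1 : ℝ) ≤ S := by exact_mod_cast hS
  have hM : (0 : ℝ) ≤ M := Nat.cast_nonneg M
  have hT : (0 : ℝ) ≤ T := Nat.cast_nonneg T
  exact one_le_mul_of_one_le_of_one_le (one_le_mul_of_one_le_of_one_le (one_le_pow₀ hK)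
    (one_le_pow₀ hS')) (one_le_pow₀ (by linarith))

/-- The representation property provided by `Ell.exists_rep_val`. -/
def RepVal (E : Ell) (θ : ℂ) {D : ℕ} (v : Fin D → ℂ) (q : ℤ[X]) (d : ℕ) (K : ℝ) : Prop :=
  ∀ (L M S t i j k : ℕ) (m n : ℤ), i ≤ M → j ≤ L → k ≤ M → 1 ≤ S → |m| ≤ S → |n| ≤ S →
    Rp θ v (d * (2 * M + 1)) (Hb K L M S t)
      (aeval θ q ^ (2 * M + 1) *
        val E.e E.c (m * E.ω₁ + n * E.ω₂) (m * E.η₁ + n * E.η₂) t i j k)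

/-- Construction of an auxiliary function vanishing to order `T` at the lattice points with
coordinates bounded by `S`. -/
lemma Ell.construct (E : Ell) {θ : ℂ} {D : ℕ} {v : Fin D → ℂ} (hD : 0 < D)
    (hv : ∀ r : Fin D → ℤ[X], ∑ i, aeval θ (r i) * v i = 0 → r = 0) {q : ℤ[X]}
    (hq : aeval θ q ≠ 0) {d : ℕ} {K : ℝ} (hK : 1 ≤ K) (hrep : RepVal E θ v q d K)
    (L M S T : ℕ) (hL : 1 ≤ L) (hM : 1 ≤ M) (hS : 1 ≤ S) (hT : 1 ≤ T)
    (hcard : 2 * ((T * ((2 * S + 1) * (2 * S + 1))) * (D * D) * (M + d * (2 * M + 1))) ≤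
      M * (L * M) * M) :
    ∃ p : ℕ → ℕ → ℕ → ℤ[X], (∃ i < M, ∃ j < L, ∃ k < M, p i j k ≠ 0) ∧
      (∀ i j k, (p i j k).natDegree ≤ M ∧
        len (p i j k) ≤ M * ((M * (L * M) : ℕ) * M * Hb K L M S T)) ∧
      ∀ t < T, ∀ m n : ℤ, |m| ≤ S → |n| ≤ S →
        iteratedDeriv t (E.aux L M fun i j k => aeval θ (p i j k)) (m * E.ω₁ + n * E.ω₂) = 0 := by
  classical
  set Iv := Finset.Icc (-(S : ℤ)) S with hIv
  have hIvc : Fintype.card Iv = 2 * S + 1 := by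
    rw [Fintype.card_coe, hIv, Int.card_Icc]; omega
  obtain ⟨p, hp0, hp1, hp2⟩ := siegel_rep hD hv
    (fun (a : Fin T × (Iv × Iv)) (b : Fin M × (Fin L × Fin M)) => aeval θ q ^ (2 * M + 1) *
        val E.e E.c ((a.2.1 : ℤ) * E.ω₁ + (a.2.2 : ℤ) * E.ω₂)
          ((a.2.1 : ℤ) * E.η₁ + (a.2.2 : ℤ) * E.η₂) a.1 b.1 b.2.1 b.2.2)
    (d * (2 * M + 1)) (Hb K L M S T) (one_le_Hb hK hL hS) (by
      rintro ⟨t, m, n⟩ ⟨i, j, k⟩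
      refine (hrep L M S t i j k m n i.2.le j.2.le k.2.le hS ?_ ?_).mono le_rfl
        (Hb_mono hK hL le_rfl t.2.le)
      · exact abs_le.2 (Finset.mem_Icc.1 m.2)
      · exact abs_le.2 (Finset.mem_Icc.1 n.2)) M hM
    (by
      rw [Fintype.card_prod, Fintype.card_prod, Fintype.card_fin, hIvc]; positivity)
    (by
      simp only [Fintype.card_prod, Fintype.card_fin, hIvc]
      exact hcard)
  simp only [Fintype.card_prod, Fintype.card_fin] at hp1
  refine ⟨fun i j k => if h : i < M ∧ j < L ∧ k < M then p (⟨i, h.1⟩, ⟨j, h.2.1⟩, ⟨k, h.2.2⟩)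
    else 0, ?_, fun i j k => ?_, fun t ht m n hm hn => ?_⟩
  · obtain ⟨⟨i, j, k⟩, h⟩ := Function.ne_iff.1 hp0
    refine ⟨i, i.2, j, j.2, k, k.2, ?_⟩
    dsimp only
    rw [dif_pos (And.intro i.2 (And.intro j.2 k.2))]
    exact h
  · dsimp only
    split_ifs with h
    · exact hp1 _
    · refine ⟨by simp, ?_⟩
      rw [len_zero]
      have := one_le_Hb hK (M := M) (T := T) hL hS
      positivity
  · have h := hp2 (⟨t, ht⟩, ⟨m, Finset.mem_Icc.2 (abs_le.1 hm)⟩,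
      ⟨n, Finset.mem_Icc.2 (abs_le.1 hn)⟩)
    rw [E.iteratedDeriv_aux]
    simp only at h
    rw [Fintype.sum_prod_type] at h
    simp only [Fintype.sum_prod_type] at h
    rw [← (mul_eq_zero.1 (show aeval θ q ^ (2 * M + 1) * (∑ i ∈ range M, ∑ j ∈ range L,
      ∑ k ∈ range M, aeval θ (if h : i < M ∧ j < L ∧ k < M then
        p (⟨i, h.1⟩, ⟨j, h.2.1⟩, ⟨k, h.2.2⟩) else 0) *
        val E.e E.c (m * E.ω₁ + n * E.ω₂) (m * E.η₁ + n * E.η₂) t i j k) = 0 from ?_)).resolve_left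
        (pow_ne_zero _ hq)]
    rw [← h, Finset.sum_range, Finset.mul_sum]
    refine Finset.sum_congr rfl fun i _ => ?_
    rw [Finset.sum_range, Finset.mul_sum]
    refine Finset.sum_congr rfl fun j _ => ?_
    rw [Finset.sum_range, Finset.mul_sum]
    refine Finset.sum_congr rfl fun k _ => ?_
    rw [dif_pos (And.intro i.2 (And.intro j.2 k.2))]
    ring

end Chud

/-! ### The small value -/

namespace Chud
open Finset Filter Topology Polynomial

/-- Bound for the coefficients of the auxiliary function. -/
noncomputable def lenB (K : ℝ) (L M S T : ℕ) : ℝ := M * ((M * (L * M) : ℕ) * M * Hb K L M S T)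

/-- Bound for the size of a value of a derivative of the auxiliary function. -/
noncomputable def sizeB (K : ℝ) (D L M S T : ℕ) : ℝ :=
  (M * (L * M) : ℕ) * (D * lenB K L M S T * Hb K L M M T)

/-- Analytic bound for a value of a derivative of the auxiliary function, without the decisive
exponential factor. -/
noncomputable def anB (K R : ℝ) (L M S T : ℕ) (u : ℝ) : ℝ :=
  T ^ T * R ^ T * (lenB K L M S T * u ^ M * M ^ 2 * L * (R * M) ^ (2 * M) * R ^ L)

/-- For each admissible choice of the parameters `L`, `M`, `S`, the construction of the auxiliary
function by Siegel's lemma, the extrapolation and the zero estimate produce an integer polynomial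
which is small, but not zero, at `θ`. -/
lemma Ell.step (E : Ell) {θ : ℂ} {D : ℕ} {v : Fin D → ℂ} (hD : 0 < D)
    (hv : ∀ r : Fin D → ℤ[X], ∑ i, aeval θ (r i) * v i = 0 → r = 0)
    (hθ : ∀ Q : ℤ[X], Q ≠ 0 → aeval θ Q ≠ 0) {q : ℤ[X]}
    (hq : q ≠ 0) {d : ℕ} {K : ℝ} (hK : 1 ≤ K) (hrep : RepVal E θ v q d K) :
    ∃ c : ℝ, 0 < c ∧ ∃ R : ℝ, 1 ≤ R ∧ ∃ ℓ : ℕ, 1 ≤ ℓ ∧ ∀ L M S : ℕ, 1 ≤ M → M ≤ L → 1 ≤ S →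
      2 * ((ℓ * L * ((2 * S + 1) * (2 * S + 1))) * (D * D) * (M + d * (2 * M + 1))) ≤
        M * (L * M) * M →
      ∃ P : ℤ[X], P ≠ 0 ∧ P.natDegree ≤ D * (M + d * (2 * M + 1)) ∧
        mah P ≤ D.factorial * sizeB K D L M S (ℓ * L) ^ D ∧
        ‖aeval θ P‖ ≤ c * (‖aeval θ q‖ ^ (2 * M + 1) * (anB K R L M S (ℓ * L) (max 1 ‖θ‖) *
          Real.exp (-(L * S ^ 2)))) *
          (sizeB K D L M S (ℓ * L) * max 1 ‖θ‖ ^ (M + d * (2 * M + 1))) ^ D := by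
  classical
  obtain ⟨c, hc, hpoly⟩ := Rp.exists_poly hv hD
  obtain ⟨κ, hκ, hzero⟩ := E.zero_estimate
  obtain ⟨R, hR, ℓ₀, hext⟩ := E.extrapolate
  refine ⟨c, hc, R, hR, max ℓ₀ κ, hκ.trans (le_max_right _ _), ?_⟩
  intro L M S hM hML hS hcard
  set ℓ := max ℓ₀ κ with hℓ
  set T := ℓ * L with hT
  have hL : 1 ≤ L := hM.trans hML
  have hℓ1 : 1 ≤ ℓ := hκ.trans (le_max_right _ _)
  have hT1 : 1 ≤ T := Nat.mul_pos hℓ1 hL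
  obtain ⟨p, ⟨i, hi, j, hj, k, hk, hp⟩, hpb, hvan⟩ :=
    E.construct hD hv (hθ q hq) hK hrep L M S T hL hM hS hT1 hcard
  set Pc : ℕ → ℕ → ℕ → ℂ := fun i j k => aeval θ (p i j k) with hPc
  obtain ⟨t₀, ht₀, m₀, n₀, hm₀, hn₀, hne₀⟩ := hzero L M T Pc
    (Nat.mul_le_mul_right _ (le_max_right _ _)) ⟨i, hi, j, hj, k, hk, hθ _ hp⟩
  -- the smallest square of lattice points where the auxiliary function does not vanish
  have hex : ∃ S₁ : ℕ, ∃ t < T, ∃ m n : ℤ, |m| ≤ S₁ ∧ |n| ≤ S₁ ∧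
      iteratedDeriv t (E.aux L M Pc) (m * E.ω₁ + n * E.ω₂) ≠ 0 :=
    ⟨M, t₀, ht₀, m₀, n₀, hm₀, hn₀, hne₀⟩
  set S₁ := Nat.find hex with hS₁
  obtain ⟨t, ht, m, n, hm, hn, hne⟩ := Nat.find_spec hex
  have hmin : ∀ S', S' < S₁ → ∀ t < T, ∀ m n : ℤ, |m| ≤ S' → |n| ≤ S' →
      iteratedDeriv t (E.aux L M Pc) (m * E.ω₁ + n * E.ω₂) = 0 := by
    intro S' hS' t ht m n hm hn
    by_contra h
    exact Nat.find_min hex hS' ⟨t, ht, m, n, hm, hn, h⟩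
  have hS₁M : S₁ ≤ M := Nat.find_min' hex ⟨t₀, ht₀, m₀, n₀, hm₀, hn₀, hne₀⟩
  have hSS₁ : S < S₁ := by
    by_contra! h
    have h' : (S₁ : ℤ) ≤ S := by exact_mod_cast h
    exact hne (hvan t ht m n (hm.trans h') (hn.trans h'))
  set x := iteratedDeriv t (E.aux L M Pc) (m * E.ω₁ + n * E.ω₂) with hx
  set u := max 1 ‖θ‖ with hu
  have hu1 : 1 ≤ u := le_max_left _ _
  have hL' : (1 : ℝ) ≤ L := by exact_mod_cast hL
  have hM' : (1 : ℝ) ≤ M := by exact_mod_cast hM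
  have hT' : (1 : ℝ) ≤ T := by exact_mod_cast hT1
  have hHb : 1 ≤ Hb K L M S T := one_le_Hb hK hL hS
  have hHb' : 1 ≤ Hb K L M M T := one_le_Hb hK hL hM
  have hMLM : (1 : ℝ) ≤ (M * (L * M) : ℕ) := by
    have : 1 ≤ M * (L * M) := Nat.mul_pos hM (Nat.mul_pos hL hM)
    exact_mod_cast this
  have hlen1 : 1 ≤ lenB K L M S T := one_le_mul_of_one_le_of_one_le hM'
    (one_le_mul_of_one_le_of_one_le (one_le_mul_of_one_le_of_one_le hMLM hM') hHb)
  have hD' : (1 : ℝ) ≤ D := by exact_mod_cast hD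
  have hsize1 : 1 ≤ sizeB K D L M S T := one_le_mul_of_one_le_of_one_le hMLM
    (one_le_mul_of_one_le_of_one_le (one_le_mul_of_one_le_of_one_le hD' hlen1) hHb')
  -- analytic upper bound
  have hxb : ‖x‖ ≤ anB K R L M S T u * Real.exp (-(L * S ^ 2)) := by
    have h1 := hext ℓ (le_max_left _ _) L M S₁ hML (by omega) Pc (lenB K L M S T * u ^ M)
      (fun i j k => (norm_aeval_le θ (p i j k) M (hpb i j k).1).trans
        (mul_le_mul_of_nonneg_right (hpb i j k).2 (by positivity)))
      (fun t' ht' w hw => by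
        rw [grid, Finset.mem_product, Finset.mem_Ioo, Finset.mem_Ioo] at hw
        exact hmin (S₁ - 1) (by omega) t' ht' w.1 w.2 (by rw [abs_le]; omega)
          (by rw [abs_le]; omega)) t (m, n) hm hn
    have h2 : ‖x‖ ≤ t.factorial * R ^ t * (lenB K L M S T * u ^ M * M ^ 2 * L *
        (R * S₁) ^ (2 * M) * R ^ L * Real.exp (-(L * S₁ ^ 2))) := h1
    refine h2.trans ?_
    have f1 : (t.factorial : ℝ) ≤ T ^ T := by
      have : t.factorial ≤ T ^ T := (Nat.factorial_le ht.le).trans (Nat.factorial_le_pow T)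
      exact_mod_cast this
    have f2 : R ^ t ≤ R ^ T := pow_le_pow_right₀ hR ht.le
    have f3 : (S₁ : ℝ) ≤ M := by exact_mod_cast hS₁M
    have f4 : (S : ℝ) ≤ S₁ := by exact_mod_cast hSS₁.le
    have f5 : Real.exp (-(L * S₁ ^ 2 : ℝ)) ≤ Real.exp (-(L * S ^ 2 : ℝ)) := by
      apply Real.exp_le_exp.2
      have : (L : ℝ) * S ^ 2 ≤ L * S₁ ^ 2 := by gcongr
      linarith
    have f6 := Real.exp_pos (-(L * S₁ ^ 2 : ℝ))
    rw [anB]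
    generalize Real.exp (-(L * S₁ ^ 2 : ℝ)) = y₁ at f5 f6 ⊢
    generalize Real.exp (-(L * S ^ 2 : ℝ)) = y₂ at f5 ⊢
    calc _ ≤ T ^ T * R ^ T * (lenB K L M S T * u ^ M * M ^ 2 * L * (R * M) ^ (2 * M) * R ^ L *
          y₂) := by gcongr
      _ = _ := by ring
  -- arithmetic representation
  have hrp : Rp θ v (M + d * (2 * M + 1)) (sizeB K D L M S T) (aeval θ q ^ (2 * M + 1) * x) := by
    rw [hx, E.iteratedDeriv_aux, Finset.mul_sum]
    have hterm : ∀ i ∈ range M, ∀ j ∈ range L, ∀ k ∈ range M,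
        Rp θ v (M + d * (2 * M + 1)) (D * lenB K L M S T * Hb K L M M T)
          (aeval θ (p i j k) * (aeval θ q ^ (2 * M + 1) *
            val E.e E.c (m * E.ω₁ + n * E.ω₂) (m * E.η₁ + n * E.η₂) t i j k)) := by
      intro i hi j hj k hk
      rw [Finset.mem_range] at hi hj hk
      have h1 := (Rp.poly (θ := θ) (v := v) (p i j k)).mul
        (hrep L M S₁ t i j k m n hi.le hj.le hk.le (by omega) hm hn)
      refine h1.mono ?_ ?_
      · have := (hpb i j k).1; omega
      · have g1 := Hb_mono hK (M := M) hL hS₁M ht.le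
        have g2 : len (p i j k) ≤ lenB K L M S T := (hpb i j k).2
        have g3 := len_nonneg (p i j k)
        have g4 : 0 ≤ Hb K L M S₁ t := zero_le_one.trans (one_le_Hb hK hL (by omega))
        gcongr
    have hs := Rp.sum (range M) fun i hi => Rp.sum (range L) fun j hj => Rp.sum (range M)
      fun k hk => hterm i hi j hj k hk
    convert hs using 1
    · rw [sizeB]
      simp only [Finset.sum_const, Finset.card_range, nsmul_eq_mul]
      push_cast; ring
    · refine Finset.sum_congr rfl fun i _ => ?_
      rw [Finset.mul_sum]
      refine Finset.sum_congr rfl fun j _ => ?_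
      rw [Finset.mul_sum]
      refine Finset.sum_congr rfl fun k _ => ?_
      rw [hPc]; ring
  obtain ⟨P, hP0, hP1, hP2, hP3⟩ := hpoly _ _ _ hsize1
    (mul_ne_zero (pow_ne_zero _ (hθ q hq)) hne) hrp
  refine ⟨P, hP0, hP1, hP2, hP3.trans ?_⟩
  rw [norm_mul, norm_pow]
  gcongr

end Chud

/-! ### Choice of parameters -/

namespace Chud
open Finset Filter Topology Polynomial IntermediateField

/-- Sequences of size at most `exp (O (s * 2 ^ s))`. -/
def Sm (u : ℕ → ℝ) : Prop :=
  ∃ C : ℝ, 0 ≤ C ∧ ∀ s : ℕ, 1 ≤ s → 0 ≤ u s ∧ u s ≤ Real.exp (C * (s * 2 ^ s))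

/-- Sequences of size at most `exp (O (s))`. -/
def Ex (u : ℕ → ℝ) : Prop :=
  ∃ C : ℝ, 0 ≤ C ∧ ∀ s : ℕ, 1 ≤ s → 0 ≤ u s ∧ u s ≤ Real.exp (C * s)

/-- Sequences of integers of size `O (2 ^ s)`. -/
def Ln (N : ℕ → ℕ) : Prop := ∃ C : ℕ, ∀ s : ℕ, 1 ≤ s → N s ≤ C * 2 ^ s

lemma Sm.mul {u v : ℕ → ℝ} (hu : Sm u) (hv : Sm v) : Sm fun s => u s * v s := by
  obtain ⟨C, hC, h⟩ := hu
  obtain ⟨C', hC', h'⟩ := hv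
  refine ⟨C + C', by positivity, fun s hs => ⟨mul_nonneg (h s hs).1 (h' s hs).1, ?_⟩⟩
  rw [add_mul, Real.exp_add]
  exact mul_le_mul (h s hs).2 (h' s hs).2 (h' s hs).1 (Real.exp_pos _).le

lemma Ex.mul {u v : ℕ → ℝ} (hu : Ex u) (hv : Ex v) : Ex fun s => u s * v s := by
  obtain ⟨C, hC, h⟩ := hu
  obtain ⟨C', hC', h'⟩ := hv
  refine ⟨C + C', by positivity, fun s hs => ⟨mul_nonneg (h s hs).1 (h' s hs).1, ?_⟩⟩
  rw [add_mul, Real.exp_add]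
  exact mul_le_mul (h s hs).2 (h' s hs).2 (h' s hs).1 (Real.exp_pos _).le

lemma Ex.const {a : ℝ} (ha : 0 ≤ a) : Ex fun _ => a := by
  refine ⟨a, ha, fun s hs => ⟨ha, ?_⟩⟩
  have h1 : (1 : ℝ) ≤ s := by exact_mod_cast hs
  have := Real.add_one_le_exp (a * s)
  nlinarith

lemma Ex.sm {u : ℕ → ℝ} (hu : Ex u) : Sm u := by
  obtain ⟨C, hC, h⟩ := hu
  refine ⟨C, hC, fun s hs => ⟨(h s hs).1, (h s hs).2.trans (Real.exp_le_exp.2 ?_)⟩⟩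
  have h1 : (1 : ℝ) ≤ 2 ^ s := one_le_pow₀ (by norm_num)
  have h2 : (0 : ℝ) ≤ s := Nat.cast_nonneg s
  have : (s : ℝ) ≤ s * 2 ^ s := le_mul_of_one_le_right h2 h1
  gcongr

lemma Sm.const {a : ℝ} (ha : 0 ≤ a) : Sm fun _ => a := (Ex.const ha).sm

lemma Ln.ex {N : ℕ → ℕ} (hN : Ln N) : Ex fun s => (N s : ℝ) := by
  obtain ⟨C, h⟩ := hN
  refine ⟨C + 1, by positivity, fun s hs => ⟨Nat.cast_nonneg _, ?_⟩⟩
  have h1 : (N s : ℝ) ≤ C * 2 ^ s := by exact_mod_cast h s hs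
  have h2 : (C : ℝ) ≤ Real.exp (C * s) := by
    have g1 : (1 : ℝ) ≤ s := by exact_mod_cast hs
    have := Real.add_one_le_exp ((C : ℝ) * s)
    nlinarith [(Nat.cast_nonneg C : (0 : ℝ) ≤ C)]
  have h3 : (2 : ℝ) ^ s ≤ Real.exp s := by
    rw [← mul_one (s : ℝ), Real.exp_nat_mul]
    have := Real.add_one_le_exp (1 : ℝ)
    gcongr; linarith
  refine h1.trans ?_
  rw [add_mul, one_mul, Real.exp_add]
  gcongr

lemma Sm.npow {b : ℕ → ℝ} {N : ℕ → ℕ} (hb : Ex b) (hN : Ln N) : Sm fun s => b s ^ N s := by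
  obtain ⟨c, hc, h⟩ := hb
  obtain ⟨C, h'⟩ := hN
  refine ⟨C * c, by positivity, fun s hs => ⟨pow_nonneg (h s hs).1 _, ?_⟩⟩
  have h1 : (N s : ℝ) ≤ C * 2 ^ s := by exact_mod_cast h' s hs
  calc b s ^ N s ≤ Real.exp (c * s) ^ N s := pow_le_pow_left₀ (h s hs).1 (h s hs).2 _
    _ = Real.exp (N s * (c * s)) := by rw [Real.exp_nat_mul]
    _ ≤ Real.exp ((C * 2 ^ s) * (c * s)) := Real.exp_le_exp.2 (by gcongr)
    _ = _ := by congr 1; ring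

lemma Sm.pow_const {u : ℕ → ℝ} (hu : Sm u) (n : ℕ) : Sm fun s => u s ^ n := by
  induction n with
  | zero => simpa using Sm.const zero_le_one
  | succ n ih => simpa only [pow_succ] using ih.mul hu

lemma Ln.add {N N' : ℕ → ℕ} (h : Ln N) (h' : Ln N') : Ln fun s => N s + N' s := by
  obtain ⟨C, h⟩ := h
  obtain ⟨C', h'⟩ := h'
  exact ⟨C + C', fun s hs => by have := h s hs; have := h' s hs; simp only [add_mul]; omega⟩

lemma Ln.const_mul {N : ℕ → ℕ} (h : Ln N) (a : ℕ) : Ln fun s => a * N s := by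
  obtain ⟨C, h⟩ := h
  exact ⟨a * C, fun s hs => by rw [mul_assoc]; exact Nat.mul_le_mul_left _ (h s hs)⟩

lemma Ln.const (a : ℕ) : Ln fun _ => a :=
  ⟨a, fun s _ => Nat.le_mul_of_pos_right _ (by positivity)⟩

lemma Ln.two_pow : Ln fun s => 2 ^ s := ⟨1, fun s _ => by simp⟩

lemma cube_le (n : ℕ) : (n + 1) ^ 3 ≤ 8 * 2 ^ n := by
  rcases lt_or_ge n 3 with h | h
  · interval_cases n <;> norm_num
  · induction n, h using Nat.le_induction with
    | base => norm_num
    | succ n hn ih =>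
      rw [pow_succ 2]
      have : (n + 1 + 1) ^ 3 ≤ 2 * (n + 1) ^ 3 := by
        obtain ⟨k, rfl⟩ := Nat.exists_eq_add_of_le hn
        ring_nf; nlinarith [Nat.zero_le k]
      omega

lemma Ln.sq : Ln fun s => s ^ 2 := by
  refine ⟨8, fun s _ => le_trans ?_ (cube_le s)⟩
  nlinarith [Nat.zero_le (s ^ 3), Nat.zero_le s]

lemma Sm.hb {K : ℝ} (hK : 0 ≤ K) {L M S T : ℕ → ℕ} (hL : Ln L) (hM : Ln M) (hS : Ln S)
    (hT : Ln T) : Sm fun s => Hb K (L s) (M s) (S s) (T s) := by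
  have h1 : Sm fun s => K ^ (2 * M s + L s + T s + 1) :=
    Sm.npow (Ex.const hK) ((((hM.const_mul 2).add hL).add hT).add (Ln.const 1))
  have h2 : Sm fun s => (S s : ℝ) ^ (2 * M s) := Sm.npow hS.ex (hM.const_mul 2)
  have h3 : Sm fun s => ((2 * M s + L s + T s : ℕ) : ℝ) ^ T s :=
    Sm.npow (((hM.const_mul 2).add hL).add hT).ex hT
  have := (h1.mul h2).mul h3
  simpa only [Hb, Nat.cast_add, Nat.cast_mul, Nat.cast_ofNat] using this

lemma Sm.lenB {K : ℝ} (hK : 0 ≤ K) {L M S T : ℕ → ℕ} (hL : Ln L) (hM : Ln M) (hS : Ln S)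
    (hT : Ln T) : Sm fun s => lenB K (L s) (M s) (S s) (T s) := by
  have := hM.ex.sm.mul (((hM.ex.sm.mul (hL.ex.sm.mul hM.ex.sm)).mul hM.ex.sm).mul
    (Sm.hb hK hL hM hS hT))
  simpa only [Chud.lenB, Nat.cast_mul] using this

lemma Sm.sizeB {K : ℝ} (hK : 0 ≤ K) (D : ℕ) {L M S T : ℕ → ℕ} (hL : Ln L) (hM : Ln M) (hS : Ln S)
    (hT : Ln T) : Sm fun s => sizeB K D (L s) (M s) (S s) (T s) := by
  have := (hM.ex.sm.mul (hL.ex.sm.mul hM.ex.sm)).mul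
    (((Sm.const (Nat.cast_nonneg D)).mul (Sm.lenB hK hL hM hS hT)).mul (Sm.hb hK hL hM hM hT))
  simpa only [Chud.sizeB, Nat.cast_mul] using this

lemma Sm.anB {K R : ℝ} (hK : 0 ≤ K) (hR : 0 ≤ R) {u : ℝ} (hu : 0 ≤ u) {L M S T : ℕ → ℕ}
    (hL : Ln L) (hM : Ln M) (hS : Ln S) (hT : Ln T) :
    Sm fun s => anB K R (L s) (M s) (S s) (T s) u := by
  have h1 := (Sm.npow hT.ex hT).mul (Sm.npow (Ex.const hR) hT)
  have h2 := ((((((Sm.lenB hK hL hM hS hT).mul (Sm.npow (Ex.const hu) hM)).mul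
    (hM.ex.sm.pow_const 2)).mul hL.ex.sm).mul
    (Sm.npow ((Ex.const hR).mul hM.ex) (hM.const_mul 2)))).mul (Sm.npow (Ex.const hR) hL)
  exact h1.mul h2

/-- For `f, g` with integral algebraic initial data, the periods and quasi-periods are not all
algebraic over a field `ℚ(θ)`, `θ` transcendental. -/
theorem Ell.not_algebraic (E : Ell) (he : IsIntegral ℤ E.e) (hc : IsIntegral ℤ E.c) {θ : ℂ}
    (hθ : ∀ Q : ℤ[X], Q ≠ 0 → aeval θ Q ≠ 0) (h1 : IsAlgebraic ℚ⟮θ⟯ E.ω₁)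
    (h2 : IsAlgebraic ℚ⟮θ⟯ E.ω₂) (h3 : IsAlgebraic ℚ⟮θ⟯ E.η₁) (h4 : IsAlgebraic ℚ⟮θ⟯ E.η₂) :
    False := by
  obtain ⟨D, v, hD, hv, q, hq, d, K, hK, hrep⟩ := E.exists_rep_val he hc hθ h1 h2 h3 h4
  have hrep' : RepVal E θ v q d K := hrep
  obtain ⟨c, hc, R, hR, ℓ, hℓ, hstep⟩ := E.step hD hv hθ hq hK hrep'
  set μ := 18 * ℓ * (D * D) * (1 + 3 * d) with hμ
  have hμ1 : 1 ≤ μ := by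
    have : 0 < μ := by positivity
    exact this
  set M : ℕ → ℕ := fun s => μ * s ^ 2 with hMdef
  set L : ℕ → ℕ := fun s => 2 ^ s with hLdef
  set S : ℕ → ℕ := fun s => s ^ 2 with hSdef
  set T : ℕ → ℕ := fun s => ℓ * L s with hTdef
  have lL : Ln L := Ln.two_pow
  have lS : Ln S := Ln.sq
  have lM : Ln M := Ln.sq.const_mul μ
  have lT : Ln T := lL.const_mul ℓ
  have hK0 : 0 ≤ K := by linarith
  have hR0 : 0 ≤ R := by linarith
  set u := max 1 ‖θ‖ with hu
  have hu0 : 0 ≤ u := zero_le_one.trans (le_max_left _ _)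
  have lN : Ln fun s => M s + d * (2 * M s + 1) :=
    lM.add (((lM.const_mul 2).add (Ln.const 1)).const_mul d)
  have size := Sm.sizeB hK0 D lL lM lS lT
  obtain ⟨C₁, hC₁, hlog⟩ := (Sm.const (Nat.cast_nonneg D.factorial)).mul (size.pow_const D)
  obtain ⟨C₂, hC₂, hsm⟩ := ((Sm.const hc.le).mul ((Sm.npow (Ex.const (norm_nonneg (aeval θ q)))
    ((lM.const_mul 2).add (Ln.const 1))).mul (Sm.anB hK0 hR0 hu0 lL lM lS lT))).mul
    ((size.mul (Sm.npow (Ex.const hu0) lN)).pow_const D)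
  set A : ℕ := D * (μ + 3 * d * μ) with hA
  have hA1 : (1 : ℝ) ≤ A := by
    have : 0 < A := by positivity
    exact_mod_cast this
  set B : ℝ := C₁ + 8 * A ^ 2 with hB
  have hB0 : 0 < B := by positivity
  have hlarge : ∀ᶠ s in atTop, M s ≤ L s := by
    have h := tendsto_pow_const_div_const_pow_of_one_lt 2 (r := (2 : ℝ)) (by norm_num)
    have hμ0 : (0 : ℝ) < μ := by exact_mod_cast hμ1
    filter_upwards [h.eventually_lt_const (show (0 : ℝ) < 1 / μ by positivity)] with s hs
    rw [div_lt_div_iff₀ (by positivity) hμ0] at hs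
    have : (μ * s ^ 2 : ℝ) ≤ 2 ^ s := by linarith
    exact_mod_cast this
  refine gelfond_criterion θ hθ (fun n => A * ((n : ℝ) + 1) ^ 2) (fun n => B * ((n : ℝ) + 1) * 2 ^ n)
    4 (by norm_num) ?_ ?_ ?_ ?_ ?_ ?_ ?_ ?_
  · intro n
    exact one_le_mul_of_one_le_of_one_le hA1
      (one_le_pow₀ (by linarith [(Nat.cast_nonneg n : (0:ℝ) ≤ n)]))
  · intro n
    have hcu : ((n : ℝ) + 1) ^ 3 ≤ 8 * 2 ^ n := by exact_mod_cast cube_le n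
    have hn : (0 : ℝ) ≤ (n : ℝ) + 1 := by positivity
    calc (A * ((n : ℝ) + 1) ^ 2) ^ 2 = (A : ℝ) ^ 2 * ((n + 1) * (n + 1) ^ 3) := by ring
      _ ≤ (A : ℝ) ^ 2 * ((n + 1) * (8 * 2 ^ n)) := by gcongr
      _ = 8 * (A : ℝ) ^ 2 * ((n : ℝ) + 1) * 2 ^ n := by ring
      _ ≤ _ := by
        gcongr
        rw [hB]; linarith
  · intro n; push_cast; gcongr; linarith
  · intro n
    push_cast
    gcongr
    · linarith
    · norm_num
    · omega
  · intro n
    push_cast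
    have hn : (0 : ℝ) ≤ n := Nat.cast_nonneg n
    have : ((n : ℝ) + 1 + 1) ^ 2 ≤ 4 * (n + 1) ^ 2 := by nlinarith
    calc _ ≤ A * (4 * ((n : ℝ) + 1) ^ 2) := by gcongr
      _ = _ := by ring
  · intro n
    push_cast
    have hn : (0 : ℝ) ≤ n := Nat.cast_nonneg n
    calc _ ≤ B * (2 * ((n : ℝ) + 1)) * 2 ^ (n + 1) := by gcongr; linarith
      _ = _ := by rw [pow_succ]; ring
  · refine tendsto_atTop_mono (f := fun n : ℕ => B * (n : ℝ)) (fun n => ?_)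
      (tendsto_natCast_atTop_atTop.const_mul_atTop hB0)
    have hn : (0 : ℝ) ≤ n := Nat.cast_nonneg n
    have h2 : (1 : ℝ) ≤ 2 ^ n := one_le_pow₀ (by norm_num)
    calc B * (n : ℝ) ≤ B * (n + 1) * 1 := by nlinarith
      _ ≤ _ := by gcongr
  · intro κ
    obtain ⟨N₀, hN₀⟩ := eventually_atTop.1 hlarge
    obtain ⟨N₁, hN₁⟩ := exists_nat_gt (C₂ + 8 * (|κ| * A * B))
    refine ⟨max (max N₀ N₁) 1, fun s hs => ?_⟩
    have hs1 : 1 ≤ s := (le_max_right _ _).trans hs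
    have hsN₀ : N₀ ≤ s := (le_max_left _ _).trans ((le_max_left _ _).trans hs)
    have hsN₁ : N₁ ≤ s := (le_max_right _ _).trans ((le_max_left _ _).trans hs)
    have hS1 : 1 ≤ S s := Nat.one_le_pow _ _ hs1
    have hM1 : 1 ≤ M s := Nat.mul_pos hμ1 hS1
    have hs1' : (1 : ℝ) ≤ s := by exact_mod_cast hs1
    have hcount : 2 * ((ℓ * L s * ((2 * S s + 1) * (2 * S s + 1))) * (D * D) *
        (M s + d * (2 * M s + 1))) ≤ M s * (L s * M s) * M s := by
      have e1 : 2 * S s + 1 ≤ 3 * S s := by omega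
      have e2 : M s + d * (2 * M s + 1) ≤ (1 + 3 * d) * M s := by nlinarith
      calc _ ≤ 2 * ((ℓ * L s * ((3 * S s) * (3 * S s))) * (D * D) * ((1 + 3 * d) * M s)) := by
            gcongr
        _ = μ * (S s * S s * M s * L s) := by rw [hμ]; ring
        _ ≤ (μ * μ) * (S s * S s * M s * L s) :=
            Nat.mul_le_mul_right _ (Nat.le_mul_of_pos_right _ hμ1)
        _ = _ := by simp only [hMdef, hSdef]; ring
    obtain ⟨P, hP0, hP1, hP2, hP3⟩ := hstep (L s) (M s) (S s) hM1 (hN₀ s hsN₀) hS1 hcount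
    have hss : ((s : ℝ)) ^ 2 ≤ (s + 1) ^ 2 := by gcongr; linarith
    refine ⟨P, hP0, ?_, ?_, ?_⟩
    · have e2 : D * (M s + d * (2 * M s + 1)) ≤ A * s ^ 2 := by
        have : d * (2 * M s + 1) ≤ d * (3 * M s) := Nat.mul_le_mul_left _ (by omega)
        calc _ ≤ D * (M s + d * (3 * M s)) := by gcongr
          _ = _ := by rw [hA]; simp only [hMdef]; ring
      have : (P.natDegree : ℝ) ≤ A * (s : ℝ) ^ 2 := by exact_mod_cast hP1.trans e2
      exact this.trans (by gcongr)
    · have hm := one_le_mah hP0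
      have h5 := Real.log_le_log (by linarith) (hP2.trans (hlog s hs1).2)
      rw [Real.log_exp] at h5
      refine h5.trans ?_
      have : C₁ ≤ B := by rw [hB]; nlinarith
      calc C₁ * (s * 2 ^ s) ≤ B * ((s + 1) * 2 ^ s) := by gcongr; linarith
        _ = _ := by ring
    · have h6 : ‖aeval θ P‖ ≤ Real.exp (C₂ * (s * 2 ^ s)) * Real.exp (-(2 ^ s * s ^ 4)) := by
        refine hP3.trans ?_
        have h7 := (hsm s hs1).2
        have e1 : Real.exp (-((L s : ℕ) * (S s : ℕ) ^ 2 : ℝ)) = Real.exp (-(2 ^ s * s ^ 4)) := by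
          simp only [hLdef, hSdef]; push_cast; congr 2; ring
        rw [e1]
        refine le_trans (le_of_eq ?_) (mul_le_mul_of_nonneg_right h7 (Real.exp_pos _).le)
        ring
      rw [← Real.exp_add] at h6
      have h8 := Real.log_le_log (norm_pos_iff.2 (hθ P hP0)) h6
      rw [Real.log_exp] at h8
      refine h8.trans_lt ?_
      have h9 : C₂ + 8 * (|κ| * A * B) < s := hN₁.trans_le (by exact_mod_cast hsN₁)
      have h10 : κ * (A * ((s : ℝ) + 1) ^ 2 * (B * (s + 1) * 2 ^ s)) ≤
          (8 * (|κ| * A * B)) * (s ^ 3 * 2 ^ s) := by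
        have g1 : ((s : ℝ) + 1) ^ 3 ≤ (2 * s) ^ 3 := by gcongr; linarith
        calc _ ≤ |κ| * (A * ((s : ℝ) + 1) ^ 2 * (B * (s + 1) * 2 ^ s)) :=
              mul_le_mul_of_nonneg_right (le_abs_self κ) (by positivity)
          _ = |κ| * A * B * 2 ^ s * (s + 1) ^ 3 := by ring
          _ ≤ |κ| * A * B * 2 ^ s * (2 * s) ^ 3 := by gcongr
          _ = _ := by ring
      have h11 : C₂ * (s * 2 ^ s) ≤ C₂ * ((s : ℝ) ^ 3 * 2 ^ s) := by
        have : (s : ℝ) ≤ s ^ 3 := le_self_pow₀ hs1' (by norm_num)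
        gcongr
      have h12 : (0 : ℝ) < s ^ 3 * 2 ^ s := by positivity
      have h13 := mul_lt_mul_of_pos_right h9 h12
      have h14 : (2 : ℝ) ^ s * s ^ 4 = s * (s ^ 3 * 2 ^ s) := by ring
      rw [h14]
      linarith

end Chud

/-! ### The Weierstrass zeta function -/

namespace Chud
open Finset Filter Topology

/-- The Weierstrass zeta function of the lattice of `L` without its term at `l₀`. -/
noncomputable def zetaX (L : PeriodPair) (l₀ z : ℂ) : ℂ :=
  ∑' l : L.lattice, if l.1 = l₀ then 0 else (1 / (z - l) + 1 / l + z / (l : ℂ) ^ 2)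

/-- The Weierstrass zeta function of the lattice of `L`; the term at the lattice point `0` is
`1 / z`, as the junk values of `1 / 0` and `z / 0` vanish. -/
noncomputable def zetaL (L : PeriodPair) (z : ℂ) : ℂ :=
  ∑' l : L.lattice, (1 / (z - l) + 1 / l + z / (l : ℂ) ^ 2)

lemma zeta_bound (r : ℝ) (hr : 0 < r) (s : ℂ) (hs : ‖s‖ < r) (l : ℂ) (h : 2 * r ≤ ‖l‖) :
    ‖1 / (s - l) + 1 / l + s / l ^ 2‖ ≤ 2 * r ^ 2 * ‖l‖ ^ (-3 : ℝ) := by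
  have h1 : 0 < ‖l‖ := by linarith
  have hl : l ≠ 0 := norm_pos_iff.mp h1
  have hsl : s - l ≠ 0 := by
    intro h0
    rw [sub_eq_zero] at h0
    rw [h0] at hs
    linarith
  have e : 1 / (s - l) + 1 / l + s / l ^ 2 = s ^ 2 / ((s - l) * l ^ 2) := by
    field_simp
    ring
  rw [e, norm_div, norm_mul, norm_pow, norm_pow]
  have h2 : ‖l‖ / 2 ≤ ‖s - l‖ := by
    rw [norm_sub_rev]
    exact .trans (by linarith) (norm_sub_norm_le l s)
  have e2 : ‖l‖ ^ (-3 : ℝ) = 1 / ‖l‖ ^ 3 := by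
    rw [Real.rpow_neg h1.le, one_div]
    norm_cast
  rw [e2]
  calc ‖s‖ ^ 2 / (‖s - l‖ * ‖l‖ ^ 2) ≤ r ^ 2 / (‖l‖ / 2 * ‖l‖ ^ 2) := by gcongr
    _ = _ := by field

lemma hasSumLU_zetaX (L : PeriodPair) (l₀ : ℂ) :
    HasSumLocallyUniformly
      (fun (l : L.lattice) (z : ℂ) ↦ if l.1 = l₀ then 0 else (1 / (z - l) + 1 / l + z / (l : ℂ) ^ 2))
      (zetaX L l₀) := by
  refine L.hasSumLocallyUniformly_aux (u := fun r l => 2 * r ^ 2 * ‖l‖ ^ (-3 : ℝ)) _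
    (fun _ _ ↦ (ZLattice.summable_norm_rpow _ _ (by simp; norm_num)).mul_left _) fun r hr ↦
    Filter.eventually_atTop.mpr ⟨2 * r, ?_⟩
  rintro _ h s hs l rfl
  split_ifs
  · simp only [norm_zero]
    positivity
  · exact zeta_bound r hr s hs l h

lemma zetaX_diff (L : PeriodPair) (l₀ : ℂ) :
    DifferentiableOn ℂ (zetaX L l₀) (L.lattice \ {l₀})ᶜ := by
  refine (hasSumLU_zetaX L l₀).hasSumLocallyUniformlyOn.differentiableOn
    (.of_forall fun s ↦ .fun_sum fun i hi ↦ ?_) L.isOpen_compl_lattice_sdiff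
  split_ifs with h
  · simp
  · have : ∀ x ∈ ((L.lattice : Set ℂ) \ {l₀})ᶜ, x - i ≠ 0 := by
      intro x hx h0
      rw [sub_eq_zero] at h0
      subst h0
      exact hx ⟨i.2, h⟩
    exact .add (.add (.div (by fun_prop) (by fun_prop) this) (by fun_prop)) (by fun_prop)

lemma zetaX_deriv (L : PeriodPair) (l₀ : ℂ) :
    Set.EqOn (deriv (zetaX L l₀)) (fun z => - L.weierstrassPExcept l₀ z) (L.lattice \ {l₀})ᶜ := by
  refine ((hasSumLU_zetaX L l₀).tendstoLocallyUniformlyOn.deriv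
    (.of_forall fun s ↦ ?_) L.isOpen_compl_lattice_sdiff).unique ?_
  · refine .fun_sum fun i hi ↦ ?_
    split_ifs with h
    · simp
    have : ∀ x ∈ ((L.lattice : Set ℂ) \ {l₀})ᶜ, x - i ≠ 0 := by
      intro x hx h0
      rw [sub_eq_zero] at h0
      subst h0
      exact hx ⟨i.2, h⟩
    exact .add (.add (.div (by fun_prop) (by fun_prop) this) (by fun_prop)) (by fun_prop)
  · have := (L.hasSumLocallyUniformly_weierstrassPExcept l₀).tendstoLocallyUniformlyOn
      (s := ((L.lattice : Set ℂ) \ {l₀})ᶜ)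
    have h2 := TendstoLocallyUniformlyOn.neg this
    refine h2.congr ?_
    intro s l hl
    have key : ∀ x : L.lattice, HasDerivAt (fun z : ℂ => if x.1 = l₀ then 0 else
        (1 / (z - x) + 1 / x + z / (x : ℂ) ^ 2))
        (-(if x.1 = l₀ then 0 else (1 / (l - x) ^ 2 - 1 / (x : ℂ) ^ 2))) l := by
      intro x
      split_ifs with h
      · simpa using hasDerivAt_const l (0 : ℂ)
      have h0 : l - x ≠ 0 := by
        intro h0
        rw [sub_eq_zero] at h0
        subst h0
        exact hl ⟨x.2, h⟩
      have a1 := (((hasDerivAt_id l).sub_const (x : ℂ)).inv h0)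
      have a2 := (hasDerivAt_id l).div_const ((x : ℂ) ^ 2)
      have a3 := (a1.add_const (1 / (x : ℂ))).add a2
      have a4 : HasDerivAt (fun z : ℂ => (z - x)⁻¹ + 1 / (x : ℂ) + z / (x : ℂ) ^ 2)
        (-1 / (l - x) ^ 2 + 1 / (x : ℂ) ^ 2) l := a3
      simp only [one_div] at a4 ⊢
      convert a4 using 1
      ring
    simp only [Function.comp_apply, Pi.neg_apply]
    rw [deriv_fun_sum (fun x _ => (key x).differentiableAt), ← Finset.sum_neg_distrib]
    exact Finset.sum_congr rfl fun x _ => (key x).deriv.symm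

/-- Adding the omitted term to `zetaX` recovers `ζ`, including at the poles with their junk values. -/
lemma zetaX_add (L : PeriodPair) (l₀ : L.lattice) (z : ℂ) :
    zetaX L l₀ z + (1 / (z - l₀.1) + 1 / l₀.1 + z / l₀.1 ^ 2) = zetaL L z := by
  trans zetaX L l₀ z + ∑' i : L.lattice, if i.1 = l₀.1 then
    (1 / (z - l₀.1) + 1 / l₀.1 + z / l₀.1 ^ 2) else 0
  · congr 1
    rw [tsum_eq_single l₀]
    · simp
    · intro b hb
      rw [if_neg (fun h => hb (Subtype.ext h))]
  rw [zetaX, zetaL, ← Summable.tsum_add]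
  · congr with w; split_ifs with h <;> simp only [zero_add, add_zero, h]
  · exact ⟨_, (hasSumLU_zetaX L l₀).hasSum (x := z)⟩
  · refine summable_of_hasFiniteSupport ((Set.finite_singleton l₀).subset ?_)
    intro i hi
    simp only [Function.mem_support, ne_eq, ite_eq_right_iff, Classical.not_imp] at hi
    exact Subtype.ext hi.1

lemma zetaX_notMem (L : PeriodPair) (l₀ : ℂ) (hl : l₀ ∉ L.lattice) : zetaX L l₀ = zetaL L := by
  delta zetaX zetaL
  congr! 3 with z l
  have : l.1 ≠ l₀ := by rintro rfl; simp at hl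
  simp [this]

lemma zetaL_neg (L : PeriodPair) (z : ℂ) : zetaL L (-z) = - zetaL L z := by
  unfold zetaL
  rw [← (Equiv.neg L.lattice).tsum_eq, ← tsum_neg]
  congr with l
  simp only [Equiv.neg_apply, NegMemClass.coe_neg]
  rw [show (-z - -(l:ℂ)) = -(z - l) by ring]
  simp only [div_neg, even_two, Even.neg_pow]
  ring

lemma zetaX_zero_neg (L : PeriodPair) (z : ℂ) : zetaX L 0 (-z) = - zetaX L 0 z := by
  have h1 := zetaX_add L 0 z
  have h2 := zetaX_add L 0 (-z)
  rw [zetaL_neg, ← h1] at h2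
  simp only [ZeroMemClass.coe_zero, sub_zero, div_neg] at h2
  simp only [div_zero, ne_eq, OfNat.ofNat_ne_zero, not_false_eq_true, zero_pow] at h2
  linear_combination h2

lemma zetaL_analytic (L : PeriodPair) {z : ℂ} (hz : z ∉ L.lattice) : AnalyticAt ℂ (zetaL L) z := by
  rw [← zetaX_notMem L z hz]
  refine (zetaX_diff L z).analyticAt (L.isOpen_compl_lattice_sdiff.mem_nhds ?_)
  simp

lemma zetaX_analytic (L : PeriodPair) (z : ℂ) : AnalyticAt ℂ (zetaX L z) z := by
  refine (zetaX_diff L z).analyticAt (L.isOpen_compl_lattice_sdiff.mem_nhds ?_)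
  simp

lemma zetaL_deriv (L : PeriodPair) {z : ℂ} (hz : z ∉ L.lattice) :
    HasDerivAt (zetaL L) (- L.weierstrassP z) z := by
  have := (zetaL_analytic L hz).differentiableAt.hasDerivAt
  rw [← zetaX_notMem L z hz, zetaX_deriv L z (by simp), L.weierstrassPExcept_of_notMem z hz,
    zetaX_notMem L z hz] at this
  exact this

end Chud

namespace Chud
open Finset Filter Topology

lemma lattice_countable (L : PeriodPair) : (L.lattice : Set ℂ).Countable := by
  have : Countable L.lattice := L.latticeEquivProd.toEquiv.countable_iff.mpr inferInstance
  exact Set.countable_coe_iff.mp this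

lemma lattice_open (L : PeriodPair) : IsOpen ((L.lattice : Set ℂ)ᶜ) := L.isClosed_lattice.isOpen_compl

lemma lattice_conn (L : PeriodPair) : IsPreconnected ((L.lattice : Set ℂ)ᶜ) :=
  ((lattice_countable L).isPathConnected_compl_of_one_lt_rank
    (by rw [Complex.rank_real_complex]; exact Cardinal.one_lt_two)).isConnected.isPreconnected

lemma lattice_freq (L : PeriodPair) (p : ℂ) : ∀ᶠ z in 𝓝[≠] p, z ∉ L.lattice := by
  have : ((L.lattice : Set ℂ) \ {p})ᶜ ∈ 𝓝[≠] p :=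
    mem_nhdsWithin_of_mem_nhds (L.compl_lattice_sdiff_singleton_mem_nhds p)
  filter_upwards [this, self_mem_nhdsWithin] with z h1 h2 h3
  exact h1 ⟨h3, h2⟩

/-- The increment of `ζ` along a period is constant, and equals the (junk) value of `ζ` at that
period. -/
lemma zetaL_add_aux (L : PeriodPair) {l z : ℂ} (hl : l ∈ L.lattice) (hz : z ∉ L.lattice) :
    zetaL L (z + l) = zetaL L z + zetaL L l := by
  have hadd : ∀ w, w ∉ L.lattice → w + l ∉ L.lattice := fun w hw h =>
    hw (by simpa using L.lattice.sub_mem h hl)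
  have hd : ∀ w, w ∉ L.lattice → HasDerivAt (fun w => zetaL L (w + l) - zetaL L w) 0 w := by
    intro w hw
    have h1 := (zetaL_deriv L (hadd w hw)).comp_add_const w l
    have h2 := h1.sub (zetaL_deriv L hw)
    have h3 := L.weierstrassP_add_coe w ⟨l, hl⟩
    simp only at h3
    rw [h3] at h2
    simpa using! h2
  obtain ⟨a, ha⟩ := (lattice_open L).exists_is_const_of_deriv_eq_zero (lattice_conn L)
    (f := fun w => zetaL L (w + l) - zetaL L w)
    (fun w hw => (hd w hw).differentiableAt.differentiableWithinAt) (fun w hw => (hd w hw).deriv)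
  have e : ∀ w, w ∉ L.lattice → zetaX L l (w + l) + 1 / l + (w + l) / l ^ 2 = zetaX L 0 w + a := by
    intro w hw
    have h1 := ha w hw
    have h2 := zetaX_add L ⟨l, hl⟩ (w + l)
    have h3 := zetaX_add L 0 w
    simp only [ZeroMemClass.coe_zero, sub_zero, div_zero, add_sub_cancel_right, ne_eq,
      OfNat.ofNat_ne_zero, not_false_eq_true, zero_pow] at h2 h3
    linear_combination h1 + h2 - h3
  -- letting `w → 0` identifies the constant `a` with the junk value of `ζ` at the pole `l`
  have c1 : ContinuousAt (fun w => zetaX L l (w + l) + 1 / l + (w + l) / l ^ 2) 0 := by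
    have := (zetaX_analytic L l).continuousAt
    have h2 : ContinuousAt (fun w : ℂ => zetaX L l (w + l)) 0 :=
      ContinuousAt.comp (g := zetaX L l) (f := fun w : ℂ => w + l) (by simpa using this)
        (by fun_prop)
    fun_prop
  have c2 : ContinuousAt (fun w => zetaX L 0 w + a) 0 := by
    have := (zetaX_analytic L 0).continuousAt
    fun_prop
  have t1 := c1.tendsto.mono_left (nhdsWithin_le_nhds (s := {0}ᶜ))
  have t2 := c2.tendsto.mono_left (nhdsWithin_le_nhds (s := {0}ᶜ))
  have t3 := t2.congr' ((lattice_freq L 0).mono fun w hw => (e w hw).symm)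
  have e0 := tendsto_nhds_unique t1 t3
  have z0 : zetaX L 0 0 = 0 := by
    have := zetaX_zero_neg L 0
    rw [neg_zero] at this
    linear_combination this / 2
  have h2 := zetaX_add L ⟨l, hl⟩ l
  simp only [sub_self, div_zero, zero_add] at h2 e0
  have h1 : zetaL L (z + l) - zetaL L z = a := ha z hz
  linear_combination h1 - e0 + h2 - z0

lemma zetaL_coe_add (L : PeriodPair) {l m : ℂ} (hl : l ∈ L.lattice) (hm : m ∈ L.lattice) :
    zetaL L (l + m) = zetaL L l + zetaL L m := by
  have hz := L.ω₁_div_two_notMem_lattice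
  have hadd : L.ω₁ / 2 + l ∉ L.lattice := fun h => hz (by simpa using L.lattice.sub_mem h hl)
  have h1 := zetaL_add_aux L (L.lattice.add_mem hl hm) hz
  have h2 := zetaL_add_aux L hl hz
  have h3 := zetaL_add_aux L hm hadd
  rw [← add_assoc] at h1
  linear_combination - h1 + h2 + h3

lemma zetaL_add (L : PeriodPair) {l : ℂ} (hl : l ∈ L.lattice) (z : ℂ) :
    zetaL L (z + l) = zetaL L z + zetaL L l := by
  by_cases hz : z ∈ L.lattice
  · exact zetaL_coe_add L hz hl
  · exact zetaL_add_aux L hl hz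

lemma zetaL_coe (L : PeriodPair) (m n : ℤ) :
    zetaL L (m * L.ω₁ + n * L.ω₂) = m * zetaL L L.ω₁ + n * zetaL L L.ω₂ := by
  let φ : L.lattice →+ ℂ := AddMonoidHom.mk' (fun l => zetaL L l) fun a b =>
    zetaL_coe_add L a.2 b.2
  have h1 := map_zsmul φ m ⟨L.ω₁, L.ω₁_mem_lattice⟩
  have h2 := map_zsmul φ n ⟨L.ω₂, L.ω₂_mem_lattice⟩
  have h3 := map_add φ (m • ⟨L.ω₁, L.ω₁_mem_lattice⟩) (n • ⟨L.ω₂, L.ω₂_mem_lattice⟩)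
  rw [h1, h2] at h3
  simpa [φ] using h3

lemma zetaL_period (L : PeriodPair) {l : ℂ} (hl : l ∈ L.lattice) :
    zetaL L l = 2 * zetaL L (l / 2) := by
  have h1 := zetaL_add L hl (-(l / 2))
  rw [zetaL_neg, show -(l / 2) + l = l / 2 by ring] at h1
  linear_combination - h1

/-- The half-period `(ω₁ + ω₂)/2`. -/
noncomputable def uu (L : PeriodPair) : ℂ := (L.ω₁ + L.ω₂) / 2

lemma uu_notMem (L : PeriodPair) : uu L ∉ L.lattice := by
  have := (PeriodPair.mul_ω₁_add_mul_ω₂_mem_lattice (L := L) (α := 1 / 2) (β := 1 / 2)).not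
  have e : ((1 / 2 : ℚ) : ℂ) * L.ω₁ + ((1 / 2 : ℚ) : ℂ) * L.ω₂ = uu L := by
    unfold uu; push_cast; ring
  rw [e] at this
  rw [this]
  intro h
  have := h.1
  rw [show (1 / 2 : ℚ).den = 2 by norm_num] at this
  omega
end Chud

/-! ### Local behaviour at lattice points and half-periods -/

namespace Chud
open Finset Filter Topology

lemma P_deriv (L : PeriodPair) {z : ℂ} (hz : z ∉ L.lattice) :
    HasDerivAt L.weierstrassP (L.derivWeierstrassP z) z := by
  have := (L.analyticOnNhd_weierstrassP z hz).differentiableAt.hasDerivAt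
  rwa [L.deriv_weierstrassP] at this

lemma P_not_const (L : PeriodPair) (p : ℂ) (hp : p ∉ L.lattice) (a : ℂ) :
    ¬ ∀ᶠ z in 𝓝 p, L.weierstrassP z = a := by
  intro h
  have h1 : Set.EqOn L.weierstrassP (fun _ => a) (L.lattice : Set ℂ)ᶜ :=
    L.analyticOnNhd_weierstrassP.eqOn_of_preconnected_of_eventuallyEq
      (fun _ _ => analyticAt_const) (lattice_conn L) hp h
  have h2 := L.order_weierstrassP 0 L.lattice.zero_mem
  have h3 : L.weierstrassP =ᶠ[𝓝[≠] 0] fun _ => a :=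
    (lattice_freq L 0).mono fun w hw => h1 hw
  rw [meromorphicOrderAt_congr h3] at h2
  have := (analyticAt_const (𝕜 := ℂ) (v := a) (x := (0:ℂ))).meromorphicOrderAt_nonneg
  rw [h2] at this
  exact absurd this (by decide)

lemma dP_deriv (L : PeriodPair) {z : ℂ} (hz : z ∉ L.lattice) :
    HasDerivAt L.derivWeierstrassP (6 * L.weierstrassP z ^ 2 - L.g₂ / 2) z := by
  have hd := (L.analyticOnNhd_derivWeierstrassP z hz).differentiableAt.hasDerivAt
  have hA : AnalyticOnNhd ℂ (fun w => deriv L.derivWeierstrassP w -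
      (6 * L.weierstrassP w ^ 2 - L.g₂ / 2)) (L.lattice : Set ℂ)ᶜ := fun w hw =>
    (L.analyticOnNhd_derivWeierstrassP w hw).deriv.sub
      ((analyticAt_const.mul ((L.analyticOnNhd_weierstrassP w hw).pow 2)).sub analyticAt_const)
  have hmul : ∀ w ∈ (L.lattice : Set ℂ)ᶜ, L.derivWeierstrassP w *
      (deriv L.derivWeierstrassP w - (6 * L.weierstrassP w ^ 2 - L.g₂ / 2)) = 0 := by
    intro w hw
    have d1 := (L.analyticOnNhd_derivWeierstrassP w hw).differentiableAt.hasDerivAt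
    have d2 := P_deriv L hw
    have e1 := d1.pow 2
    have e2 := (((d2.pow 3).const_mul 4).sub (d2.const_mul L.g₂)).sub_const L.g₃
    have e3 : (L.derivWeierstrassP ^ 2) =ᶠ[𝓝 w] fun x => 4 * L.weierstrassP x ^ 3 -
        L.g₂ * L.weierstrassP x - L.g₃ := by
      filter_upwards [(lattice_open L).mem_nhds hw] with x hx
      exact L.derivWeierstrassP_sq x hx
    have e4 := (e1.congr_of_eventuallyEq e3.symm).unique e2
    push_cast at e4
    simp only [pow_one] at e4
    linear_combination e4 / 2
  rcases L.analyticOnNhd_derivWeierstrassP.eq_zero_or_eq_zero_of_mul_eq_zero hA hmul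
    (lattice_conn L) with h | h
  · exfalso
    obtain ⟨a, ha⟩ := (lattice_open L).exists_is_const_of_deriv_eq_zero (lattice_conn L)
      (f := L.weierstrassP)
      (fun w hw => (P_deriv L hw).differentiableAt.differentiableWithinAt)
      (fun w hw => by rw [L.deriv_weierstrassP]; exact h w hw)
    exact P_not_const L z hz a (by
      filter_upwards [(lattice_open L).mem_nhds hz] with x hx using ha x hx)
  · have := h z hz
    rw [sub_eq_zero] at this
    rwa [this] at hd

/-- `℘` has a double pole with leading coefficient `1` at each lattice point. -/
lemma P_ord (L : PeriodPair) {l : ℂ} (hl : l ∈ L.lattice) : ∃ h : ℂ → ℂ, AnalyticAt ℂ h l ∧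
    h l = 1 ∧ ∀ᶠ z in 𝓝[≠] l, (z - l) ^ 2 * L.weierstrassP z = h z := by
  refine ⟨fun z => (z - l) ^ 2 * (L.weierstrassPExcept l z - 1 / l ^ 2) + 1, ?_, by simp, ?_⟩
  · have := L.analyticAt_weierstrassPExcept l
    fun_prop
  · filter_upwards [self_mem_nhdsWithin] with z hz
    have h0 : z - l ≠ 0 := sub_ne_zero.mpr hz
    rw [← L.weierstrassPExcept_add ⟨l, hl⟩ z]
    simp only
    field

lemma zetaL_ord (L : PeriodPair) {l : ℂ} (hl : l ∈ L.lattice) : ∃ h : ℂ → ℂ, AnalyticAt ℂ h l ∧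
    h l = 1 ∧ ∀ᶠ z in 𝓝[≠] l, (z - l) * zetaL L z = h z := by
  refine ⟨fun z => (z - l) * (zetaX L l z + 1 / l + z / l ^ 2) + 1, ?_, by simp, ?_⟩
  · have := zetaX_analytic L l
    fun_prop
  · filter_upwards [self_mem_nhdsWithin] with z hz
    have h0 : z - l ≠ 0 := sub_ne_zero.mpr hz
    rw [← zetaX_add L ⟨l, hl⟩ z]
    simp only
    field

lemma dP_uu (L : PeriodPair) : L.derivWeierstrassP (uu L) = 0 := by
  have h1 := L.derivWeierstrassP_add_coe (-uu L) ⟨L.ω₁ + L.ω₂,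
    L.lattice.add_mem L.ω₁_mem_lattice L.ω₂_mem_lattice⟩
  rw [L.derivWeierstrassP_neg] at h1
  rw [show -uu L + (L.ω₁ + L.ω₂) = uu L by unfold uu; ring] at h1
  linear_combination h1 / 2

lemma P_uu (L : PeriodPair) :
    4 * L.weierstrassP (uu L) ^ 3 - L.g₂ * L.weierstrassP (uu L) - L.g₃ = 0 := by
  rw [← L.derivWeierstrassP_sq _ (uu_notMem L), dP_uu]
  simp

lemma pole_iff (L : PeriodPair) (z : ℂ) : IsPole L.ω₁ L.ω₂ z ↔ z + uu L ∈ L.lattice := by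
  rw [PeriodPair.mem_lattice]
  constructor
  · rintro ⟨m, n, rfl⟩
    exact ⟨m + 1, n + 1, by unfold uu; push_cast; ring⟩
  · rintro ⟨m, n, h⟩
    exact ⟨m - 1, n - 1, by unfold uu at h; push_cast; linear_combination -h⟩
end Chud

/-! ### The Legendre relation -/

namespace Chud
open Finset Filter Topology

lemma pair_indep (L : PeriodPair) (x y : ℝ) (h : (x : ℂ) * L.ω₁ + y * L.ω₂ = 0) : x = 0 ∧ y = 0 :=
  LinearIndependent.pair_iff.mp L.indep x y (by simpa using h)

/-- The open parallelogram with vertices `±ω₁ ± ω₂`. -/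
def para (L : PeriodPair) : Set ℂ :=
  {z | ∃ x y : ℝ, |x| < 1 ∧ |y| < 1 ∧ (x : ℂ) * L.ω₁ + y * L.ω₂ = z}

lemma para_eq (L : PeriodPair) : para L = {z | |L.basis.repr z 0| < 1} ∩ {z | |L.basis.repr z 1| < 1} := by
  ext z
  constructor
  · rintro ⟨x, y, hx, hy, rfl⟩
    have h1 : (x : ℂ) * L.ω₁ + y * L.ω₂ = x • L.basis 0 + y • L.basis 1 := by simp
    simp only [Set.mem_inter_iff, Set.mem_ofPred_eq, h1, map_add, map_smul, Module.Basis.repr_self]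
    constructor <;> simpa
  · rintro ⟨hx, hy⟩
    refine ⟨_, _, hx, hy, ?_⟩
    have := L.basis.sum_repr z
    rw [Fin.sum_univ_two] at this
    simpa using this

lemma para_open (L : PeriodPair) : IsOpen (para L) := by
  rw [para_eq]
  have c : ∀ i, Continuous fun z => |L.basis.repr z i| := fun i =>
    (LinearMap.continuous_of_finiteDimensional (L.basis.coord i)).abs
  exact (isOpen_lt (c 0) continuous_const).inter (isOpen_lt (c 1) continuous_const)

lemma para_convex (L : PeriodPair) : Convex ℝ (para L) := by
  rintro _ ⟨x, y, hx, hy, rfl⟩ _ ⟨x', y', hx', hy', rfl⟩ a b ha hb hab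
  refine ⟨a * x + b * x', a * y + b * y', ?_, ?_, ?_⟩
  · have := (convex_Ioo (-1 : ℝ) 1) (abs_lt.mp hx) (abs_lt.mp hx') ha hb hab
    exact abs_lt.mpr this
  · have := (convex_Ioo (-1 : ℝ) 1) (abs_lt.mp hy) (abs_lt.mp hy') ha hb hab
    exact abs_lt.mpr this
  · simp only [Complex.real_smul]
    push_cast
    ring

lemma para_lattice (L : PeriodPair) : para L ⊆ ((L.lattice : Set ℂ) \ {0})ᶜ := by
  rintro _ ⟨x, y, hx, hy, rfl⟩ ⟨h1, h2⟩
  obtain ⟨m, n, h⟩ := PeriodPair.mem_lattice.mp h1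
  obtain ⟨h3, h4⟩ := pair_indep L (m - x) (n - y) (by push_cast; linear_combination h)
  have h5 : x = m := by linarith
  have h6 : y = n := by linarith
  rw [h5] at hx
  rw [h6] at hy
  have h7 : |m| < 1 := by exact_mod_cast hx
  have h8 : |n| < 1 := by exact_mod_cast hy
  rw [Int.abs_lt_one_iff] at h7 h8
  apply h2
  simp [h5, h6, h7, h8]

/-- If `H` is a primitive of the regular part of `ζ` near `0`, then adding a branch of the logarithm
gives a primitive of `ζ` along a line that misses `0`. -/
lemma edge (L : PeriodPair) {H : ℂ → ℂ} (hH : ∀ z ∈ para L, HasDerivAt H (zetaX L 0 z) z)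
    {p d : ℂ} (hp : p ≠ 0) (hw : (d / p).im ≠ 0) (s : ℝ) (hm : p + s * d ∈ para L) :
    HasDerivAt (fun s : ℝ => H (p + s * d) + Complex.log ((p + s * d) / p))
      (d * zetaL L (p + s * d)) s := by
  have hs : (p + s * d) / p ∈ Complex.slitPlane := by
    have e : (p + s * d) / p = 1 + s * (d / p) := by field
    rw [e, Complex.mem_slitPlane_iff]
    rcases eq_or_ne s 0 with rfl | h
    · left; simp
    · right; simpa using ⟨h, hw⟩
  have h0 : p + s * d ≠ 0 := by
    intro h
    rw [h] at hs
    simp at hs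
  have d1 : HasDerivAt (fun z : ℂ => p + z * d) d (s : ℂ) := by
    simpa using ((hasDerivAt_id (s : ℂ)).mul_const d).const_add p
  have d2 := (hH _ hm).comp (s : ℂ) d1
  have d3 := (d1.div_const p).clog hs
  have d4 := (d2.add d3).comp_ofReal
  have e := zetaX_add L 0 (p + s * d)
  simp only [ZeroMemClass.coe_zero, sub_zero, div_zero, ne_eq, OfNat.ofNat_ne_zero,
    not_false_eq_true, zero_pow, add_zero] at e
  rw [← e]
  convert! d4 using 1
  field

/-- The difference of the integrals of `ζ` along two opposite edges of a period parallelogram. -/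
lemma edges (L : PeriodPair) {H : ℂ → ℂ} (hH : ∀ z ∈ para L, HasDerivAt H (zetaX L 0 z) z)
    {p q d l : ℂ} (hp : p ≠ 0) (hw : (d / p).im ≠ 0) (hq : q ≠ 0) (hw' : (d / q).im ≠ 0)
    (hl : l ∈ L.lattice) (hpq : q = p + l)
    (hm : ∀ s : ℝ, 0 ≤ s → s ≤ 1 → p + s * d ∈ para L)
    (hm' : ∀ s : ℝ, 0 ≤ s → s ≤ 1 → q + s * d ∈ para L) :
    (H (q + d) + Complex.log ((q + d) / q) - H q) - (H (p + d) + Complex.log ((p + d) / p) - H p)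
      = d * zetaL L l := by
  have key := intervalIntegral.integral_eq_sub_of_hasDerivAt (a := 0) (b := 1)
    (f := fun s : ℝ => (H (q + s * d) + Complex.log ((q + s * d) / q)) -
      (H (p + s * d) + Complex.log ((p + s * d) / p))) (f' := fun _ => d * zetaL L l) (by
      intro s hs
      rw [Set.uIcc_of_le zero_le_one] at hs
      have h1 := edge L hH hq hw' s (hm' s hs.1 hs.2)
      have h2 := edge L hH hp hw s (hm s hs.1 hs.2)
      convert! h1.sub h2 using 1
      have := zetaL_add L hl (p + s * d)
      rw [show q + s * d = p + s * d + l by rw [hpq]; ring, this]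
      ring) (by simp)
  simp [hp, hq] at key
  linear_combination -key

/-- The Legendre relation, up to sign. -/
theorem legendre (L : PeriodPair) :
    L.ω₁ * zetaL L L.ω₂ - L.ω₂ * zetaL L L.ω₁ = 2 * Real.pi * Complex.I ∨
    L.ω₁ * zetaL L L.ω₂ - L.ω₂ * zetaL L L.ω₁ = -(2 * Real.pi * Complex.I) := by
  obtain ⟨H, hH'⟩ := Convex.exists_forall_hasDerivWithinAt (para_convex L)
    ((zetaX_diff L 0).mono (para_lattice L))
  have hH : ∀ z ∈ para L, HasDerivAt H (zetaX L 0 z) z := fun z hz =>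
    (hH' z hz).hasDerivAt ((para_open L).mem_nhds hz)
  -- the vertices of the fundamental parallelogram centred at `0` are `A`, `B`, `-A`, `-B`
  set A : ℂ := -(L.ω₁ + L.ω₂) / 2 with hA
  set B : ℂ := (L.ω₁ - L.ω₂) / 2 with hB
  have hA0 : A ≠ 0 := by
    intro h
    have := pair_indep L 1 1 (by push_cast; linear_combination -2 * h + 2 * hA)
    norm_num at this
  have hB0 : B ≠ 0 := by
    intro h
    have := pair_indep L 1 (-1) (by push_cast; linear_combination 2 * h - 2 * hB)
    norm_num at this
  have hw : (B / A).im ≠ 0 := by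
    intro h
    have h1 : B / A = ((B / A).re : ℂ) := Complex.ext rfl (by simpa using h)
    rw [div_eq_iff hA0] at h1
    have := pair_indep L ((B / A).re + 1) ((B / A).re - 1)
      (by push_cast; linear_combination 2 * h1 - 2 * hB + 2 * (B / A).re * hA)
    linarith [this.1, this.2]
  have hwi : (A / B).im ≠ 0 := by
    rw [← inv_div, Complex.inv_im]
    simp only [ne_eq, div_eq_zero_iff, neg_eq_zero, map_eq_zero, not_or]
    exact ⟨hw, hB0, hA0⟩
  have m1 : ∀ s : ℝ, 0 ≤ s → s ≤ 1 → A + s * L.ω₁ ∈ para L := fun s h0 h1 =>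
    ⟨s - 1 / 2, -1 / 2, by rw [abs_lt]; constructor <;> linarith, by rw [abs_lt]; norm_num,
      by push_cast; linear_combination -hA⟩
  have m2 : ∀ s : ℝ, 0 ≤ s → s ≤ 1 → -B + s * L.ω₁ ∈ para L := fun s h0 h1 =>
    ⟨s - 1 / 2, 1 / 2, by rw [abs_lt]; constructor <;> linarith, by rw [abs_lt]; norm_num,
      by push_cast; linear_combination hB⟩
  have m3 : ∀ s : ℝ, 0 ≤ s → s ≤ 1 → A + s * L.ω₂ ∈ para L := fun s h0 h1 =>
    ⟨-1 / 2, s - 1 / 2, by rw [abs_lt]; norm_num, by rw [abs_lt]; constructor <;> linarith,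
      by push_cast; linear_combination -hA⟩
  have m4 : ∀ s : ℝ, 0 ≤ s → s ≤ 1 → B + s * L.ω₂ ∈ para L := fun s h0 h1 =>
    ⟨1 / 2, s - 1 / 2, by rw [abs_lt]; norm_num, by rw [abs_lt]; constructor <;> linarith,
      by push_cast; linear_combination -hB⟩
  have e1 : L.ω₁ = B - A := by rw [hA, hB]; ring
  have e2 : L.ω₂ = -B - A := by rw [hA, hB]; ring
  have w1 : (L.ω₁ / A).im ≠ 0 := by
    rw [e1, sub_div, div_self hA0]; simpa using hw
  have w2 : (L.ω₁ / (-B)).im ≠ 0 := by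
    rw [e1, sub_div, div_neg, div_self hB0, div_neg]; simpa using hwi
  have w3 : (L.ω₂ / A).im ≠ 0 := by
    rw [e2, sub_div, div_self hA0, neg_div]; simpa using hw
  have w4 : (L.ω₂ / B).im ≠ 0 := by
    rw [e2, sub_div, neg_div, div_self hB0]; simpa using hwi
  have r1 := edges L hH hA0 w1 (neg_ne_zero.mpr hB0) w2 L.ω₂_mem_lattice (by rw [e2]; ring) m1 m2
  have r2 := edges L hH hA0 w3 hB0 w4 L.ω₁_mem_lattice (by rw [e1]; ring) m3 m4
  rw [show -B + L.ω₁ = -A by rw [e1]; ring, show A + L.ω₁ = B by rw [e1]; ring, neg_div_neg_eq] at r1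
  rw [show B + L.ω₂ = -A by rw [e2]; ring, show A + L.ω₂ = -B by rw [e2]; ring] at r2
  have key : L.ω₁ * zetaL L L.ω₂ - L.ω₂ * zetaL L L.ω₁ =
      Complex.log (A / B) - Complex.log (B / A) - Complex.log (-A / B) + Complex.log (-B / A) := by
    linear_combination -r1 + r2
  rw [neg_div, neg_div, ← inv_div B A] at key
  set w := B / A
  have i1 : Complex.log w⁻¹ = - Complex.log w := Complex.log_inv _ (by
    intro h
    rw [Complex.arg_eq_pi_iff] at h
    exact hw h.2)
  have i2 : Complex.log (-w⁻¹) = - Complex.log (-w) := by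
    rw [← inv_neg]
    exact Complex.log_inv _ (by
      intro h
      rw [Complex.arg_eq_pi_iff] at h
      exact hw (by simpa using h.2))
  rw [i1, i2] at key
  rcases lt_or_gt_of_ne hw with h | h
  · left
    rw [key]
    simp only [Complex.log, norm_neg, Complex.arg_neg_eq_arg_add_pi_of_im_neg h]
    push_cast
    ring
  · right
    rw [key]
    simp only [Complex.log, norm_neg, Complex.arg_neg_eq_arg_sub_pi_of_im_pos h]
    push_cast
    ring
end Chud

/-! ### Comparison of the lattice functions -/

namespace Chud
open Finset Filter Topology

lemma an_shift {h : ℂ → ℂ} {z u : ℂ} (hh : AnalyticAt ℂ h (z + u)) :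
    AnalyticAt ℂ (fun x => h (x + u)) z :=
  AnalyticAt.fun_comp (g := h) (f := fun x => x + u) hh (by fun_prop)

lemma near_zero (L : PeriodPair) : ∀ᶠ z in 𝓝 (0 : ℂ), z + uu L ∉ L.lattice := by
  have h : Tendsto (fun z : ℂ => z + uu L) (𝓝 0) (𝓝 (uu L)) :=
    Continuous.tendsto' (by fun_prop) _ _ (zero_add _)
  exact h.eventually ((lattice_open L).mem_nhds (uu_notMem L))

/-- The pair `℘(z + u)`, `ζ(z + u) - ζ(u)` attached to a lattice. -/
noncomputable def ellL (L : PeriodPair) : Ell where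
  f z := L.weierstrassP (z + uu L)
  g z := zetaL L (z + uu L) - zetaL L (uu L)
  ω₁ := L.ω₁
  ω₂ := L.ω₂
  η₁ := zetaL L L.ω₁
  η₂ := zetaL L L.ω₂
  e := L.weierstrassP (uu L)
  c := L.g₂ / 2
  indep := pair_indep L
  legendre := by
    rcases legendre L with h | h <;> rw [h]
    · exact Complex.two_pi_I_ne_zero
    · exact neg_ne_zero.mpr Complex.two_pi_I_ne_zero
  f_an z hz := by
    rw [pole_iff] at hz
    exact an_shift (L.analyticOnNhd_weierstrassP _ hz)
  g_an z hz := by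
    rw [pole_iff] at hz
    exact (an_shift (zetaL_analytic L hz)).sub analyticAt_const
  f_ord p hp := by
    rw [pole_iff] at hp
    obtain ⟨h, h1, -, h2⟩ := P_ord L hp
    refine ⟨fun z => h (z + uu L), an_shift h1, ?_⟩
    rw [eventually_nhdsWithin_iff] at h2 ⊢
    have : Tendsto (fun z => z + uu L) (𝓝 p) (𝓝 (p + uu L)) := by
      exact Continuous.tendsto (by fun_prop) p
    filter_upwards [this.eventually h2] with z hz hzp
    rw [← hz (by simpa using! hzp)]
    ring
  g_ord p hp := by
    rw [pole_iff] at hp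
    obtain ⟨h, h1, -, h2⟩ := zetaL_ord L hp
    refine ⟨fun z => h (z + uu L) - (z - p) * zetaL L (uu L), ?_, ?_⟩
    · exact (an_shift h1).sub (by fun_prop)
    rw [eventually_nhdsWithin_iff] at h2 ⊢
    have : Tendsto (fun z => z + uu L) (𝓝 p) (𝓝 (p + uu L)) := by
      exact Continuous.tendsto (by fun_prop) p
    filter_upwards [this.eventually h2] with z hz hzp
    rw [← hz (by simpa using! hzp)]
    ring
  f_per m n z := by
    have := L.weierstrassP_add_coe (z + uu L) ⟨m * L.ω₁ + n * L.ω₂,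
      PeriodPair.mem_lattice.mpr ⟨m, n, rfl⟩⟩
    rw [← this]
    congr 1
    ring
  g_per m n z := by
    have := zetaL_add L (l := m * L.ω₁ + n * L.ω₂) (PeriodPair.mem_lattice.mpr ⟨m, n, rfl⟩)
      (z + uu L)
    rw [zetaL_coe] at this
    rw [show z + (m * L.ω₁ + n * L.ω₂) + uu L = z + uu L + (m * L.ω₁ + n * L.ω₂) by ring, this]
    ring
  f_zero := by simp
  df_zero := by
    rw [deriv_comp_add_const, L.deriv_weierstrassP, zero_add, dP_uu]
  g_zero := by simp
  dg := by
    filter_upwards [near_zero L] with z hz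
    exact (((zetaL_deriv L hz).comp_add_const z (uu L)).sub_const _).deriv
  ddf := by
    filter_upwards [near_zero L] with z hz
    have e : deriv (fun z => L.weierstrassP (z + uu L)) = fun z => L.derivWeierstrassP (z + uu L) := by
      ext w
      rw [deriv_comp_add_const, L.deriv_weierstrassP]
    rw [e]
    exact ((dP_deriv L hz).comp_add_const z (uu L)).deriv
  f_nonconst h := by
    refine P_not_const L (uu L) (uu_notMem L) (L.weierstrassP (uu L)) ?_
    have : Tendsto (fun z => z - uu L) (𝓝 (uu L)) (𝓝 0) :=
      Continuous.tendsto' (by fun_prop) _ _ (sub_self _)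
    filter_upwards [this.eventually h] with z hz
    simpa using hz

/-- A sum over nonzero integer vectors as a sum over the lattice, for a summand vanishing at the
lattice point `0`. -/
lemma tsum_lattice (L : PeriodPair) (F : ℂ → ℂ) (hF : F 0 = 0) :
    ∑' v : {v : ℤ × ℤ // v ≠ 0}, F (latticePt L.ω₁ L.ω₂ v.1) = ∑' l : L.lattice, F l := by
  have h1 : ∀ v : ℤ × ℤ, F (latticePt L.ω₁ L.ω₂ v) = F (L.latticeEquivProd.symm v) := by
    intro v
    rw [L.latticeEquiv_symm_apply]
    rfl
  rw [← L.latticeEquivProd.symm.toEquiv.tsum_eq]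
  have h2 := tsum_subtype_eq_of_support_subset
    (f := fun v : ℤ × ℤ => F (latticePt L.ω₁ L.ω₂ v)) (s := {v | v ≠ 0}) (by
      intro v hv h
      simp only [Function.mem_support] at hv
      apply hv
      rw [h]
      simp [latticePt, hF])
  exact h2.trans (tsum_congr h1)

lemma eis_eq (L : PeriodPair) (k : ℕ) (hk : k ≠ 0) : eisenstein L.ω₁ L.ω₂ k = L.G k := by
  unfold eisenstein PeriodPair.G
  rw [tsum_lattice L (fun z => z ^ (-(k : ℤ))) (by simp [hk])]
  simp

lemma G2_eq (L : PeriodPair) : weierstrassG2 L.ω₁ L.ω₂ = L.g₂ := by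
  unfold weierstrassG2 PeriodPair.g₂
  rw [eis_eq L 4 (by norm_num)]

lemma G3_eq (L : PeriodPair) : weierstrassG3 L.ω₁ L.ω₂ = L.g₃ := by
  unfold weierstrassG3 PeriodPair.g₃
  rw [eis_eq L 6 (by norm_num)]

lemma zeta_eq (L : PeriodPair) (z : ℂ) : weierstrassZeta L.ω₁ L.ω₂ z = zetaL L z := by
  rw [← zetaX_add L 0]
  unfold weierstrassZeta zetaX
  rw [add_comm]
  congr 1
  · have := tsum_lattice L (fun l => if l = 0 then 0 else 1 / (z - l) + 1 / l + z / l ^ 2) (by simp)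
    rw [show ((0 : L.lattice) : ℂ) = 0 from rfl, ← this]
    refine tsum_congr fun v => ?_
    rw [if_neg]
    intro h
    apply v.2
    have h1 : latticePt L.ω₁ L.ω₂ v.1 = L.latticeEquivProd.symm v.1 := by
      rw [L.latticeEquiv_symm_apply]
      rfl
    rw [h1] at h
    simpa using h
  · simp

lemma qp_eq₁ (L : PeriodPair) : quasiPeriod L.ω₁ L.ω₂ L.ω₁ = zetaL L L.ω₁ := by
  rw [zetaL_period L L.ω₁_mem_lattice, quasiPeriod, zeta_eq]

lemma qp_eq₂ (L : PeriodPair) : quasiPeriod L.ω₁ L.ω₂ L.ω₂ = zetaL L L.ω₂ := by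
  rw [zetaL_period L L.ω₂_mem_lattice, quasiPeriod, zeta_eq]

lemma latticePt_div (ω₁ ω₂ t : ℂ) (v : ℤ × ℤ) :
    latticePt (ω₁ / t) (ω₂ / t) v = latticePt ω₁ ω₂ v / t := by
  unfold latticePt
  ring

lemma eis_div (ω₁ ω₂ t : ℂ) (k : ℕ) :
    eisenstein (ω₁ / t) (ω₂ / t) k = t ^ k * eisenstein ω₁ ω₂ k := by
  unfold eisenstein
  rw [← tsum_mul_left]
  refine tsum_congr fun v => ?_
  rw [latticePt_div]
  simp only [zpow_neg, zpow_natCast, div_pow, inv_div]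
  ring

lemma zeta_div (ω₁ ω₂ z : ℂ) {t : ℂ} (ht : t ≠ 0) :
    weierstrassZeta (ω₁ / t) (ω₂ / t) (z / t) = t * weierstrassZeta ω₁ ω₂ z := by
  unfold weierstrassZeta
  rw [mul_add, ← tsum_mul_left]
  congr 1
  · simp [div_eq_mul_inv, mul_comm]
  refine tsum_congr fun v => ?_
  rw [latticePt_div, ← sub_div, one_div_div, one_div_div, div_pow, div_div_div_eq]
  have : z * t ^ 2 / (t * latticePt ω₁ ω₂ v.1 ^ 2) = z * t / latticePt ω₁ ω₂ v.1 ^ 2 := by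
    rw [pow_two t, ← mul_assoc, mul_comm t (latticePt ω₁ ω₂ v.1 ^ 2), mul_div_mul_right _ _ ht]
  rw [this]
  ring

lemma qp_div (ω₁ ω₂ ω : ℂ) {t : ℂ} (ht : t ≠ 0) :
    quasiPeriod (ω₁ / t) (ω₂ / t) (ω / t) = t * quasiPeriod ω₁ ω₂ ω := by
  unfold quasiPeriod
  rw [show ω / t / 2 = ω / 2 / t by ring, zeta_div _ _ _ ht]
  ring
end Chud

/-! ### Lower bound for the transcendence degree -/

namespace Chud
open Finset Filter Topology Polynomial IntermediateField

lemma indep_of_im {ω₁ ω₂ : ℂ} (h : 0 < (ω₂ / ω₁).im) : LinearIndependent ℝ ![ω₁, ω₂] := by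
  have h0 : ω₁ ≠ 0 := by
    rintro rfl
    simp at h
  rw [LinearIndependent.pair_iff]
  intro s t hst
  simp only [Complex.real_smul] at hst
  have h1 : (s : ℂ) + t * (ω₂ / ω₁) = 0 := by
    field_simp
    linear_combination hst
  have h2 := congrArg Complex.im h1
  have ht : t = 0 := by
    simp only [Complex.add_im, Complex.ofReal_im, Complex.im_ofReal_mul, zero_add,
      Complex.zero_im, mul_eq_zero] at h2
    exact h2.resolve_right h.ne'
  subst ht
  simpa using h1

/-- An algebraic number has a positive integer multiple that is an algebraic integer. -/
lemma exists_integral_nat_mul {z : ℂ} (h : IsAlgebraic ℚ z) : ∃ d : ℕ, 0 < d ∧ IsIntegral ℤ ((d : ℂ) * z) := by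
  have h' : IsAlgebraic ℤ z := (IsFractionRing.isAlgebraic_iff ℤ ℚ ℂ).mpr h
  obtain ⟨y, hy, h2⟩ := h'.exists_integral_multiple
  refine ⟨y.natAbs, Int.natAbs_pos.mpr hy, ?_⟩
  rcases Int.natAbs_eq y with h3 | h3
  · rw [h3] at h2
    simpa using h2
  · rw [h3] at h2
    simpa using h2.neg

/-- Periods and quasi-periods of a Weierstrass equation with algebraic coefficients are not all
algebraic over a field generated by one transcendental number. -/
theorem lower_bound {ω₁ ω₂ : ℂ} (hτ : 0 < (ω₂ / ω₁).im)
    (hg₂ : IsAlgebraic ℚ (weierstrassG2 ω₁ ω₂)) (hg₃ : IsAlgebraic ℚ (weierstrassG3 ω₁ ω₂))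
    {θ : ℂ} (hθ : ∀ Q : ℤ[X], Q ≠ 0 → aeval θ Q ≠ 0)
    (h1 : IsAlgebraic ℚ⟮θ⟯ ω₁) (h2 : IsAlgebraic ℚ⟮θ⟯ ω₂)
    (h3 : IsAlgebraic ℚ⟮θ⟯ (quasiPeriod ω₁ ω₂ ω₁)) (h4 : IsAlgebraic ℚ⟮θ⟯ (quasiPeriod ω₁ ω₂ ω₂)) :
    False := by
  obtain ⟨d₂, hd₂, hi₂⟩ := exists_integral_nat_mul hg₂
  obtain ⟨d₃, hd₃, hi₃⟩ := exists_integral_nat_mul hg₃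
  set n : ℕ := 2 * (d₂ * d₃) with hn
  have hn0 : (n : ℂ) ≠ 0 := by
    rw [hn]
    have : 0 < d₂ * d₃ := Nat.mul_pos hd₂ hd₃
    exact_mod_cast (by omega : 2 * (d₂ * d₃) ≠ 0)
  let L : PeriodPair := ⟨ω₁ / n, ω₂ / n, indep_of_im (by rwa [div_div_div_cancel_right₀ hn0])⟩
  have e2 : L.g₂ = n ^ 4 * weierstrassG2 ω₁ ω₂ := by
    rw [← G2_eq]
    simp only [L, weierstrassG2, eis_div]
    ring
  have e3 : L.g₃ = n ^ 6 * weierstrassG3 ω₁ ω₂ := by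
    rw [← G3_eq]
    simp only [L, weierstrassG3, eis_div]
    ring
  have nat_int : ∀ k : ℕ, IsIntegral ℤ (k : ℂ) := fun k => isIntegral_algebraMap (R := ℤ) (x := (k : ℤ))
    |> fun h => by simpa using h
  have i2 : IsIntegral ℤ (L.g₂ / 4) := by
    have := (nat_int (4 * d₂ ^ 3 * d₃ ^ 4)).mul hi₂
    rw [e2, hn]
    convert! this using 1
    push_cast
    ring
  have i3 : IsIntegral ℤ (L.g₃ / 4) := by
    have := (nat_int (16 * d₂ ^ 6 * d₃ ^ 5)).mul hi₃
    rw [e3, hn]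
    convert! this using 1
    push_cast
    ring
  have ic : IsIntegral ℤ (ellL L).c := by
    have := (nat_int 2).mul i2
    change IsIntegral ℤ (L.g₂ / 2)
    convert! this using 1
    push_cast
    ring
  have ie : IsIntegral ℤ (ellL L).e := by
    change IsIntegral ℤ (L.weierstrassP (uu L))
    set x := L.weierstrassP (uu L) with hx
    -- `x` is a root of `X³ - (g₂/4) X - g₃/4`, monic over the integral closure
    have hr : x ^ 3 - L.g₂ / 4 * x - L.g₃ / 4 = 0 := by
      linear_combination P_uu L / 4
    let a : integralClosure ℤ ℂ := ⟨L.g₂ / 4, i2⟩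
    let b : integralClosure ℤ ℂ := ⟨L.g₃ / 4, i3⟩
    have hinteg : IsIntegral (integralClosure ℤ ℂ) x := by
      refine ⟨X ^ 3 - (C a * X + C b), ?_, ?_⟩
      · exact monic_X_pow_sub (lt_of_le_of_lt degree_linear_le (by norm_num))
      · simp only [eval₂_sub, eval₂_pow, eval₂_X, eval₂_add, eval₂_mul, eval₂_C]
        change x ^ 3 - (L.g₂ / 4 * x + L.g₃ / 4) = 0
        linear_combination hr
    exact isIntegral_trans x hinteg
  have algn : IsAlgebraic ℚ⟮θ⟯ (n : ℂ) := by
    simpa using isAlgebraic_algebraMap (R := ℚ⟮θ⟯) (A := ℂ) (n : ℚ⟮θ⟯)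
  refine (ellL L).not_algebraic ie ic hθ ?_ ?_ ?_ ?_
  · exact h1.mul algn.inv
  · exact h2.mul algn.inv
  · change IsAlgebraic _ (zetaL L L.ω₁)
    rw [← qp_eq₁]
    change IsAlgebraic _ (quasiPeriod (ω₁ / n) (ω₂ / n) (ω₁ / n))
    rw [qp_div _ _ _ hn0]
    exact algn.mul h3
  · change IsAlgebraic _ (zetaL L L.ω₂)
    rw [← qp_eq₂]
    change IsAlgebraic _ (quasiPeriod (ω₁ / n) (ω₂ / n) (ω₂ / n))
    rw [qp_div _ _ _ hn0]
    exact algn.mul h4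
end Chud

/-! ### Poles and linear relations between elliptic functions -/

namespace Chud
open Finset Filter Topology Polynomial IntermediateField

/-- `F` has at `p` at worst a pole of order `d`: after multiplication by `(z - p) ^ d` it agrees, in a
punctured neighbourhood of `p`, with a function analytic at `p`. The value `F p` is irrelevant. -/
def HasPole (d : ℕ) (F : ℂ → ℂ) (p : ℂ) : Prop :=
  ∃ h : ℂ → ℂ, AnalyticAt ℂ h p ∧ ∀ᶠ z in 𝓝[≠] p, (z - p) ^ d * F z = h z

lemma HasPole.of_analytic {F : ℂ → ℂ} {p : ℂ} (h : AnalyticAt ℂ F p) : HasPole 0 F p :=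
  ⟨F, h, Eventually.of_forall fun z => by simp⟩

lemma HasPole.mono {d e : ℕ} (hde : d ≤ e) {F : ℂ → ℂ} {p : ℂ} (h : HasPole d F p) :
    HasPole e F p := by
  obtain ⟨h, h1, h2⟩ := h
  refine ⟨fun z => (z - p) ^ (e - d) * h z, by fun_prop, ?_⟩
  filter_upwards [h2] with z hz
  rw [← hz, ← mul_assoc, ← pow_add, Nat.sub_add_cancel hde]

lemma HasPole.mul {d e : ℕ} {F G : ℂ → ℂ} {p : ℂ} (hF : HasPole d F p) (hG : HasPole e G p) :
    HasPole (d + e) (fun z => F z * G z) p := by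
  obtain ⟨h, h1, h2⟩ := hF
  obtain ⟨k, k1, k2⟩ := hG
  refine ⟨fun z => h z * k z, by fun_prop, ?_⟩
  filter_upwards [h2, k2] with z hz kz
  rw [← hz, ← kz]
  ring

lemma HasPole.pow {d : ℕ} {F : ℂ → ℂ} {p : ℂ} (hF : HasPole d F p) (n : ℕ) :
    HasPole (n * d) (fun z => F z ^ n) p := by
  obtain ⟨h, h1, h2⟩ := hF
  refine ⟨fun z => h z ^ n, by fun_prop, ?_⟩
  filter_upwards [h2] with z hz
  rw [← hz, mul_pow, mul_comm n d, pow_mul]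

lemma HasPole.sub {d : ℕ} {F G : ℂ → ℂ} {p : ℂ} (hF : HasPole d F p) (hG : HasPole d G p) :
    HasPole d (fun z => F z - G z) p := by
  obtain ⟨h, h1, h2⟩ := hF
  obtain ⟨k, k1, k2⟩ := hG
  refine ⟨fun z => h z - k z, by fun_prop, ?_⟩
  filter_upwards [h2, k2] with z hz kz
  rw [← hz, ← kz]
  ring

lemma HasPole.const_mul {d : ℕ} {F : ℂ → ℂ} {p : ℂ} (c : ℂ) (hF : HasPole d F p) :
    HasPole d (fun z => c * F z) p := by
  obtain ⟨h, h1, h2⟩ := hF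
  refine ⟨fun z => c * h z, by fun_prop, ?_⟩
  filter_upwards [h2] with z hz
  rw [← hz]
  ring

lemma tendsto_aff {a : ℂ} (ha : a ≠ 0) (b p : ℂ) :
    Tendsto (fun z => a * z + b) (𝓝[≠] p) (𝓝[≠] (a * p + b)) := by
  refine tendsto_nhdsWithin_iff.mpr ⟨?_, ?_⟩
  · have : ContinuousAt (fun z => a * z + b) p := by fun_prop
    exact this.tendsto.mono_left nhdsWithin_le_nhds
  · filter_upwards [self_mem_nhdsWithin] with z hz
    intro h
    apply hz
    simpa [ha] using h

lemma HasPole.comp_aff {d : ℕ} {F : ℂ → ℂ} {a b p : ℂ} (ha : a ≠ 0)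
    (hF : HasPole d F (a * p + b)) : HasPole d (fun z => F (a * z + b)) p := by
  obtain ⟨h, h1, h2⟩ := hF
  refine ⟨fun z => (a ^ d)⁻¹ * h (a * z + b), ?_, ?_⟩
  · have : AnalyticAt ℂ (fun z => h (a * z + b)) p :=
      AnalyticAt.fun_comp (g := h) (f := fun z => a * z + b) h1 (by fun_prop)
    fun_prop
  · filter_upwards [(tendsto_aff ha b p).eventually h2] with z hz
    rw [← hz, show a * z + b - (a * p + b) = a * (z - p) by ring, mul_pow]
    field_simp

lemma ev_trans {P : ℂ → Prop} {p : ℂ} (h : ∀ᶠ z in 𝓝[≠] p, P z) :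
    ∀ᶠ z in 𝓝[≠] p, ∀ᶠ w in 𝓝 z, P w := by
  have := eventually_eventually_nhdsWithin.mpr h
  filter_upwards [this, self_mem_nhdsWithin] with z hz hne
  have h1 : 𝓝[≠] p ≤ 𝓝[≠] p := le_rfl
  rwa [IsOpen.nhdsWithin_eq isOpen_compl_singleton hne] at hz

/-- Liouville's first theorem: an elliptic function whose singularities are all removable is
constant, up to its values at the removable singularities. -/
lemma liouville_elliptic (L : PeriodPair) (F : ℂ → ℂ)
    (hper : ∀ l ∈ L.lattice, ∀ z, F (z + l) = F z) (hF : ∀ p, HasPole 0 F p) :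
    ∃ C : ℂ, ∀ p, ∀ᶠ z in 𝓝[≠] p, F z = C := by
  choose h h1 h2 using hF
  simp only [pow_zero, one_mul] at h2
  set Φ : ℂ → ℂ := fun z => h z z with hΦ
  have lim : ∀ p, Tendsto F (𝓝[≠] p) (𝓝 (Φ p)) := fun p =>
    ((h1 p).continuousAt.tendsto.mono_left nhdsWithin_le_nhds).congr'
      (by filter_upwards [h2 p] with z hz using hz.symm)
  have hloc : ∀ p, ∀ᶠ z in 𝓝[≠] p, Φ z = h p z ∧ F z = h p z := by
    intro p
    filter_upwards [ev_trans (h2 p), (h1 p).eventually_analyticAt.filter_mono nhdsWithin_le_nhds]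
      with z hz haz
    refine ⟨tendsto_nhds_unique (lim z) ?_, hz.self_of_nhds⟩
    refine (haz.continuousAt.tendsto.mono_left nhdsWithin_le_nhds).congr' ?_
    filter_upwards [hz.filter_mono nhdsWithin_le_nhds] with w hw using hw.symm
  have hΦa : ∀ p, AnalyticAt ℂ Φ p := by
    intro p
    refine (h1 p).congr ?_
    have := hloc p
    rw [eventually_nhdsWithin_iff] at this
    filter_upwards [this] with z hz
    by_cases hzp : z = p
    · rw [hzp]
    · exact (hz hzp).1.symm
  have hΦd : Differentiable ℂ Φ := fun p => (hΦa p).differentiableAt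
  have hΦp : ∀ z, ∀ l ∈ L.lattice, Φ (z + l) = Φ z := by
    intro z l hl
    refine tendsto_nhds_unique ?_ (lim z)
    have := (lim (z + l)).comp (by simpa using tendsto_aff one_ne_zero l z)
    refine this.congr fun w => ?_
    simp [hper l hl]
  have hb : Bornology.IsBounded (Set.range Φ) :=
    (IsZLattice.isCompact_range_of_periodic L.lattice Φ hΦd.continuous hΦp).isBounded
  refine ⟨Φ 0, fun p => ?_⟩
  filter_upwards [hloc p] with z hz
  rw [hz.2, ← hz.1]
  exact hΦd.apply_eq_apply_of_bounded hb z 0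

end Chud

namespace Chud
open Finset Filter Topology Polynomial IntermediateField

lemma HasPole.sum {J : Type*} (S : Finset J) {d : ℕ} {F : J → ℂ → ℂ} {p : ℂ}
    (hF : ∀ j ∈ S, HasPole d (F j) p) : HasPole d (fun z => ∑ j ∈ S, F j z) p := by
  classical
  induction S using Finset.induction_on with
  | empty => exact ⟨0, analyticAt_const, Eventually.of_forall fun z => by simp⟩
  | insert a S ha ih =>
    obtain ⟨h, h1, h2⟩ := hF a (by simp)
    obtain ⟨k, k1, k2⟩ := ih fun j hj => hF j (by simp [hj])
    refine ⟨fun z => h z + k z, by fun_prop, ?_⟩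
    filter_upwards [h2, k2] with z hz kz
    rw [Finset.sum_insert ha, mul_add, hz, kz]

/-- A form of the Riemann–Roch inequality on a complex torus: among sufficiently many elliptic
functions with poles bounded by a fixed divisor there is a linear relation. -/
lemma dim_lemma (L : PeriodPair) {J I : Type} [Fintype J] [Fintype I] (F : J → ℂ → ℂ)
    (hper : ∀ j, ∀ l ∈ L.lattice, ∀ z, F j (z + l) = F j z) (s : I → ℂ) (d : I → ℕ)
    (hs : ∀ i j, HasPole (d i) (F j) (s i))
    (hreg : ∀ p, (∀ i, p - s i ∉ L.lattice) → ∀ j, HasPole 0 (F j) p)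
    (h0 : ∀ j, AnalyticAt ℂ (F j) 0)
    (hcard : ∑ i, d i + 1 < Fintype.card J) :
    ∃ c : J → ℂ, c ≠ 0 ∧ ∀ p, ∀ᶠ z in 𝓝[≠] p, ∑ j, c j * F j z = 0 := by
  choose h h1 h2 using hs
  let v : J → (((i : I) × Fin (d i)) ⊕ Unit → ℂ) := fun j =>
    Sum.elim (fun x => iteratedDeriv x.2 (h x.1 j) (s x.1)) (fun _ => F j 0)
  have hv : ¬ LinearIndependent ℂ v := by
    intro hv
    have := hv.fintype_card_le_finrank
    simp at this
    omega
  rw [Fintype.not_linearIndependent_iff] at hv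
  obtain ⟨c, hc, j₀, hj₀⟩ := hv
  refine ⟨c, fun h => hj₀ (by simp [h]), ?_⟩
  have hc0 : ∑ j, c j * F j 0 = 0 := by
    simpa [v] using congrFun hc (Sum.inr ())
  have hck : ∀ i, ∀ k < d i, ∑ j, c j * iteratedDeriv k (h i j) (s i) = 0 := by
    intro i k hk
    simpa [v] using congrFun hc (Sum.inl ⟨i, ⟨k, hk⟩⟩)
  have hS : ∀ i, HasPole 0 (fun z => ∑ j, c j * F j z) (s i) := by
    intro i
    have hA : AnalyticAt ℂ (fun z => ∑ j, c j * h i j z) (s i) := by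
      have := h1 i
      fun_prop
    have hO : (d i : ℕ∞) ≤ analyticOrderAt (fun z => ∑ j, c j * h i j z) (s i) := by
      rw [natCast_le_analyticOrderAt_iff_iteratedDeriv_eq_zero hA]
      intro k hk
      rw [iteratedDeriv_fun_sum]
      · simp only [iteratedDeriv_const_mul_field]
        exact hck i k hk
      · intro j _
        exact (analyticAt_const.mul (h1 i j)).contDiffAt
    rw [natCast_le_analyticOrderAt hA] at hO
    obtain ⟨q, q1, q2⟩ := hO
    refine ⟨q, q1, ?_⟩
    filter_upwards [q2.filter_mono nhdsWithin_le_nhds, self_mem_nhdsWithin,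
      eventually_all.mpr (h2 i)] with z hz hne hh
    have hne' : (z - s i) ^ d i ≠ 0 := pow_ne_zero _ (sub_ne_zero.mpr hne)
    apply mul_left_cancel₀ hne'
    rw [pow_zero, one_mul, ← smul_eq_mul (_ ^ _) (q z), ← hz, mul_sum]
    refine sum_congr rfl fun j _ => ?_
    rw [← hh j]
    ring
  have hperS : ∀ l ∈ L.lattice, ∀ z, ∑ j, c j * F j (z + l) = ∑ j, c j * F j z :=
    fun l hl z => sum_congr rfl fun j _ => by rw [hper j l hl]
  obtain ⟨C, hC⟩ := liouville_elliptic L (fun z => ∑ j, c j * F j z) hperS (by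
    intro p
    by_cases hp : ∃ i, p - s i ∈ L.lattice
    · obtain ⟨i, hi⟩ := hp
      have := (show HasPole 0 (fun z => ∑ j, c j * F j z) (1 * p + -(p - s i)) by
        simpa using hS i).comp_aff one_ne_zero
      convert! this using 2 with z
      rw [one_mul, hperS _ (L.lattice.neg_mem hi)]
    · push Not at hp
      exact HasPole.sum _ fun j _ => (hreg p hp j).const_mul (c j))
  have hC0 : C = 0 := by
    have hA : ContinuousAt (fun z => ∑ j, c j * F j z) 0 := by
      have : AnalyticAt ℂ (fun z => ∑ j, c j * F j z) 0 := by fun_prop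
      exact this.continuousAt
    have t1 := hA.tendsto.mono_left (nhdsWithin_le_nhds (s := {0}ᶜ))
    have t2 : Tendsto (fun z => ∑ j, c j * F j z) (𝓝[≠] 0) (𝓝 C) :=
      tendsto_const_nhds.congr' (by filter_upwards [hC 0] with z hz using hz.symm)
    rw [tendsto_nhds_unique t2 t1, hc0]
  rw [hC0] at hC
  exact hC

end Chud

/-! ### The complex multiplication defect -/

namespace Chud
open Finset Filter Topology Polynomial IntermediateField

lemma dP_ord (L : PeriodPair) {l : ℂ} (hl : l ∈ L.lattice) :
    HasPole 3 L.derivWeierstrassP l := by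
  refine ⟨fun z => (z - l) ^ 3 * L.derivWeierstrassPExcept l z - 2, ?_, ?_⟩
  · have := L.analyticOnNhd_derivWeierstrassPExcept l l (by simp)
    fun_prop
  · filter_upwards [self_mem_nhdsWithin] with z hz
    have h0 : z - l ≠ 0 := sub_ne_zero.mpr hz
    have := L.derivWeierstrassPExcept_def ⟨l, hl⟩ z
    simp only at this
    rw [this]
    field_simp
    ring

/-- The quasi-periodicity defect of the Weierstrass zeta function under multiplication by `α`,
centred at the half period `uu L`. -/
noncomputable def cmG (L : PeriodPair) (α β κ z : ℂ) : ℂ :=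
  (zetaL L (α * z + uu L) - zetaL L (uu L)) - β * (zetaL L (z + uu L) - zetaL L (uu L)) - κ * z

section
variable (L : PeriodPair)

lemma pole_f (p : ℂ) : HasPole 2 (fun z => L.weierstrassP (z + uu L)) p := by
  have : HasPole 2 L.weierstrassP (1 * p + uu L) := by
    by_cases h : 1 * p + uu L ∈ L.lattice
    · obtain ⟨k, k1, -, k2⟩ := P_ord L h
      exact ⟨k, k1, k2⟩
    · exact (HasPole.of_analytic (L.analyticOnNhd_weierstrassP _ h)).mono (by norm_num)
  simpa using this.comp_aff one_ne_zero

lemma pole_d (p : ℂ) : HasPole 3 (fun z => L.derivWeierstrassP (z + uu L)) p := by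
  have : HasPole 3 L.derivWeierstrassP (1 * p + uu L) := by
    by_cases h : 1 * p + uu L ∈ L.lattice
    · exact dP_ord L h
    · exact (HasPole.of_analytic (L.analyticOnNhd_derivWeierstrassP _ h)).mono (by norm_num)
  simpa using this.comp_aff one_ne_zero

lemma pole_zeta {a : ℂ} (ha : a ≠ 0) (p : ℂ) : HasPole 1 (fun z => zetaL L (a * z + uu L)) p := by
  have : HasPole 1 (zetaL L) (a * p + uu L) := by
    by_cases h : a * p + uu L ∈ L.lattice
    · obtain ⟨k, k1, -, k2⟩ := zetaL_ord L h
      exact ⟨k, k1, by simpa using k2⟩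
    · exact (HasPole.of_analytic (zetaL_analytic L h)).mono (by norm_num)
  exact this.comp_aff ha

lemma cmG_pole {α : ℂ} (hα : α ≠ 0) (β κ p : ℂ) : HasPole 1 (cmG L α β κ) p := by
  unfold cmG
  have hc : ∀ c : ℂ, HasPole 1 (fun _ => c) p := fun c =>
    (HasPole.of_analytic analyticAt_const).mono (by norm_num)
  refine (((pole_zeta L hα p).sub (hc _)).sub (HasPole.const_mul β (HasPole.sub ?_ (hc _)))).sub
    ((HasPole.of_analytic (by fun_prop)).mono (by norm_num))
  simpa using pole_zeta L one_ne_zero p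

lemma cmG_analytic {α β κ p : ℂ} (h1 : α * p + uu L ∉ L.lattice) (h2 : p + uu L ∉ L.lattice) :
    AnalyticAt ℂ (cmG L α β κ) p := by
  unfold cmG
  have e1 := an_shift (zetaL_analytic L h2)
  have e2 : AnalyticAt ℂ (fun z => zetaL L (α * z + uu L)) p :=
    AnalyticAt.fun_comp (g := zetaL L) (f := fun z => α * z + uu L) (zetaL_analytic L h1)
      (by fun_prop)
  fun_prop

/-- When `α` maps the lattice into itself and `ζ(α l) = β ζ(l) + κ l` on lattice points (junk values,
which are the quasi-periods), the defect `cmG` is an elliptic function. -/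
lemma cmG_periodic {α β κ : ℂ} (hαL : ∀ l ∈ L.lattice, α * l ∈ L.lattice)
    (hG : ∀ l ∈ L.lattice, zetaL L (α * l) = β * zetaL L l + κ * l) {l : ℂ} (hl : l ∈ L.lattice)
    (z : ℂ) : cmG L α β κ (z + l) = cmG L α β κ z := by
  unfold cmG
  rw [show α * (z + l) + uu L = (α * z + uu L) + α * l by ring, zetaL_add L (hαL l hl),
    show z + l + uu L = z + uu L + l by ring, zetaL_add L hl, hG l hl]
  ring

lemma f_periodic {l : ℂ} (hl : l ∈ L.lattice) (z : ℂ) :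
    L.weierstrassP (z + l + uu L) = L.weierstrassP (z + uu L) := by
  rw [show z + l + uu L = z + uu L + l by ring]
  exact L.weierstrassP_add_coe _ ⟨l, hl⟩

lemma d_periodic {l : ℂ} (hl : l ∈ L.lattice) (z : ℂ) :
    L.derivWeierstrassP (z + l + uu L) = L.derivWeierstrassP (z + uu L) := by
  rw [show z + l + uu L = z + uu L + l by ring]
  exact L.derivWeierstrassP_add_coe _ ⟨l, hl⟩

lemma two_uu : 2 * uu L ∈ L.lattice := by
  rw [PeriodPair.mem_lattice]
  exact ⟨1, 1, by unfold uu; push_cast; ring⟩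

lemma lat_int (n : ℤ) {l : ℂ} (hl : l ∈ L.lattice) : (n : ℂ) * l ∈ L.lattice := by
  simpa using L.lattice.smul_mem n hl

/-- The representatives of the `2k`-torsion points. -/
noncomputable def tors (k : ℕ) (x : Fin (2 * k) × Fin (2 * k)) : ℂ :=
  ((x.1 : ℕ) * L.ω₁ + (x.2 : ℕ) * L.ω₂) / (2 * k)

lemma tors_cover {k : ℕ} (hk : 0 < k) {p : ℂ} (hp : 2 * (k : ℂ) * p ∈ L.lattice) :
    ∃ x, p - tors L k x ∈ L.lattice := by
  rw [PeriodPair.mem_lattice] at hp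
  obtain ⟨m, n, hmn⟩ := hp
  have hk' : (k : ℂ) ≠ 0 := by exact_mod_cast hk.ne'
  have h0 : (0 : ℤ) < 2 * k := by positivity
  have key : ∀ m : ℤ, ∃ i : Fin (2 * k), ∃ q : ℤ, m = (i : ℕ) + 2 * k * q := by
    intro m
    refine ⟨⟨(m % (2 * k)).toNat, ?_⟩, m / (2 * k), ?_⟩
    · have := Int.emod_lt_of_pos m h0
      have := Int.emod_nonneg m h0.ne'
      omega
    · have := Int.emod_nonneg m h0.ne'
      simp only
      rw [Int.toNat_of_nonneg this]
      exact (Int.emod_add_mul_ediv m (2 * k)).symm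
  obtain ⟨i, q, hi⟩ := key m
  obtain ⟨j, r, hj⟩ := key n
  refine ⟨(i, j), ?_⟩
  rw [PeriodPair.mem_lattice]
  refine ⟨q, r, ?_⟩
  have hi' : (m : ℂ) = (i : ℕ) + 2 * k * q := by exact_mod_cast hi
  have hj' : (n : ℂ) = (j : ℕ) + 2 * k * r := by exact_mod_cast hj
  have hp : p = (m * L.ω₁ + n * L.ω₂) / (2 * k) := by rw [hmn]; field_simp
  rw [hp, hi', hj']
  unfold tors
  simp only
  field_simp
  ring

lemma tors_unique {k : ℕ} (hk : 0 < k) {x} (hx : tors L k x + uu L ∈ L.lattice) :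
    (x.1 : ℕ) = k ∧ (x.2 : ℕ) = k := by
  rw [PeriodPair.mem_lattice] at hx
  obtain ⟨m, n, hmn⟩ := hx
  have hk' : (k : ℂ) ≠ 0 := by exact_mod_cast hk.ne'
  have hk'' : (k : ℝ) ≠ 0 := by exact_mod_cast hk.ne'
  have := pair_indep L (((x.1 : ℕ) + k : ℝ) - 2 * k * m) (((x.2 : ℕ) + k : ℝ) - 2 * k * n) (by
    unfold tors uu at hmn
    field_simp at hmn
    push_cast
    linear_combination -hmn)
  have key : ∀ (i : Fin (2 * k)) (m : ℤ), ((i : ℕ) + k : ℝ) - 2 * k * m = 0 → (i : ℕ) = k := by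
    intro i m h
    have h1 : ((i : ℕ) : ℤ) + k = 2 * k * m := by
      have : (((i : ℕ) : ℤ) : ℝ) + (k : ℤ) = 2 * (k : ℤ) * m := by push_cast; linarith
      exact_mod_cast this
    have h2 : ((i : ℕ) : ℤ) < 2 * k := by exact_mod_cast i.2
    have hk : (0 : ℤ) < k := by exact_mod_cast hk
    have hm : m = 1 := by
      have : 0 < m := by nlinarith
      have : m < 2 := by nlinarith
      omega
    subst hm
    omega
  exact ⟨key _ _ this.1, key _ _ this.2⟩

end

end Chud

/-! ### Algebraic relations for the defect -/

namespace Chud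
open Finset Filter Topology Polynomial IntermediateField

/-- The family whose `ℂ`-linear dependence is forced by `dim_lemma`. -/
noncomputable def famE (L : PeriodPair) (α β κ : ℂ) (N : ℕ) : Fin 3 × Fin N → ℂ → ℂ
  | (0, i) => fun z => L.weierstrassP (z + uu L) ^ (i : ℕ)
  | (1, i) => fun z => L.weierstrassP (z + uu L) ^ (i : ℕ) * L.derivWeierstrassP (z + uu L)
  | (2, i) => fun z => L.weierstrassP (z + uu L) ^ (i : ℕ) * cmG L α β κ z

/-- The defect `cmG` is algebraic over `ℂ(℘, ℘')`, with an explicit shape of relation: the `3 N`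
functions of `famE` have poles bounded by a divisor of degree `2 N + O(1)`. -/
lemma cm_relation (L : PeriodPair) {α β κ : ℂ} {k : ℕ} (hα : α ≠ 0) (hk : 0 < k)
    (hαL : ∀ l ∈ L.lattice, α * l ∈ L.lattice)
    (hM : ∀ p, α * p + uu L ∈ L.lattice → 2 * (k : ℂ) * p ∈ L.lattice)
    (hG : ∀ l ∈ L.lattice, zetaL L (α * l) = β * zetaL L l + κ * l) :
    ∃ (N : ℕ) (c : Fin 3 × Fin N → ℂ), c ≠ 0 ∧
      ∀ᶠ z in 𝓝 0, ∑ j, c j * famE L α β κ N j z = 0 := by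
  classical
  set N := (2 * k) * (2 * k) + 1 with hN
  have hreg0 : ∀ p, α * p + uu L ∉ L.lattice → p + uu L ∉ L.lattice →
      ∀ j, AnalyticAt ℂ (famE L α β κ (N + 1) j) p := by
    intro p h1 h2
    have e1 := an_shift (L.analyticOnNhd_weierstrassP _ h2)
    have e2 := an_shift (L.analyticOnNhd_derivWeierstrassP _ h2)
    have e3 := cmG_analytic L (β := β) (κ := κ) h1 h2
    rintro ⟨j, i⟩
    fin_cases j <;> simp only [famE] <;> fun_prop
  have hM2 : ∀ p, p + uu L ∈ L.lattice → 2 * (k : ℂ) * p ∈ L.lattice := by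
    intro p hp
    have h1 := L.lattice.sub_mem (lat_int L (2 * k) hp) (lat_int L k (two_uu L))
    convert h1 using 1
    push_cast
    ring
  have main := dim_lemma L (famE L α β κ (N + 1)) ?_ (tors L k)
    (fun x => 1 + if (x.1 : ℕ) = k ∧ (x.2 : ℕ) = k then 2 * N + 2 else 0) ?_ ?_ ?_ ?_
  · obtain ⟨c, hc0, hc⟩ := main
    refine ⟨N + 1, c, hc0, ?_⟩
    have hA : AnalyticAt ℂ (fun z => ∑ j, c j * famE L α β κ (N + 1) j z) 0 := by
      have := hreg0 0 (by simpa using uu_notMem L) (by simpa using uu_notMem L)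
      fun_prop
    rcases hA.eventually_eq_zero_or_eventually_ne_zero with h | h
    · exact h
    · obtain ⟨z, hz⟩ := (h.and (hc 0)).exists
      exact absurd hz.2 hz.1
  · rintro ⟨j, i⟩ l hl z
    fin_cases j <;> simp only [famE] <;> simp only [f_periodic L hl, d_periodic L hl,
      cmG_periodic L hαL hG hl]
  · intro x j
    by_cases hx : tors L k x + uu L ∈ L.lattice
    · simp only [tors_unique L hk hx, and_self, if_true]
      have e1 := pole_f L (tors L k x)
      have e2 := pole_d L (tors L k x)
      have e3 := cmG_pole L hα β κ (tors L k x)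
      obtain ⟨j, i⟩ := j
      have hi : (i : ℕ) ≤ N := Nat.lt_succ_iff.mp i.2
      fin_cases j <;> simp only [famE]
      · exact (e1.pow _).mono (by omega)
      · exact ((e1.pow _).mul e2).mono (by omega)
      · exact ((e1.pow _).mul e3).mono (by omega)
    · have e1 := an_shift (L.analyticOnNhd_weierstrassP _ hx)
      have e2 := an_shift (L.analyticOnNhd_derivWeierstrassP _ hx)
      have e3 := cmG_pole L hα β κ (tors L k x)
      refine HasPole.mono (Nat.le_add_right 1 _) ?_
      obtain ⟨j, i⟩ := j
      fin_cases j <;> simp only [famE]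
      · exact (HasPole.of_analytic (by fun_prop)).mono (by omega)
      · exact (HasPole.of_analytic (by fun_prop)).mono (by omega)
      · exact ((HasPole.of_analytic (F := fun z => L.weierstrassP (z + uu L) ^ (i : ℕ))
          (by fun_prop)).mul e3).mono (by omega)
  · intro p hp j
    refine HasPole.of_analytic (hreg0 p (fun h => ?_) (fun h => ?_) j)
    · obtain ⟨x, hx⟩ := tors_cover L hk (hM p h)
      exact hp x hx
    · obtain ⟨x, hx⟩ := tors_cover L hk (hM2 p h)
      exact hp x hx
  · exact hreg0 0 (by simpa using uu_notMem L) (by simpa using uu_notMem L)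
  · rw [sum_add_distrib, sum_ite, sum_const_zero, add_zero, sum_const, sum_const]
    have : (univ.filter fun x : Fin (2 * k) × Fin (2 * k) => (x.1 : ℕ) = k ∧ (x.2 : ℕ) = k).card
        ≤ 1 := by
      rw [card_le_one]
      rintro ⟨a, b⟩ h ⟨a', b'⟩ h'
      simp only [mem_filter, mem_univ, true_and] at h h'
      ext <;> simp <;> omega
    simp only [card_univ, Fintype.card_prod, Fintype.card_fin, smul_eq_mul, mul_one]
    nlinarith

/-- A linear relation between analytic germs whose Taylor coefficients lie in a subfield is
preserved when a linear form over this subfield is applied to its coefficients. -/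
lemma apply_form (K : IntermediateField ℚ ℂ) {J : Type} [Fintype J] (F : J → ℂ → ℂ)
    (hF : ∀ j, AnalyticAt ℂ (F j) 0) (hK : ∀ j n, iteratedDeriv n (F j) 0 ∈ K) (c : J → ℂ)
    (hc : ∀ᶠ z in 𝓝 0, ∑ j, c j * F j z = 0) (φ : ℂ →ₗ[K] K) :
    ∀ᶠ z in 𝓝 0, ∑ j, (φ (c j) : ℂ) * F j z = 0 := by
  have key : ∀ (c : J → ℂ) n, iteratedDeriv n (fun z => ∑ j, c j * F j z) 0 =
      ∑ j, c j * iteratedDeriv n (F j) 0 := by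
    intro c n
    rw [iteratedDeriv_fun_sum]
    · simp only [iteratedDeriv_const_mul_field]
    · intro j _
      exact (analyticAt_const.mul (hF j)).contDiffAt
  have hA : AnalyticAt ℂ (fun z => ∑ j, (φ (c j) : ℂ) * F j z) 0 := by fun_prop
  have h0 : ∀ n, ∑ j, c j * iteratedDeriv n (F j) 0 = 0 := by
    intro n
    rw [← key, Filter.EventuallyEq.iteratedDeriv_eq n (g := fun _ => 0) hc]
    simp
  have ht : analyticOrderAt (fun z => ∑ j, (φ (c j) : ℂ) * F j z) 0 = ⊤ := by
    rw [ENat.eq_top_iff_forall_ge]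
    intro m
    rw [natCast_le_analyticOrderAt_iff_iteratedDeriv_eq_zero hA]
    intro n _
    rw [key]
    have h1 := congrArg (fun x : ℂ => (φ x : ℂ)) (h0 n)
    simp only [map_sum, map_zero, ZeroMemClass.coe_zero, AddSubmonoidClass.coe_finsetSum] at h1
    refine (sum_congr rfl fun j _ => ?_).trans h1
    have : c j * iteratedDeriv n (F j) 0 = (⟨_, hK j n⟩ : K) • c j := by
      rw [IntermediateField.smul_def, smul_eq_mul, mul_comm]
    rw [this, map_smul]
    simp [mul_comm]
  exact analyticOrderAt_eq_top.mp ht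

end Chud

namespace Chud
open Finset Filter Topology Polynomial IntermediateField

lemma psi_mem (K : IntermediateField ℚ ℂ) {e c : ℂ} (he : e ∈ K) (hc : c ∈ K) (t : ℕ) :
    ∀ a j j' b, psi e c t a j j' b ∈ K := by
  induction t with
  | zero =>
    intro a j j' b
    rw [psi]
    split_ifs
    · exact pow_mem he j
    · exact zero_mem K
  | succ t ih =>
    intro a j j' b
    rw [psi]
    have h6 : (6 : ℂ) ∈ K := by exact_mod_cast _root_.natCast_mem K 6
    exact sub_mem (add_mem (add_mem (mul_mem (_root_.natCast_mem K a) (ih _ _ _ _))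
      (mul_mem (_root_.natCast_mem K j) (ih _ _ _ _))) (mul_mem (_root_.natCast_mem K j')
      (sub_mem (mul_mem h6 (ih _ _ _ _)) (mul_mem hc (ih _ _ _ _)))))
      (mul_mem (_root_.natCast_mem K b) (ih _ _ _ _))

lemma iteratedDeriv_scale (g : ℂ → ℂ) (a : ℂ) (n : ℕ) :
    iteratedDeriv n (fun z => g (a * z)) = fun z => a ^ n * iteratedDeriv n g (a * z) := by
  induction n with
  | zero => simp
  | succ n ih =>
    rw [iteratedDeriv_succ, ih]
    ext z
    rw [deriv_const_mul_field, deriv_comp_mul_left a (iteratedDeriv n g) z, iteratedDeriv_succ,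
      smul_eq_mul]
    ring

/-- The polynomial with a given finite list of coefficients. -/
noncomputable def polyOf {N : ℕ} (p : Fin N → ℂ) : ℂ[X] := ∑ i, C (p i) * X ^ (i : ℕ)

lemma polyOf_eval {N : ℕ} (p : Fin N → ℂ) (x : ℂ) :
    (polyOf p).eval x = ∑ i, p i * x ^ (i : ℕ) := by
  simp [polyOf, eval_finsetSum]

lemma polyOf_coeff {N : ℕ} (p : Fin N → ℂ) (i : Fin N) : (polyOf p).coeff i = p i := by
  simp [polyOf, finsetSum_coeff, coeff_C_mul, coeff_X_pow, Fin.val_inj]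

lemma polyOf_zero {N : ℕ} {p : Fin N → ℂ} (h : polyOf p = 0) : p = 0 := by
  ext i
  rw [← polyOf_coeff p i, h]
  simp

section
variable (L : PeriodPair)

lemma poly_f {P : ℂ[X]} (h : ∀ᶠ z in 𝓝 0, P.eval (L.weierstrassP (z + uu L)) = 0) : P = 0 := by
  by_contra hP
  have hA := an_shift (z := 0) (u := uu L)
    (L.analyticOnNhd_weierstrassP _ (by simpa using uu_notMem L))
  have h1 : ∀ a ∈ P.roots.toFinset, ∀ᶠ z in 𝓝[≠] (0 : ℂ), L.weierstrassP (z + uu L) - a ≠ 0 := by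
    intro a _
    have hA' : AnalyticAt ℂ (fun z => L.weierstrassP (z + uu L) - a) 0 := by fun_prop
    rcases hA'.eventually_eq_zero_or_eventually_ne_zero with h2 | h2
    · exfalso
      refine P_not_const L (uu L) (uu_notMem L) a ?_
      have : Tendsto (fun z : ℂ => z - uu L) (𝓝 (uu L)) (𝓝 0) := by
        have : ContinuousAt (fun z : ℂ => z - uu L) (uu L) := by fun_prop
        simpa [ContinuousAt] using this
      filter_upwards [this.eventually h2] with z hz
      simpa [sub_eq_zero] using hz
    · exact h2
  obtain ⟨z, hz, hz'⟩ := (((Finset.eventually_all _).mpr h1).and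
    (h.filter_mono nhdsWithin_le_nhds)).exists
  exact hz _ (by simp [hP, hz']) (sub_self _)

lemma poly_fd {A B : ℂ[X]} (h : ∀ᶠ z in 𝓝 0, A.eval (L.weierstrassP (z + uu L)) +
    B.eval (L.weierstrassP (z + uu L)) * L.derivWeierstrassP (z + uu L) = 0) :
    A = 0 ∧ B = 0 := by
  set Q : ℂ[X] := C 4 * X ^ 3 + C 0 * X ^ 2 + C (-L.g₂) * X + C (-L.g₃) with hQ
  have hdeg : Q.natDegree = 3 := natDegree_cubic (by norm_num)
  have h1 : A ^ 2 - B ^ 2 * Q = 0 := by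
    refine poly_f L ?_
    filter_upwards [h, near_zero L] with z hz hz'
    have := L.derivWeierstrassP_sq _ hz'
    simp only [hQ, eval_sub, eval_pow, eval_mul, eval_add, eval_C, eval_X]
    linear_combination (A.eval (L.weierstrassP (z + uu L)) -
      B.eval (L.weierstrassP (z + uu L)) * L.derivWeierstrassP (z + uu L)) * hz +
      B.eval (L.weierstrassP (z + uu L)) ^ 2 * this
  have h2 : A ^ 2 = B ^ 2 * Q := sub_eq_zero.mp h1
  have hQ0 : Q ≠ 0 := by
    intro h
    rw [h] at hdeg
    simp at hdeg
  by_cases hB : B = 0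
  · subst hB
    refine ⟨?_, rfl⟩
    simpa using h2
  · exfalso
    have := congrArg natDegree h2
    rw [natDegree_mul (pow_ne_zero _ hB) hQ0, natDegree_pow, natDegree_pow, hdeg] at this
    omega

/-- Only countably many points are removed, so that the domain common to `℘(z + u)` and `ζ(α z + u)` is
connected. -/
lemma bad_conn {α : ℂ} (hα : α ≠ 0) :
    IsPreconnected {p : ℂ | ¬ (α * p + uu L ∈ L.lattice ∨ p + uu L ∈ L.lattice)} := by
  have h1 : ∀ a : ℂ, a ≠ 0 → {p : ℂ | a * p + uu L ∈ L.lattice}.Countable := by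
    intro a ha
    exact (lattice_countable L).preimage (f := fun p => a * p + uu L)
      (fun x y h => mul_left_cancel₀ ha (add_right_cancel h))
  have h2 := (h1 α hα).union (h1 1 one_ne_zero)
  have := h2.isConnected_compl_of_one_lt_rank (by rw [Complex.rank_real_complex]; norm_num)
  convert! this.isPreconnected using 1
  ext p
  simp

end

end Chud

/-! ### Rationality of the constant `κ` -/

namespace Chud
open Finset Filter Topology Polynomial IntermediateField

/-- The functions of `famE` rearranged so that all Taylor coefficients at `0` lie in the field
generated by `α`, `β`, `℘(u)` and `g₂`. -/
noncomputable def famK (L : PeriodPair) (α β : ℂ) (N : ℕ) : Fin 4 × Fin N → ℂ → ℂ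
  | (0, i) => (ellL L).mon 0 i 0 0
  | (1, i) => (ellL L).mon 0 i 1 0
  | (2, i) => fun z => (ellL L).mon 0 i 0 0 z * ((ellL L).g (α * z) - β * (ellL L).g z)
  | (3, i) => (ellL L).mon 1 i 0 0

lemma ellL_f (L : PeriodPair) (z : ℂ) : (ellL L).f z = L.weierstrassP (z + uu L) := rfl
lemma ellL_g (L : PeriodPair) (z : ℂ) : (ellL L).g z = zetaL L (z + uu L) - zetaL L (uu L) := rfl
lemma ellL_d (L : PeriodPair) (z : ℂ) :
    deriv (ellL L).f z = L.derivWeierstrassP (z + uu L) := by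
  have : (ellL L).f = fun z => L.weierstrassP (z + uu L) := rfl
  rw [this, deriv_comp_add_const, L.deriv_weierstrassP]

lemma g_scale_analytic (E : Ell) (α : ℂ) : AnalyticAt ℂ (fun z => E.g (α * z)) 0 :=
  AnalyticAt.fun_comp (g := E.g) (f := fun z => α * z)
    (by simpa using E.g_an 0 E.zero_not_pole) (by fun_prop)

lemma famK_analytic (L : PeriodPair) (α β : ℂ) (N : ℕ) (j) : AnalyticAt ℂ (famK L α β N j) 0 := by
  have h1 := (ellL L).mon_analytic
  have h2 := g_scale_analytic (ellL L) α
  have h3 := (ellL L).g_an 0 (ellL L).zero_not_pole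
  obtain ⟨j, i⟩ := j
  fin_cases j <;> simp only [famK]
  · exact h1 _ _ _ _
  · exact h1 _ _ _ _
  · exact (h1 _ _ _ _).mul (h2.sub (analyticAt_const.mul h3))
  · exact h1 _ _ _ _

/-- The Taylor coefficients at `0` of the functions of `famK` lie in `K`. -/
lemma famK_mem (L : PeriodPair) (K : IntermediateField ℚ ℂ) {α β : ℂ} (hα : α ∈ K) (hβ : β ∈ K)
    (he : L.weierstrassP (uu L) ∈ K) (hc : L.g₂ / 2 ∈ K) (N : ℕ) (j) (n : ℕ) :
    iteratedDeriv n (famK L α β N j) 0 ∈ K := by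
  have hpsi : ∀ t a j j' b, iteratedDeriv t ((ellL L).mon a j j' b) 0 ∈ K := by
    intro t a j j' b
    rw [Ell.iteratedDeriv_mon]
    exact psi_mem K he hc _ _ _ _ _
  have h1 := (ellL L).mon_analytic
  have h2 := g_scale_analytic (ellL L) α
  have h3 := (ellL L).g_an 0 (ellL L).zero_not_pole
  have hg : ∀ t, iteratedDeriv t (ellL L).g 0 ∈ K := by
    intro t
    have := hpsi t 0 0 0 1
    have e : (ellL L).mon 0 0 0 1 = (ellL L).g := by
      ext z
      simp [Ell.mon]
    rwa [e] at this
  obtain ⟨j, i⟩ := j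
  fin_cases j <;> simp only [famK]
  · exact hpsi _ _ _ _ _
  · exact hpsi _ _ _ _ _
  · rw [iteratedDeriv_fun_mul (h1 _ _ _ _).contDiffAt
      (show AnalyticAt ℂ (fun z => (ellL L).g (α * z) - β * (ellL L).g z) 0 from
        h2.sub (analyticAt_const.mul h3)).contDiffAt]
    refine sum_mem fun k _ => mul_mem (mul_mem (_root_.natCast_mem K _) (hpsi _ _ _ _ _)) ?_
    rw [iteratedDeriv_fun_sub h2.contDiffAt
      (show AnalyticAt ℂ (fun z => β * (ellL L).g z) 0 from analyticAt_const.mul h3).contDiffAt,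
      iteratedDeriv_const_mul_field, iteratedDeriv_scale]
    simp only [mul_zero]
    exact sub_mem (mul_mem (pow_mem hα _) (hg _)) (mul_mem hβ (hg _))
  · exact hpsi _ _ _ _ _

/-- The constant `κ` in the relation between the quasi-periods of a curve with complex
multiplication is algebraic over the field of definition. -/
theorem cm_kappa (L : PeriodPair) (K : IntermediateField ℚ ℂ) {α β κ : ℂ} {k : ℕ} (hα : α ≠ 0)
    (hk : 0 < k) (hαL : ∀ l ∈ L.lattice, α * l ∈ L.lattice)
    (hM : ∀ p, α * p + uu L ∈ L.lattice → 2 * (k : ℂ) * p ∈ L.lattice)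
    (hG : ∀ l ∈ L.lattice, zetaL L (α * l) = β * zetaL L l + κ * l)
    (hαK : α ∈ K) (hβ : β ∈ K) (he : L.weierstrassP (uu L) ∈ K) (hc : L.g₂ / 2 ∈ K) : κ ∈ K := by
  obtain ⟨N, c, hc0, hrel⟩ := cm_relation L hα hk hαL hM hG
  simp only [Fintype.sum_prod_type, Fin.sum_univ_three, famE] at hrel
  have hq : ∃ i, c (2, i) ≠ 0 := by
    by_contra! hq
    apply hc0
    have := poly_fd L (A := polyOf fun i => c (0, i)) (B := polyOf fun i => c (1, i)) (by
      filter_upwards [hrel] with z hz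
      simp only [hq, zero_mul, sum_const_zero, add_zero] at hz
      rw [polyOf_eval, polyOf_eval, ← hz, sum_mul]
      simp only [mul_assoc])
    have h0 := polyOf_zero this.1
    have h1 := polyOf_zero this.2
    ext ⟨j, i⟩
    fin_cases j
    · exact congrFun h0 i
    · exact congrFun h1 i
    · exact hq i
  obtain ⟨i₀, hi₀⟩ := hq
  obtain ⟨φ, hφ⟩ : ∃ φ : ℂ →ₗ[K] K, φ (c (2, i₀)) ≠ 0 := by
    by_contra! h
    exact hi₀ ((Module.forall_dual_apply_eq_zero_iff K _).mp h)
  let c' : Fin 4 × Fin N → ℂ := fun j => ![c (0, j.2), c (1, j.2), c (2, j.2), -κ * c (2, j.2)] j.1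
  have hrel' : ∀ᶠ z in 𝓝 0, ∑ j, c' j * famK L α β N j z = 0 := by
    filter_upwards [hrel] with z hz
    simp only [Fintype.sum_prod_type, Fin.sum_univ_four, famK, c', Ell.mon, ellL_f, ellL_g, ellL_d,
      Matrix.cons_val]
    rw [← hz, ← sum_add_distrib, ← sum_add_distrib, ← sum_add_distrib, ← sum_add_distrib,
      ← sum_add_distrib]
    refine sum_congr rfl fun i _ => ?_
    unfold cmG
    ring
  have hφrel := apply_form K _ (famK_analytic L α β N) (famK_mem L K hαK hβ he hc N) c' hrel' φ
  simp only [Fintype.sum_prod_type, Fin.sum_univ_four, famK, c', Ell.mon, ellL_f, ellL_g, ellL_d,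
      Matrix.cons_val] at hφrel
  -- the relation, rewritten as an elliptic function plus `z` times an elliptic function
  set U : Set ℂ := {p : ℂ | ¬ (α * p + uu L ∈ L.lattice ∨ p + uu L ∈ L.lattice)} with hU
  let S : Fin N → ℂ := fun i => κ * φ (c (2, i)) + φ (-κ * c (2, i))
  let P : ℂ → ℂ := fun z => ∑ i, (φ (c (0, i)) * L.weierstrassP (z + uu L) ^ (i : ℕ) +
    φ (c (1, i)) * (L.weierstrassP (z + uu L) ^ (i : ℕ) * L.derivWeierstrassP (z + uu L)) +
    φ (c (2, i)) * (L.weierstrassP (z + uu L) ^ (i : ℕ) * cmG L α β κ z))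
  let H : ℂ → ℂ := fun z => P z + z * ∑ i, S i * L.weierstrassP (z + uu L) ^ (i : ℕ)
  have hH0 : ∀ᶠ z in 𝓝 0, H z = 0 := by
    filter_upwards [hφrel] with z hz
    simp only [H, P, S]
    rw [← hz, mul_sum, ← sum_add_distrib, ← sum_add_distrib, ← sum_add_distrib, ← sum_add_distrib]
    refine sum_congr rfl fun i _ => ?_
    unfold cmG
    ring
  have hHan : AnalyticOnNhd ℂ H U := by
    intro p hp
    rw [hU, Set.mem_ofPred_eq] at hp
    push Not at hp
    have e1 := an_shift (L.analyticOnNhd_weierstrassP _ hp.2)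
    have e2 := an_shift (L.analyticOnNhd_derivWeierstrassP _ hp.2)
    have e3 := cmG_analytic L (β := β) (κ := κ) hp.1 hp.2
    simp only [H, P]
    fun_prop
  have hUmem : (0 : ℂ) ∈ U := by
    simp [hU, uu_notMem L]
  have hHU : Set.EqOn H (fun _ => 0) U :=
    hHan.eqOn_of_preconnected_of_eventuallyEq (fun p _ => analyticAt_const) (bad_conn L hα)
      hUmem hH0
  have hω : L.ω₁ ∈ L.lattice := L.ω₁_mem_lattice
  have hω0 : L.ω₁ ≠ 0 := by
    intro h
    have := pair_indep L 1 0 (by simp [h])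
    simp at this
  have hUper : ∀ z ∈ U, z + L.ω₁ ∈ U := by
    intro z hz
    rw [hU, Set.mem_ofPred_eq] at hz ⊢
    push Not at hz ⊢
    refine ⟨fun h => hz.1 ?_, fun h => hz.2 ?_⟩
    · convert L.lattice.sub_mem h (hαL _ hω) using 1
      ring
    · convert L.lattice.sub_mem h hω using 1
      ring
  have hSz : ∀ z ∈ U, ∑ i, S i * L.weierstrassP (z + uu L) ^ (i : ℕ) = 0 := by
    intro z hz
    have h1 : H z = 0 := hHU hz
    have h2 : H (z + L.ω₁) = 0 := hHU (hUper z hz)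
    simp only [H, P, f_periodic L hω, d_periodic L hω, cmG_periodic L hαL hG hω] at h1 h2
    apply mul_left_cancel₀ hω0
    linear_combination h2 - h1
  have hUev : ∀ᶠ z in 𝓝 (0 : ℂ), z ∈ U := by
    have e1 := near_zero L
    have e2 : Tendsto (fun z => α * z) (𝓝 0) (𝓝 0) := by
      have : ContinuousAt (fun z => α * z) 0 := by fun_prop
      simpa [ContinuousAt] using this
    filter_upwards [e1, e2.eventually e1] with z h1 h2
    rw [hU, Set.mem_ofPred_eq]
    push Not
    exact ⟨h2, h1⟩
  have hS : polyOf S = 0 := poly_f L (by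
    filter_upwards [hUev] with z hz
    rw [polyOf_eval]
    exact hSz z hz)
  have hfin : κ * φ (c (2, i₀)) + φ (-κ * c (2, i₀)) = 0 := congrFun (polyOf_zero hS) i₀
  have hφ' : (φ (c (2, i₀)) : ℂ) ≠ 0 := by simpa using hφ
  have : κ = -(φ (-κ * c (2, i₀)) : ℂ) / φ (c (2, i₀)) := by
    rw [eq_div_iff hφ']
    linear_combination hfin
  rw [this]
  exact div_mem (neg_mem (SetLike.coe_mem _)) (SetLike.coe_mem _)

end Chud

/-! ### Relations between periods and quasi-periods under complex multiplication -/

namespace Chud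
open Finset Filter Topology Polynomial IntermediateField

/-- `℘(u)` is a root of `4 x³ - g₂ x - g₃`, as `℘'` vanishes at the half-period `u`. -/
lemma wp_uu_algebraic (L : PeriodPair) (h2 : IsAlgebraic ℚ L.g₂) (h3 : IsAlgebraic ℚ L.g₃) :
    IsAlgebraic ℚ (L.weierstrassP (uu L)) := by
  set K := algebraicClosure ℚ ℂ
  let a : K := ⟨L.g₂, mem_algebraicClosure_iff.mpr h2⟩
  let b : K := ⟨L.g₃, mem_algebraicClosure_iff.mpr h3⟩
  have hK : IsAlgebraic K (L.weierstrassP (uu L)) := by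
    refine ⟨C 4 * X ^ 3 + C 0 * X ^ 2 + C (-a) * X + C (-b), ?_, ?_⟩
    · intro h
      have := natDegree_cubic (a := (4 : K)) (b := 0) (c := -a) (d := -b) (by norm_num)
      rw [h] at this
      simp at this
    · have := P_uu L
      simp only [map_add, map_mul, aeval_C, map_pow, aeval_X, map_neg, map_zero]
      change (algebraMap K ℂ 4) * _ + _ + -L.g₂ * _ + -L.g₃ = 0
      rw [map_ofNat]
      linear_combination this
  have : Algebra.IsAlgebraic ℚ K := algebraicClosure.isAlgebraic ℚ ℂ
  exact hK.restrictScalars ℚ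

/-- For a lattice with complex multiplication, `ω₁`, `η₁` and algebraic numbers generate all
the periods and quasi-periods. -/
theorem cm_periods {ω₁ ω₂ : ℂ} (hτ : 0 < (ω₂ / ω₁).im)
    (hg₂ : IsAlgebraic ℚ (weierstrassG2 ω₁ ω₂)) (hg₃ : IsAlgebraic ℚ (weierstrassG3 ω₁ ω₂))
    (hCM : ∃ a b c : ℤ, a ≠ 0 ∧
      (a : ℂ) * (ω₂ / ω₁) ^ 2 + (b : ℂ) * (ω₂ / ω₁) + (c : ℂ) = 0) :
    IsAlgebraic ℚ (ω₂ / ω₁) ∧ ∃ a β κ : ℂ, a ≠ 0 ∧ IsAlgebraic ℚ a ∧ IsAlgebraic ℚ β ∧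
      IsAlgebraic ℚ κ ∧
      a * quasiPeriod ω₁ ω₂ ω₂ = β * quasiPeriod ω₁ ω₂ ω₁ + κ * ω₁ := by
  obtain ⟨a, b, c, ha, hq⟩ := hCM
  let L : PeriodPair := ⟨ω₁, ω₂, indep_of_im hτ⟩
  have hL1 : L.ω₁ = ω₁ := rfl
  have hL2 : L.ω₂ = ω₂ := rfl
  set τ := ω₂ / ω₁ with hτd
  have h1 : ω₁ ≠ 0 := by
    rintro rfl
    simp [hτd] at hτ
  have h2 : ω₂ = τ * ω₁ := by rw [hτd]; field_simp
  have haC : (a : ℂ) ≠ 0 := by exact_mod_cast ha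
  have hτ0 : τ ≠ 0 := by
    intro h
    rw [h] at hτ
    simp at hτ
  have hc : c ≠ 0 := by
    rintro rfl
    have h3 : τ * (a * τ + b) = 0 := by linear_combination hq + (by simp : ((0 : ℤ) : ℂ) = 0)
    have h4 := congrArg Complex.im ((mul_eq_zero.mp h3).resolve_left hτ0)
    simp at h4
    rcases h4 with h4 | h4
    · exact ha h4
    · exact hτ.ne' h4
  have hτa : IsAlgebraic ℚ τ := by
    refine ⟨C (a : ℚ) * X ^ 2 + C (b : ℚ) * X + C (c : ℚ), ?_, ?_⟩
    · intro h
      have := natDegree_quadratic (a := (a : ℚ)) (b := b) (c := c) (by exact_mod_cast ha)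
      rw [h] at this
      simp at this
    · simpa using hq
  have int_alg : ∀ n : ℤ, IsAlgebraic ℚ (n : ℂ) := fun n => by
    simpa using isAlgebraic_algebraMap (R := ℚ) (A := ℂ) (n : ℚ)
  refine ⟨hτa, ?_⟩
  set α : ℂ := a * τ with hα
  set β : ℂ := -b - α with hβ
  have hαa : IsAlgebraic ℚ α := (int_alg a).mul hτa
  have hβa : IsAlgebraic ℚ β := (int_alg b).neg.sub hαa
  have hβα : β * α = a * c := by
    rw [hβ, hα]
    linear_combination -(a : ℂ) * hq
  set η₁ := zetaL L ω₁ with hη₁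
  set η₂ := zetaL L ω₂ with hη₂
  set κ : ℂ := (a * η₂ - β * η₁) / ω₁ with hκ
  have hκ1 : κ * ω₁ = a * η₂ - β * η₁ := by rw [hκ]; field_simp
  have e1 : ∀ m n : ℤ, α * (m * ω₁ + n * ω₂) =
      ((-n * c : ℤ) : ℂ) * ω₁ + ((m * a - n * b : ℤ) : ℂ) * ω₂ := by
    intro m n
    push_cast
    rw [h2, hα]
    linear_combination n * ω₁ * hq
  have e2 : ∀ m n : ℤ, β * (m * ω₁ + n * ω₂) =
      ((-m * b + n * c : ℤ) : ℂ) * ω₁ + ((-m * a : ℤ) : ℂ) * ω₂ := by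
    intro m n
    push_cast
    rw [h2, hβ, hα]
    linear_combination -n * ω₁ * hq
  have hαL : ∀ l ∈ L.lattice, α * l ∈ L.lattice := by
    intro l hl
    rw [PeriodPair.mem_lattice] at hl ⊢
    obtain ⟨m, n, rfl⟩ := hl
    exact ⟨_, _, (e1 m n).symm⟩
  have hβL : ∀ l ∈ L.lattice, β * l ∈ L.lattice := by
    intro l hl
    rw [PeriodPair.mem_lattice] at hl ⊢
    obtain ⟨m, n, rfl⟩ := hl
    exact ⟨_, _, (e2 m n).symm⟩
  have hκK := cm_kappa L (algebraicClosure ℚ ℂ) (α := α) (β := β) (κ := κ)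
    (k := (a * c).natAbs) (mul_ne_zero haC hτ0) (Int.natAbs_pos.mpr (mul_ne_zero ha hc)) hαL
    (by
      intro p hp
      have h3 : 2 * α * p ∈ L.lattice := by
        convert L.lattice.sub_mem (lat_int L 2 hp) (two_uu L) using 1
        push_cast
        ring
      have h4 : 2 * ((a * c : ℤ) : ℂ) * p ∈ L.lattice := by
        convert hβL _ h3 using 1
        push_cast
        linear_combination -2 * p * hβα
      rcases Int.natAbs_eq (a * c) with h5 | h5
      · rw [h5] at h4
        simpa using h4
      · rw [h5] at h4
        convert L.lattice.neg_mem h4 using 1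
        simp only [Int.cast_neg, Int.cast_natCast]
        ring)
    (by
      intro l hl
      rw [PeriodPair.mem_lattice] at hl
      obtain ⟨m, n, rfl⟩ := hl
      have e3 := zetaL_coe L m n
      have e4 := zetaL_coe L (-n * c) (m * a - n * b)
      rw [hL1, hL2] at e3 e4 ⊢
      rw [e1, e4, e3, ← hη₁, ← hη₂]
      push_cast
      have h5 : κ * ω₂ = α * η₂ - c * η₁ := by
        have h6 : β * τ = c := by
          apply mul_left_cancel₀ haC
          linear_combination hβα
        rw [h2]
        linear_combination τ * hκ1 - η₁ * h6
      linear_combination -m * hκ1 - n * h5)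
    (mem_algebraicClosure_iff.mpr hαa) (mem_algebraicClosure_iff.mpr hβa)
    (mem_algebraicClosure_iff.mpr (wp_uu_algebraic L (by rw [← G2_eq]; exact hg₂)
      (by rw [← G3_eq]; exact hg₃)))
    (div_mem (mem_algebraicClosure_iff.mpr (by rw [← G2_eq]; exact hg₂))
      (by exact_mod_cast _root_.natCast_mem (algebraicClosure ℚ ℂ) 2))
  refine ⟨a, β, κ, haC, int_alg a, hβa, mem_algebraicClosure_iff.mp hκK, ?_⟩
  have q1 : quasiPeriod ω₁ ω₂ ω₁ = η₁ := qp_eq₁ L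
  have q2 : quasiPeriod ω₁ ω₂ ω₂ = η₂ := qp_eq₂ L
  rw [q1, q2, hκ1]
  ring

end Chud

/-! ### Transcendence degree -/

namespace Chud
open Finset Filter Topology Polynomial IntermediateField

/-- Closure in the algebraic-independence matroid of `ℂ` over `ℚ` is relative algebraic closure. -/
lemma mem_closure_iff_alg {s : Set ℂ} {x : ℂ} :
    x ∈ (AlgebraicIndependent.matroid ℚ ℂ).closure s ↔ IsAlgebraic (IntermediateField.adjoin ℚ s) x := by
  rw [AlgebraicIndependent.matroid_closure_eq, SetLike.mem_coe, Subalgebra.mem_algebraicClosure]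
  exact isAlgebraic_adjoin_iff.symm

/-- A field generated by numbers algebraic over `ℚ(t)` consists of numbers algebraic over `ℚ(t)`. -/
lemma adjoin_subset_closure {s t : Set ℂ}
    (h : s ⊆ (AlgebraicIndependent.matroid ℚ ℂ).closure t) :
    (IntermediateField.adjoin ℚ s : Set ℂ) ⊆ (AlgebraicIndependent.matroid ℚ ℂ).closure t := by
  intro x hx
  rw [mem_closure_iff_alg]
  have : IntermediateField.adjoin ℚ s ≤
      (algebraicClosure (IntermediateField.adjoin ℚ t) ℂ).restrictScalars ℚ := by
    rw [adjoin_le_iff]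
    intro y hy
    exact (mem_algebraicClosure_iff).2 (mem_closure_iff_alg.1 (h hy))
  exact (mem_algebraicClosure_iff).1 (this hx)

/-- No three elements of a field generated by numbers algebraic over `ℚ(x, y)` are algebraically
independent. -/
lemma no_triple {s : Set ℂ} {x y : ℂ}
    (h : s ⊆ (AlgebraicIndependent.matroid ℚ ℂ).closure {x, y}) :
    ¬ ∃ a b c : IntermediateField.adjoin ℚ s, AlgebraicIndependent ℚ ![a, b, c] := by
  rintro ⟨a, b, c, hi⟩
  have hi' := hi.map' (f := (IntermediateField.adjoin ℚ s).val) Subtype.val_injective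
  have hI : (AlgebraicIndependent.matroid ℚ ℂ).Indep
      (Set.range ((IntermediateField.adjoin ℚ s).val ∘ ![a, b, c])) := hi'.to_subtype_range
  have hsub : Set.range ((IntermediateField.adjoin ℚ s).val ∘ ![a, b, c]) ⊆
      (AlgebraicIndependent.matroid ℚ ℂ).closure {x, y} := by
    rintro _ ⟨i, rfl⟩
    exact adjoin_subset_closure h (![a, b, c] i).2
  have h1 := hI.encard_le_eRk_of_subset hsub
  rw [Matroid.eRk_closure_eq] at h1
  have h2 := h1.trans ((Matroid.eRk_le_encard _ _).trans (Set.encard_insert_le _ _))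
  rw [Set.encard_singleton, ← Set.image_univ,
    Function.Injective.encard_image (f := (IntermediateField.adjoin ℚ s).val ∘ ![a, b, c])
      hi'.injective, Set.encard_univ] at h2
  simp only [ENat.card_eq_coe_fintype_card, Fintype.card_fin] at h2
  norm_cast at h2

lemma exists_transcendental : ∃ θ : ℂ, Transcendental ℚ θ := by
  have h := (transcendental_liouvilleNumber (m := 2) le_rfl)
  have h2 : Transcendental ℤ ((liouvilleNumber (2:ℕ) : ℝ) : ℂ) := by
    intro hc
    exact h ((isAlgebraic_algebraMap_iff (R := ℤ) (A := ℂ)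
      (algebraMap ℝ ℂ).injective).1 hc)
  exact ⟨_, fun hc => h2 ((IsFractionRing.isAlgebraic_iff ℤ ℚ ℂ).2 hc)⟩

/-- If a field generated by `s` contains no two algebraically independent numbers, then all of `s`
is algebraic over `ℚ(θ)` for some transcendental `θ`. -/
lemma exists_theta {s : Set ℂ}
    (h : ¬ ∃ a b : IntermediateField.adjoin ℚ s, AlgebraicIndependent ℚ ![a, b]) :
    ∃ θ : ℂ, Transcendental ℚ θ ∧ ∀ x ∈ s, IsAlgebraic ℚ⟮θ⟯ x := by
  obtain ⟨I, hI⟩ := (AlgebraicIndependent.matroid ℚ ℂ).exists_isBasis s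
  have hsub : ∀ x ∈ I, ∀ y ∈ I, x = y := by
    intro x hx y hy
    by_contra hne
    refine h ⟨⟨x, subset_adjoin ℚ s (hI.subset hx)⟩, ⟨y, subset_adjoin ℚ s (hI.subset hy)⟩, ?_⟩
    have hind : AlgebraicIndependent ℚ (Subtype.val : I → ℂ) := hI.indep
    have hf : Function.Injective (![⟨x, hx⟩, ⟨y, hy⟩] : Fin 2 → I) := by
      intro i j hij
      fin_cases i <;> fin_cases j <;> simp_all
    have h2 := hind.comp _ hf
    refine ((IntermediateField.adjoin ℚ s).val.algebraicIndependent_iff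
      Subtype.val_injective).1 ?_
    convert h2 using 1
    ext i
    fin_cases i <;> rfl
  have key : ∃ θ : ℂ, Transcendental ℚ θ ∧ I ⊆ {θ} := by
    rcases I.eq_empty_or_nonempty with h0 | ⟨θ, hθ⟩
    · obtain ⟨θ, hθ⟩ := exists_transcendental
      exact ⟨θ, hθ, by simp [h0]⟩
    · have hind : AlgebraicIndependent ℚ (Subtype.val : I → ℂ) := hI.indep
      exact ⟨θ, hind.transcendental ⟨θ, hθ⟩, fun x hx => hsub x hx θ hθ⟩
  obtain ⟨θ, hθ, hIθ⟩ := key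
  refine ⟨θ, hθ, fun x hx => mem_closure_iff_alg.1 ?_⟩
  exact Matroid.closure_subset_closure _ hIθ (hI.subset_closure hx)

/-- The transcendence degree of the field generated by the periods, quasi-periods and `2πi`
is at least two. -/
lemma exists_pair {ω₁ ω₂ : ℂ} (hτ : 0 < (ω₂ / ω₁).im)
    (hg₂ : IsAlgebraic ℚ (weierstrassG2 ω₁ ω₂)) (hg₃ : IsAlgebraic ℚ (weierstrassG3 ω₁ ω₂)) :
    ∃ a b : (IntermediateField.adjoin ℚ
        ({ω₁, ω₂, quasiPeriod ω₁ ω₂ ω₁, quasiPeriod ω₁ ω₂ ω₂,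
          2 * Real.pi * Complex.I} : Set ℂ)),
      AlgebraicIndependent ℚ ![a, b] := by
  by_contra hc
  obtain ⟨θ, hθ, hs⟩ := exists_theta hc
  refine lower_bound hτ hg₂ hg₃ (θ := θ) (fun Q hQ h0 => ?_) (hs _ (by simp)) (hs _ (by simp))
    (hs _ (by simp)) (hs _ (by simp))
  exact hθ ((IsFractionRing.isAlgebraic_iff ℤ ℚ ℂ).1 ⟨Q, hQ, h0⟩)

/-- Under complex multiplication, all the periods, quasi-periods and `2πi` are algebraic over
`ℚ(ω₁, η₁)`, by the linear relation between `η₂`, `η₁`, `ω₁` and the Legendre relation. -/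
lemma subset_closure_pair {ω₁ ω₂ : ℂ} (hτ : 0 < (ω₂ / ω₁).im)
    (hg₂ : IsAlgebraic ℚ (weierstrassG2 ω₁ ω₂)) (hg₃ : IsAlgebraic ℚ (weierstrassG3 ω₁ ω₂))
    (hCM : ∃ a b c : ℤ, a ≠ 0 ∧
      (a : ℂ) * (ω₂ / ω₁) ^ 2 + (b : ℂ) * (ω₂ / ω₁) + (c : ℂ) = 0) :
    ({ω₁, ω₂, quasiPeriod ω₁ ω₂ ω₁, quasiPeriod ω₁ ω₂ ω₂, 2 * Real.pi * Complex.I} : Set ℂ) ⊆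
      (AlgebraicIndependent.matroid ℚ ℂ).closure {ω₁, quasiPeriod ω₁ ω₂ ω₁} := by
  obtain ⟨hta, a, β, κ, ha0, ha, hβ, hκ, hrel⟩ := cm_periods hτ hg₂ hg₃ hCM
  have hω₁ : ω₁ ≠ 0 := by
    rintro rfl
    simp at hτ
  let L : PeriodPair := ⟨ω₁, ω₂, indep_of_im hτ⟩
  have hleg := legendre L
  have e1 : quasiPeriod ω₁ ω₂ ω₁ = zetaL L ω₁ := qp_eq₁ L
  have e2 : quasiPeriod ω₁ ω₂ ω₂ = zetaL L ω₂ := qp_eq₂ L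
  change ω₁ * zetaL L ω₂ - ω₂ * zetaL L ω₁ = _ ∨ ω₁ * zetaL L ω₂ - ω₂ * zetaL L ω₁ = _ at hleg
  rw [← e1, ← e2] at hleg
  set η₁ := quasiPeriod ω₁ ω₂ ω₁
  set η₂ := quasiPeriod ω₁ ω₂ ω₂
  set K := IntermediateField.adjoin ℚ ({ω₁, η₁} : Set ℂ)
  have up : ∀ {x : ℂ}, IsAlgebraic ℚ x → IsAlgebraic K x := fun h => h.tower_top K
  have m1 : IsAlgebraic K ω₁ :=
    isAlgebraic_algebraMap (⟨ω₁, subset_adjoin ℚ _ (by simp)⟩ : K)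
  have m3 : IsAlgebraic K η₁ :=
    isAlgebraic_algebraMap (⟨η₁, subset_adjoin ℚ _ (by simp)⟩ : K)
  have m2 : IsAlgebraic K ω₂ := by
    have := (up hta).mul m1
    rwa [div_mul_cancel₀ _ hω₁] at this
  have m4 : IsAlgebraic K η₂ := by
    have h : η₂ = (β * η₁ + κ * ω₁) * a⁻¹ := by
      rw [← hrel]
      field_simp
    rw [h]
    exact (((up hβ).mul m3).add ((up hκ).mul m1)).mul (up ha).inv
  have m5' := (m1.mul m4).sub (m2.mul m3)
  have m5 : IsAlgebraic K (2 * Real.pi * Complex.I) := by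
    rcases hleg with h | h
    · rwa [h] at m5'
    · rw [h] at m5'
      simpa using m5'.neg
  intro x hx
  rw [mem_closure_iff_alg]
  rcases hx with rfl | rfl | rfl | rfl | rfl
  exacts [m1, m2, m3, m4, m5]

end Chud

/-- **Chudnovsky's theorem**: for an elliptic curve `E : y² = 4x³ - g₂x - g₃` defined over the
algebraic numbers and admitting complex multiplication (its period ratio `τ = ω₂/ω₁` is
imaginary quadratic), the field `ℚ(ω₁, ω₂, η₁, η₂, 2πi)` generated by the entries of a period
matrix of `E` has transcendence degree exactly `2` over `ℚ`: it contains two algebraically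
independent elements, but no three elements of it are algebraically independent. -/
theorem chudnovsky_cm_period_matrix_trdeg_eq_two (ω₁ ω₂ : ℂ) (hτ : 0 < (ω₂ / ω₁).im)
    (hg₂ : IsAlgebraic ℚ (weierstrassG2 ω₁ ω₂)) (hg₃ : IsAlgebraic ℚ (weierstrassG3 ω₁ ω₂))
    (hdisc : weierstrassG2 ω₁ ω₂ ^ 3 - 27 * weierstrassG3 ω₁ ω₂ ^ 2 ≠ 0)
    (hCM : ∃ a b c : ℤ, a ≠ 0 ∧
      (a : ℂ) * (ω₂ / ω₁) ^ 2 + (b : ℂ) * (ω₂ / ω₁) + (c : ℂ) = 0) :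
    (∃ a b : (IntermediateField.adjoin ℚ
        ({ω₁, ω₂, quasiPeriod ω₁ ω₂ ω₁, quasiPeriod ω₁ ω₂ ω₂,
          2 * Real.pi * Complex.I} : Set ℂ)),
      AlgebraicIndependent ℚ ![a, b]) ∧
    ¬ (∃ a b c : (IntermediateField.adjoin ℚ
        ({ω₁, ω₂, quasiPeriod ω₁ ω₂ ω₁, quasiPeriod ω₁ ω₂ ω₂,
          2 * Real.pi * Complex.I} : Set ℂ)),
      AlgebraicIndependent ℚ ![a, b, c]) := by
  exact ⟨Chud.exists_pair hτ hg₂ hg₃, Chud.no_triple (Chud.subset_closure_pair hτ hg₂ hg₃ hCM)⟩
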